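/- arXiv:1409.8316 — 2 statements merged into one kernel-verified Lean document; each statement's English description precedes it below -/
import Mathlib

section
/- Let n be odd and let p, q ≥ 2 be relatively prime integers. Then for every choice of admissible parameters, cat(L^n_p × L^n_q) ≥ n + 1. -/
open scoped Topology

/-- The Lusternik–Schnirelmann category of a space (normalized so that contractible spaces
have category 0): the least `k` such that `X` admits an open cover by `k+1` sets, each of
which has nullhomotopic inclusion into `X` (i.e. is contractible in `X`). -/
noncomputable def lsCat (X : Type*) [TopologicalSpace X] : ℕ :=
  sInf {k : ℕ | ∃ U : Fin (k + 1) → Set X,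
    (∀ i, IsOpen (U i)) ∧ (⋃ i, U i) = Set.univ ∧
    ∀ i, ContinuousMap.Nullhomotopic
      (⟨Subtype.val, continuous_subtype_val⟩ : C(U i, X))}

/-- The orbit relation on the unit sphere of `ℂ^k` defining the lens space
`L^{2k-1}_p(ℓ₁,…,ℓ_k)`: a fixed generator of `ℤ/p` acts coordinatewise by
`z_j ↦ exp(2πiℓ_j/p) z_j`, and `m` ranges over the powers of this generator. -/
def lensRel (p k : ℕ) (ℓ : Fin k → ℤ) :
    Metric.sphere (0 : EuclideanSpace ℂ (Fin k)) 1 →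
      Metric.sphere (0 : EuclideanSpace ℂ (Fin k)) 1 → Prop :=
  fun x y => ∃ m : ℤ, ∀ j : Fin k,
    (y.1 j) = Complex.exp (2 * Real.pi * Complex.I * m * ℓ j / p) * (x.1 j)

/-- The lens space `L^{2k-1}_p(ℓ₁,…,ℓ_k)`: the orbit space of the free linear action of `ℤ/p`
on the unit sphere `S^{2k-1} ⊆ ℂ^k` determined by the parameters `ℓ`, with the quotient
topology. -/
noncomputable def LensSpace (p k : ℕ) (ℓ : Fin k → ℤ) : Type :=
  Quot (lensRel p k ℓ)

noncomputable instance (p k : ℕ) (ℓ : Fin k → ℤ) : TopologicalSpace (LensSpace p k ℓ) :=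
  inferInstanceAs (TopologicalSpace (Quot (lensRel p k ℓ)))

/- Suppose that `N + 1` open sets, each contractible in `L_p × L_q`, cover `L_p × L_q`, and pull
them back along the covering `S × S' → L_p × L_q` by a product of unit spheres. Over each of the
first `N` sets the `ℤ/p`-covering by `S` becomes trivial, so each preimage `V_i` is a disjoint union
of sheets `V_i g` permuted by `ℤ/p`. Over the last one the projection to `S'` is homotopic to a
constant `c`, through a homotopy invariant under `ℤ/p`. Damping that homotopy with a bump function
gives `F : ℝ × S × S' → S'`, invariant under `ℤ/p` in `S`, with `F (0, x, y) = y` and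
`F (1, x, y) = c` outside `⋃ V_i`.

A partition of unity subordinate to the sheets turns `F` into a `ℤ/p`-equivariant map from the join
`S * S'` to the join of `N` copies of `ℤ/p` with `S'`, which is the identity on `S'`. If `N < 2k`
there is none: pulled back to `S * S'`, the product of the top lens space class with the
orientation class of `S'` would vanish for dimension reasons, yet it is nonzero. This is made
combinatorial by a Sperner-type labelling of a fine subdivision of an explicit chain in `S * S'`,
on which the product cochain is evaluated. -/

/-- Augmented chains of ordered simplices: formal `R`-combinations of lists of vertices. A list of
length `n + 1` is an `n`-simplex, degenerate ones are allowed, and `[]` spans degree `-1`. -/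
abbrev ListChain (R V : Type*) [Ring R] : Type _ := List V →₀ R

namespace ListChain

section Basic

variable (R : Type*) [Ring R] {V W X M : Type*} [AddCommGroup M] [Module R M]

/-- The ordered simplex with the given list of vertices, as a chain. -/
noncomputable def simplex (l : List V) : ListChain R V := Finsupp.single l 1

/-- The chain map induced by a map of vertices. -/
noncomputable def map (f : V → W) : ListChain R V →ₗ[R] ListChain R W :=
  Finsupp.lmapDomain R R (List.map f)

/-- The cone operator, which prepends the apex `x` to each simplex. -/
noncomputable def cone (x : V) : ListChain R V →ₗ[R] ListChain R V :=
  Finsupp.lmapDomain R R (x :: ·)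

/-- The boundary of a simplex, with the alternating sum of the faces arranged as a recursion. -/
noncomputable def simplexBoundary : List V → ListChain R V
  | [] => 0
  | x :: l => simplex R l - cone R x (simplexBoundary l)

/-- The augmented boundary operator; the boundary of a vertex is the empty simplex. -/
noncomputable def boundary : ListChain R V →ₗ[R] ListChain R V :=
  Finsupp.linearCombination R (simplexBoundary R)

/-- The linear extension to chains of a function on simplices. -/
noncomputable def eval (f : List V → M) : ListChain R V →ₗ[R] M :=
  Finsupp.linearCombination R f

/-- The chains all of whose simplices satisfy `P`. -/
abbrev supportedOn (P : List V → Prop) : Submodule R (ListChain R V) :=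
  Finsupp.supported R R {l | P l}

variable {R}

@[simp] lemma eval_simplex (f : List V → M) (l : List V) : eval R f (simplex R l) = f l := by
  simp [eval, simplex]

@[simp] lemma map_simplex (f : V → W) (l : List V) :
    map R f (simplex R l) = simplex R (l.map f) := by
  simp [map, simplex]

@[simp] lemma cone_simplex (x : V) (l : List V) : cone R x (simplex R l) = simplex R (x :: l) := by
  simp [cone, simplex]

@[simp] lemma boundary_simplex_nil : boundary R (simplex R ([] : List V)) = 0 := by
  simp [boundary, simplex, simplexBoundary]

lemma boundary_simplex_cons (x : V) (l : List V) :
    boundary R (simplex R (x :: l)) = simplex R l - cone R x (boundary R (simplex R l)) := by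
  simp [boundary, simplex, simplexBoundary]

lemma hom_ext {f g : ListChain R V →ₗ[R] M} (h : ∀ l, f (simplex R l) = g (simplex R l)) : f = g :=
  Finsupp.lhom_ext' fun l => LinearMap.ext_ring (h l)

lemma simplex_mem {P : List V → Prop} {l : List V} (h : P l) : simplex R l ∈ supportedOn R P :=
  Finsupp.single_mem_supported R 1 h

lemma mem_supportedOn_true (c : ListChain R V) : c ∈ supportedOn R fun _ : List V => True :=
  fun _ _ => trivial

lemma supportedOn_mono {P Q : List V → Prop} (h : ∀ l, P l → Q l) :
    supportedOn R P ≤ supportedOn R Q :=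
  Finsupp.supported_mono h

lemma supportedOn_eq_span (P : List V → Prop) :
    supportedOn R P = Submodule.span R (simplex R '' {l | P l}) :=
  Finsupp.supported_eq_span_single R {l | P l}

lemma apply_mem_of_simplex {P : List V → Prop} {S : Submodule R M} {f : ListChain R V →ₗ[R] M}
    (h : ∀ l, P l → f (simplex R l) ∈ S) {c : ListChain R V} (hc : c ∈ supportedOn R P) :
    f c ∈ S := by
  rw [supportedOn_eq_span] at hc
  refine Submodule.span_le (p := S.comap f).2 ?_ hc
  rintro _ ⟨l, hl, rfl⟩
  exact h l hl

lemma eqOn_supportedOn {P : List V → Prop} {f g : ListChain R V →ₗ[R] M}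
    (h : ∀ l, P l → f (simplex R l) = g (simplex R l)) {c : ListChain R V}
    (hc : c ∈ supportedOn R P) : f c = g c := by
  rw [supportedOn_eq_span] at hc
  refine LinearMap.eqOn_span ?_ hc
  rintro _ ⟨l, hl, rfl⟩
  exact h l hl

lemma cone_mem {P Q : List V → Prop} (x : V) (h : ∀ l, P l → Q (x :: l)) {c : ListChain R V}
    (hc : c ∈ supportedOn R P) : cone R x c ∈ supportedOn R Q :=
  apply_mem_of_simplex (fun l hl => by simpa using simplex_mem (h l hl)) hc

lemma map_mem {P : List V → Prop} {Q : List W → Prop} (f : V → W) (h : ∀ l, P l → Q (l.map f))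
    {c : ListChain R V} (hc : c ∈ supportedOn R P) : map R f c ∈ supportedOn R Q :=
  apply_mem_of_simplex (fun l hl => by simpa using simplex_mem (h l hl)) hc

lemma eval_eq_zero {P : List V → Prop} {f : List V → M} (h : ∀ l, P l → f l = 0)
    {c : ListChain R V} (hc : c ∈ supportedOn R P) : eval R f c = 0 :=
  eqOn_supportedOn (g := 0) (fun l hl => by simpa using h l hl) hc

lemma eval_congr {P : List V → Prop} {f g : List V → M} (h : ∀ l, P l → f l = g l)
    {c : ListChain R V} (hc : c ∈ supportedOn R P) : eval R f c = eval R g c :=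
  eqOn_supportedOn (fun l hl => by simpa using h l hl) hc

lemma eval_cone (f : List V → M) (x : V) (c : ListChain R V) :
    eval R f (cone R x c) = eval R (fun l => f (x :: l)) c :=
  LinearMap.congr_fun (f := (eval R f).comp (cone R x)) (hom_ext fun l => by simp) c

lemma eval_map (f : List W → M) (g : V → W) (c : ListChain R V) :
    eval R f (map R g c) = eval R (fun l => f (l.map g)) c :=
  LinearMap.congr_fun (f := (eval R f).comp (map R g)) (hom_ext fun l => by simp) c

lemma map_map (f : V → W) (g : W → X) (c : ListChain R V) :
    map R g (map R f c) = map R (g ∘ f) c :=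
  LinearMap.congr_fun (f := (map R g).comp (map R f)) (hom_ext fun l => by simp) c

lemma map_cone (f : V → W) (x : V) (c : ListChain R V) :
    map R f (cone R x c) = cone R (f x) (map R f c) :=
  LinearMap.congr_fun (f := (map R f).comp (cone R x)) (g := (cone R (f x)).comp (map R f))
    (hom_ext fun l => by simp) c

lemma boundary_cone (x : V) (c : ListChain R V) :
    boundary R (cone R x c) = c - cone R x (boundary R c) :=
  LinearMap.congr_fun (f := (boundary R).comp (cone R x))
    (g := LinearMap.id - (cone R x).comp (boundary R))
    (hom_ext fun l => by simp [boundary_simplex_cons]) c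

lemma boundary_boundary (c : ListChain R V) : boundary R (boundary R c) = 0 := by
  refine LinearMap.congr_fun (f := (boundary R).comp (boundary R)) (g := 0) (hom_ext fun l => ?_) c
  induction l with
  | nil => simp
  | cons x l ih =>
    simp only [LinearMap.comp_apply, LinearMap.zero_apply] at ih
    simp [boundary_simplex_cons, boundary_cone, ih]

lemma map_boundary (f : V → W) (c : ListChain R V) :
    map R f (boundary R c) = boundary R (map R f c) := by
  refine LinearMap.congr_fun (f := (map R f).comp (boundary R)) (g := (boundary R).comp (map R f))
    (hom_ext fun l => ?_) c
  induction l with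
  | nil => simp
  | cons x l ih =>
    simp only [LinearMap.comp_apply, map_simplex] at ih
    simp [boundary_simplex_cons, map_cone, ih]

/-- `l'` is a codimension one face of `l`. -/
def IsFacet (l' l : List V) : Prop := l'.Sublist l ∧ l'.length + 1 = l.length

lemma boundary_simplex_mem (l : List V) :
    boundary R (simplex R l) ∈ supportedOn R (IsFacet · l) := by
  induction l with
  | nil => simp
  | cons x l ih =>
    rw [boundary_simplex_cons]
    refine sub_mem (simplex_mem ⟨by simp, by simp⟩) (cone_mem x ?_ ih)
    rintro l ⟨hsub, hlen⟩
    exact ⟨by simpa using hsub, by simpa using hlen⟩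

lemma facet_induction {motive : List V → Prop}
    (h : ∀ l, (∀ l', IsFacet l' l → motive l') → motive l) (l : List V) : motive l := by
  induction hn : l.length generalizing l with
  | zero => exact h l fun l' hl' => absurd hl'.2 (by omega)
  | succ n ih => exact h l fun l' hl' => ih l' (by have := hl'.2; omega)

end Basic

section BoundaryRec

variable {R : Type*} [Ring R] {V V' M M' : Type*} [AddCommGroup M] [Module R M] [AddCommGroup M']
  [Module R M']

/-- `boundaryRec` on simplices, with the length as fuel. -/
noncomputable def boundaryRecAux (R : Type*) [Ring R] [Module R M] (F : List V → M → M) :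
    ℕ → List V → M
  | 0, l => F l 0
  | n + 1, l => F l (eval R (boundaryRecAux R F n) (boundary R (simplex R l)))

/-- The linear map on chains defined by recursion over the dimension: `F l c` is the value at the
simplex `l` when `c` is the value at its boundary. -/
noncomputable def boundaryRec (R : Type*) [Ring R] [Module R M] (F : List V → M → M) :
    ListChain R V →ₗ[R] M :=
  eval R fun l => boundaryRecAux R F l.length l

lemma boundaryRec_simplex (F : List V → M → M) (l : List V) :
    boundaryRec R F (simplex R l) = F l (boundaryRec R F (boundary R (simplex R l))) := by
  rcases l with - | ⟨x, l⟩
  · simp [boundaryRec, boundaryRecAux]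
  · rw [boundaryRec, eval_simplex, List.length_cons, boundaryRecAux]
    refine congrArg _ (eval_congr ?_ (boundary_simplex_mem (x :: l)))
    rintro l' ⟨-, hlen⟩
    rw [← Nat.succ_injective hlen]

lemma boundaryRec_simplex_mem {F : List V → M → M} {P : List V → Prop} {S : List V → Submodule R M}
    (hP : ∀ l l', P l → IsFacet l' l → P l')
    (hF : ∀ l c, P l → (∀ T : Submodule R M, (∀ l', IsFacet l' l → S l' ≤ T) → c ∈ T) → F l c ∈ S l)
    {l : List V} (hl : P l) : boundaryRec R F (simplex R l) ∈ S l := by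
  induction l using facet_induction with
  | h l ih =>
    rw [boundaryRec_simplex]
    exact hF l _ hl fun T hT =>
      apply_mem_of_simplex (fun l' hl' => hT l' hl' (ih l' hl' (hP l l' hl hl')))
        (boundary_simplex_mem l)

lemma boundaryRec_map {F : List V → M → M} {F' : List V' → M' → M'} {P : List V → Prop}
    (hP : ∀ l l', P l → IsFacet l' l → P l') (f : V → V') (g : M →ₗ[R] M')
    (hF : ∀ l c, P l → F' (l.map f) (g c) = g (F l c)) {c : ListChain R V}
    (hc : c ∈ supportedOn R P) : boundaryRec R F' (map R f c) = g (boundaryRec R F c) := by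
  refine eqOn_supportedOn (f := (boundaryRec R F').comp (map R f)) (g := g.comp (boundaryRec R F))
    (fun l hl => ?_) hc
  induction l using facet_induction with
  | h l ih =>
    rw [LinearMap.comp_apply, LinearMap.comp_apply, boundaryRec_simplex, ← hF l _ hl, map_simplex,
      boundaryRec_simplex, ← map_simplex, ← map_boundary]
    exact congrArg _ (eqOn_supportedOn (f := (boundaryRec R F').comp (map R f))
      (g := g.comp (boundaryRec R F)) (fun l' hl' => ih l' hl' (hP l l' hl hl'))
      (boundary_simplex_mem l))

end BoundaryRec

section Subdivision

variable {R : Type*} [Ring R] {V V' W W' : Type*}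

/-- The cone step of `subdivision`. -/
noncomputable def subdivisionStep (R : Type*) [Ring R] (b : List V → W) :
    List V → ListChain R W → ListChain R W
  | [], _ => simplex R []
  | x :: l, c => cone R (b (x :: l)) c

/-- The subdivision chain map whose new vertex in a simplex `l` is `b l`. -/
noncomputable def subdivision (R : Type*) [Ring R] (b : List V → W) :
    ListChain R V →ₗ[R] ListChain R W :=
  boundaryRec R (subdivisionStep R b)

@[simp] lemma subdivision_simplex_nil (b : List V → W) :
    subdivision R b (simplex R []) = simplex R [] := by
  rw [subdivision, boundaryRec_simplex, subdivisionStep]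

lemma subdivision_simplex_cons (b : List V → W) (x : V) (l : List V) :
    subdivision R b (simplex R (x :: l)) =
      cone R (b (x :: l)) (subdivision R b (boundary R (simplex R (x :: l)))) := by
  rw [subdivision, boundaryRec_simplex, subdivisionStep]

lemma boundary_subdivision (b : List V → W) (c : ListChain R V) :
    boundary R (subdivision R b c) = subdivision R b (boundary R c) := by
  refine LinearMap.congr_fun (f := (boundary R).comp (subdivision R b))
    (g := (subdivision R b).comp (boundary R)) (hom_ext fun l => ?_) c
  induction l using facet_induction with
  | h l ih =>
    have hfacets := eqOn_supportedOn ih (boundary_simplex_mem l)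
    simp only [LinearMap.comp_apply, boundary_boundary, map_zero] at hfacets ⊢
    rcases l with - | ⟨x, l⟩
    · simp
    · rw [subdivision_simplex_cons, boundary_cone, hfacets, map_zero, sub_zero]

lemma subdivision_simplex_mem {b : List V → W} {P : List V → List W → Prop} (nil : P [] [])
    (cons : ∀ l l' w, l ≠ [] → IsFacet l' l → P l' w → P l (b l :: w)) (l : List V) :
    subdivision R b (simplex R l) ∈ supportedOn R (P l) := by
  refine boundaryRec_simplex_mem (P := fun _ => True) (S := fun l => supportedOn R (P l))
    (fun _ _ _ _ => trivial) (fun l c _ hc => ?_) trivial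
  rcases l with - | ⟨x, l⟩
  · exact simplex_mem nil
  · refine cone_mem (P := fun w => P (x :: l) (b (x :: l) :: w)) _ (fun _ h => h) (hc _ ?_)
    exact fun l' hl' => supportedOn_mono fun w => cons _ l' w (by simp) hl'

lemma subdivision_map {b : List V → W} {b' : List V' → W'} {f : V → V'} {g : W → W'}
    (h : ∀ l, b' (l.map f) = g (b l)) (c : ListChain R V) :
    subdivision R b' (map R f c) = map R g (subdivision R b c) := by
  refine boundaryRec_map (P := fun _ => True) (fun _ _ _ _ => trivial) f (map R g)
    (fun l c _ => ?_) (mem_supportedOn_true c)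
  rcases l with - | ⟨x, l⟩
  · simp [subdivisionStep]
  · simp [subdivisionStep, map_cone, ← h]

end Subdivision

section ConeHomotopy

variable {R : Type*} [Ring R] {V W : Type*}

/-- The cone step of `coneHomotopy`. -/
noncomputable def coneHomotopyStep (θ : ListChain R V →ₗ[R] ListChain R W) (lab : V → W) :
    List V → ListChain R W → ListChain R W
  | [], _ => 0
  | x :: l, c => cone R (lab x) (θ (simplex R (x :: l)) - simplex R ((x :: l).map lab) - c)

/-- The homotopy between the chain maps `θ` and `map R lab` obtained by coning, in each simplex,
from the label of its first vertex. -/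
noncomputable def coneHomotopy (θ : ListChain R V →ₗ[R] ListChain R W) (lab : V → W) :
    ListChain R V →ₗ[R] ListChain R W :=
  boundaryRec R (coneHomotopyStep θ lab)

variable {θ : ListChain R V →ₗ[R] ListChain R W} {lab : V → W}

@[simp] lemma coneHomotopy_simplex_nil : coneHomotopy θ lab (simplex R []) = 0 := by
  rw [coneHomotopy, boundaryRec_simplex, coneHomotopyStep]

lemma coneHomotopy_simplex_cons (x : V) (l : List V) :
    coneHomotopy θ lab (simplex R (x :: l)) = cone R (lab x) (θ (simplex R (x :: l)) -
      simplex R ((x :: l).map lab) - coneHomotopy θ lab (boundary R (simplex R (x :: l)))) := by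
  rw [coneHomotopy, boundaryRec_simplex, coneHomotopyStep]

lemma boundary_coneHomotopy (hθ : ∀ c, boundary R (θ c) = θ (boundary R c))
    (hnil : θ (simplex R []) = simplex R []) (c : ListChain R V) :
    boundary R (coneHomotopy θ lab c) + coneHomotopy θ lab (boundary R c) = θ c - map R lab c := by
  refine LinearMap.congr_fun
    (f := (boundary R).comp (coneHomotopy θ lab) + (coneHomotopy θ lab).comp (boundary R))
    (g := θ - map R lab) (hom_ext fun l => ?_) c
  induction l using facet_induction with
  | h l ih =>
    have hfacets := eqOn_supportedOn ih (boundary_simplex_mem l)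
    simp only [LinearMap.add_apply, LinearMap.comp_apply, LinearMap.sub_apply, boundary_boundary,
      map_zero, add_zero] at hfacets ⊢
    rcases l with - | ⟨x, l⟩
    · simp [hnil]
    · rw [coneHomotopy_simplex_cons, boundary_cone, ← map_simplex]
      simp only [map_sub, hfacets, hθ, map_boundary, sub_self, map_zero]
      abel

lemma coneHomotopy_simplex_mem {P : List V → Prop} {Q : List V → List W → Prop}
    (hP : ∀ l l', P l → l'.Sublist l → P l')
    (hθ : ∀ l, P l → θ (simplex R l) ∈ supportedOn R (Q l)) (hlab : ∀ l, P l → Q l (l.map lab))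
    (hmono : ∀ l l' w, P l → l'.Sublist l → Q l' w → Q l w)
    (hcone : ∀ x l w, P (x :: l) → Q (x :: l) w → Q (x :: l) (lab x :: w)) {l : List V} (hl : P l) :
    coneHomotopy θ lab (simplex R l) ∈ supportedOn R (Q l) := by
  refine boundaryRec_simplex_mem (S := fun l => supportedOn R (Q l))
    (fun l l' hl hl' => hP l l' hl hl'.1) (fun l c hl hc => ?_) hl
  rcases l with - | ⟨x, l⟩
  · exact zero_mem _
  · refine cone_mem (P := Q (x :: l)) _ (fun w => hcone x l w hl) ?_
    exact sub_mem (sub_mem (hθ _ hl) (simplex_mem (hlab _ hl)))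
      (hc _ fun l' hl' => supportedOn_mono fun w => hmono _ l' w hl hl'.1)

lemma coneHomotopy_map {P : List V → Prop} (hP : ∀ l l', P l → l'.Sublist l → P l') {f : V → V}
    {g : W → W} (hlab : ∀ x, lab (f x) = g (lab x))
    (hθ : ∀ l, P l → θ (simplex R (l.map f)) = map R g (θ (simplex R l))) {c : ListChain R V}
    (hc : c ∈ supportedOn R P) :
    coneHomotopy θ lab (map R f c) = map R g (coneHomotopy θ lab c) := by
  refine boundaryRec_map (fun l l' hl hl' => hP l l' hl hl'.1) f (map R g) (fun l c hl => ?_) hc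
  rcases l with - | ⟨x, l⟩
  · simp [coneHomotopyStep]
  · have := hθ _ hl
    simp only [List.map_cons] at this
    simp [coneHomotopyStep, map_cone, this, hlab, Function.comp_def]

end ConeHomotopy

end ListChain

namespace ListChain

section Cocycle

variable {R V M : Type*} [Ring R] [AddCommGroup M] [Module R M]

lemma eval_boundary_cons (f : List V → M) (x : V) (l : List V) :
    eval R f (boundary R (simplex R (x :: l))) =
      f l - eval R (fun w => f (x :: w)) (boundary R (simplex R l)) := by
  rw [boundary_simplex_cons, map_sub, eval_simplex, eval_cone]

@[simp] lemma eval_zero (c : ListChain R V) : eval R (fun _ => (0 : M)) c = 0 :=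
  eval_eq_zero (fun _ _ => rfl) (mem_supportedOn_true c)

/-- The cochain `f` vanishes on boundaries of simplices, i.e. it is a cocycle. -/
def IsCocycle (R : Type*) [Ring R] [Module R M] (f : List V → M) : Prop :=
  ∀ l, eval R f (boundary R (simplex R l)) = 0

lemma eval_const_mul {R : Type*} [CommRing R] (r : R) (f : List V → R) (c : ListChain R V) :
    eval R (fun l => r * f l) c = r * eval R f c :=
  LinearMap.congr_fun (g := r • eval R f) (hom_ext fun l => by simp) c

end Cocycle

section LensCochain

variable {p : ℕ}

/-- The Bockstein of the canonical degree one class of the infinite lens space, as a homogeneous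
two-cochain: the carry in the addition of the representatives of `b - a` and `c - b`. -/
def bockstein (a b c : ZMod p) : ZMod p := (((b - a).val + (c - b).val) / p : ℕ)

/-- The `j`-th cup power of the Bockstein, of degree `2 * j`. -/
def bocksteinPow : ℕ → List (ZMod p) → ZMod p
  | 0, [_] => 1
  | j + 1, a :: b :: c :: w => bockstein a b c * bocksteinPow j (c :: w)
  | _, _ => 0

/-- The cup product of the canonical degree one class with the `m`-th power of the Bockstein. -/
def lensCochain (m : ℕ) : List (ZMod p) → ZMod p
  | a :: b :: w => (b - a) * bocksteinPow m (b :: w)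
  | _ => 0

@[simp] lemma bockstein_shift (a b c : ZMod p) :
    bockstein (a + 1) (b + 1) (c + 1) = bockstein a b c := by
  simp [bockstein]

lemma bocksteinPow_shift (j : ℕ) (l : List (ZMod p)) :
    bocksteinPow j (l.map (· + 1)) = bocksteinPow j l := by
  induction j generalizing l with
  | zero => rcases l with - | ⟨a, - | ⟨b, w⟩⟩ <;> simp [bocksteinPow]
  | succ j ih =>
    rcases l with - | ⟨a, - | ⟨b, - | ⟨c, w⟩⟩⟩
    iterate 3 simp [bocksteinPow]
    simpa [bocksteinPow] using congrArg (bockstein a b c * ·) (ih (c :: w))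

lemma lensCochain_shift (m : ℕ) (l : List (ZMod p)) :
    lensCochain m (l.map (· + 1)) = lensCochain m l := by
  rcases l with - | ⟨a, - | ⟨b, w⟩⟩
  iterate 2 simp [lensCochain]
  simpa [lensCochain] using congrArg ((b - a) * ·) (bocksteinPow_shift m (b :: w))

variable [NeZero p]

@[simp] lemma bockstein_self_left (a c : ZMod p) : bockstein a a c = 0 := by
  simp [bockstein, Nat.div_eq_of_lt (ZMod.val_lt _)]

@[simp] lemma bockstein_self_right (a c : ZMod p) : bockstein a c c = 0 := by
  simp [bockstein, Nat.div_eq_of_lt (ZMod.val_lt _)]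

lemma bockstein_cocycle (a b c d : ZMod p) :
    bockstein b c d - bockstein a c d + bockstein a b d - bockstein a b c = 0 := by
  have carry (x y : ZMod p) : p * ((x.val + y.val) / p) + (x + y).val = x.val + y.val := by
    rw [ZMod.val_add]
    exact Nat.div_add_mod _ _
  have hbcd := carry (c - b) (d - c)
  have hacd := carry (c - a) (d - c)
  have habd := carry (b - a) (d - b)
  have habc := carry (b - a) (c - b)
  rw [sub_add_sub_cancel'] at hbcd hacd habd habc
  have hsum : ((c - b).val + (d - c).val) / p + ((b - a).val + (d - b).val) / p =
      ((c - a).val + (d - c).val) / p + ((b - a).val + (c - b).val) / p :=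
    Nat.eq_of_mul_eq_mul_left (Nat.pos_of_neZero p) (by simp only [mul_add]; omega)
  have hcast := congrArg (Nat.cast (R := ZMod p)) hsum
  push_cast at hcast
  unfold bockstein
  linear_combination hcast

lemma bockstein_succ_self (hp : 2 ≤ p) (a x : ZMod p) :
    bockstein a (x + 1) x = 1 - if x = a - 1 then 1 else 0 := by
  have : Fact (1 < p) := ⟨hp⟩
  have hval : (x - (x + 1)).val = p - 1 := by
    rw [show x - (x + 1) = -1 by ring, ZMod.val_neg_of_ne_zero, ZMod.val_one]
  rw [bockstein, hval]
  split_ifs with hx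
  · simp [hx, Nat.div_eq_of_lt (show p - 1 < p by omega)]
  · have hne : (x + 1 - a).val ≠ 0 := by
      rw [Ne, ZMod.val_eq_zero]
      exact fun h => hx (by linear_combination h)
    have hlt := ZMod.val_lt (x + 1 - a)
    have hcarry : ((x + 1 - a).val + (p - 1)) / p = 1 := by
      rw [Nat.div_eq_iff (by omega)]
      omega
    rw [hcarry, Nat.cast_one, sub_zero]

lemma sum_bockstein (hp : 2 ≤ p) (a : ZMod p) :
    ∑ x : ZMod p, (bockstein a x x - bockstein a (x + 1) x) = 1 := by
  simp [bockstein_succ_self hp]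

lemma isCocycle_bocksteinPow (j : ℕ) : IsCocycle (ZMod p) (bocksteinPow (p := p) j) := by
  induction j with
  | zero =>
    rintro (- | ⟨a, - | ⟨b, - | ⟨c, - | ⟨d, w⟩⟩⟩⟩) <;>
      simp [eval_boundary_cons, bocksteinPow]
  | succ j ih =>
    rintro (- | ⟨a, - | ⟨b, - | ⟨c, - | ⟨d, w⟩⟩⟩⟩)
    iterate 4 simp [eval_boundary_cons, bocksteinPow]
    have htail := ih (c :: d :: w)
    rw [eval_boundary_cons] at htail
    simp only [eval_boundary_cons _ _ (_ :: _), bocksteinPow, eval_const_mul]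
    linear_combination bocksteinPow j (d :: w) * bockstein_cocycle a b c d +
      bockstein a b c * htail

lemma isCocycle_lensCochain (m : ℕ) : IsCocycle (ZMod p) (lensCochain (p := p) m) := by
  rintro (- | ⟨a, - | ⟨b, - | ⟨c, w⟩⟩⟩)
  iterate 3 simp [eval_boundary_cons, lensCochain]
  have htail := isCocycle_bocksteinPow m (b :: c :: w)
  rw [eval_boundary_cons] at htail
  simp only [eval_boundary_cons _ _ (_ :: _), lensCochain, eval_const_mul]
  linear_combination (a - b) * htail

lemma of_bocksteinPow_ne_zero {j : ℕ} {l : List (ZMod p)} (h : bocksteinPow j l ≠ 0) :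
    l.length = 2 * j + 1 ∧ l.IsChain (· ≠ ·) := by
  induction j generalizing l with
  | zero => rcases l with - | ⟨a, - | ⟨b, w⟩⟩ <;> simp_all [bocksteinPow]
  | succ j ih =>
    rcases l with - | ⟨a, - | ⟨b, - | ⟨c, w⟩⟩⟩
    iterate 3 simp [bocksteinPow] at h
    obtain ⟨hlen, hchain⟩ := ih (right_ne_zero_of_mul h)
    have habc : bockstein a b c ≠ 0 := left_ne_zero_of_mul h
    refine ⟨by simp only [List.length_cons] at hlen ⊢; omega, ?_⟩
    rw [List.isChain_cons_cons, List.isChain_cons_cons]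
    exact ⟨fun hab => habc (by simp [hab]), fun hbc => habc (by simp [hbc]), hchain⟩

lemma of_lensCochain_ne_zero {m : ℕ} {l : List (ZMod p)} (h : lensCochain m l ≠ 0) :
    l.length = 2 * m + 2 ∧ l.IsChain (· ≠ ·) := by
  rcases l with - | ⟨a, - | ⟨b, w⟩⟩
  iterate 2 simp [lensCochain] at h
  obtain ⟨hlen, hchain⟩ := of_bocksteinPow_ne_zero (right_ne_zero_of_mul h)
  refine ⟨by simp only [List.length_cons] at hlen ⊢; omega, List.isChain_cons_cons.2 ⟨?_, hchain⟩⟩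
  exact fun hab => left_ne_zero_of_mul h (by simp [hab])

end LensCochain

section DegreeCochain

variable {R : Type*} [CommRing R] {K : ℕ}

/-- The matrix of the affine map sending the `i`-th vertex of a simplex to the basis vector
numbered `f i`, the last label being sent to the origin. -/
def labelMatrix (R : Type*) [CommRing R] (f : Fin K → Fin (K + 1)) : Matrix (Fin K) (Fin K) R :=
  Matrix.of fun i j => if f i = j.castSucc then 1 else 0

/-- The degree cochain on the boundary of the simplex with vertices `0, …, K`: it counts, with sign,
the simplices whose vertices are `0, …, K - 1`. -/
noncomputable def degreeCochain (R : Type*) [CommRing R] (l : List (Fin (K + 1))) : R :=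
  if h : l.length = K then (labelMatrix R fun i => l.get (i.cast h.symm)).det else 0

lemma degreeCochain_ofFn (f : Fin K → Fin (K + 1)) :
    degreeCochain R (List.ofFn f) = (labelMatrix R f).det := by
  rw [degreeCochain, dif_pos List.length_ofFn]
  congr 2
  funext i
  simp

lemma degreeCochain_eq_zero {l : List (Fin (K + 1))} {j : Fin K} (hj : j.castSucc ∉ l) :
    degreeCochain R l = 0 := by
  rw [degreeCochain]
  split_ifs with hl
  · refine Matrix.det_eq_zero_of_column_eq_zero j fun i => if_neg fun h => ?_
    exact hj (h ▸ List.get_mem _ _)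
  · rfl

lemma boundary_simplex_ofFn {R V : Type*} [Ring R] {n : ℕ} (f : Fin (n + 1) → V) :
    boundary R (simplex R (List.ofFn f)) =
      ∑ i : Fin (n + 1), (-1 : R) ^ (i : ℕ) • simplex R (List.ofFn (f ∘ i.succAbove)) := by
  induction n with
  | zero => simp [boundary_simplex_cons, List.ofFn_succ]
  | succ n ih =>
    rw [List.ofFn_succ, boundary_simplex_cons, ih, map_sum, sub_eq_add_neg,
      ← Finset.sum_neg_distrib, Fin.sum_univ_succ (n := n + 1)]
    congr 1
    · simp [Function.comp_def]
    · refine Finset.sum_congr rfl fun i _ => ?_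
      simp [pow_succ, List.ofFn_succ, Function.comp_def]

lemma det_smul_eq_zero_of_mulVec_eq_zero {n : Type*} [Fintype n] [DecidableEq n]
    {M : Matrix n n R} {v : n → R} (h : M.mulVec v = 0) : M.det • v = 0 := by
  rw [← Matrix.one_mulVec v, ← Matrix.smul_mulVec, ← Matrix.adjugate_mul,
    ← Matrix.mulVec_mulVec, h, Matrix.mulVec_zero]

lemma eval_degreeCochain_boundary_ofFn (f : Fin (K + 1) → Fin (K + 1)) :
    eval R (degreeCochain R) (boundary R (simplex R (List.ofFn f))) =
      (Matrix.of fun i => Fin.cons (1 : R) fun j : Fin K =>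
        if f i = j.castSucc then 1 else 0).det := by
  rw [boundary_simplex_ofFn, map_sum, Matrix.det_succ_column_zero]
  refine Finset.sum_congr rfl fun i _ => ?_
  rw [map_smul, eval_simplex, degreeCochain_ofFn, smul_eq_mul, Matrix.of_apply, Fin.cons_zero,
    mul_one]
  rfl

lemma eval_degreeCochain_boundary {l : List (Fin (K + 1))} {j : Fin (K + 1)} (hj : j ∉ l) :
    eval R (degreeCochain R) (boundary R (simplex R l)) = 0 := by
  by_cases hl : l.length = K + 1
  swap
  · refine eval_eq_zero (P := (IsFacet · l)) (fun l' hl' => ?_) (boundary_simplex_mem l)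
    exact dif_neg fun h => hl (by rw [← hl'.2, h])
  obtain ⟨f, rfl⟩ : ∃ f : Fin (K + 1) → Fin (K + 1), l = List.ofFn f :=
    ⟨fun i => l.get (i.cast hl.symm),
      List.ext_get (by simp [hl]) fun n _ _ => by simp [-List.ofFn_succ]⟩
  have hf (i) : f i ≠ j := fun h => hj (List.mem_ofFn.2 ⟨i, h⟩)
  rw [eval_degreeCochain_boundary_ofFn]
  induction j using Fin.lastCases with
  | last =>
    -- each row has exactly one further `1`, so the first column is the sum of the others
    have hker := det_smul_eq_zero_of_mulVec_eq_zero (R := R)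
      (M := Matrix.of fun i => Fin.cons 1 fun j : Fin K => if f i = j.castSucc then 1 else 0)
      (v := Fin.cons 1 fun _ => -1) (funext fun i => by
        obtain ⟨j, hij⟩ := Fin.exists_castSucc_eq.2 (hf i)
        simp [Matrix.mulVec, dotProduct, Fin.sum_univ_succ, ← hij])
    simpa using congrFun hker 0
  | cast j => exact Matrix.det_eq_zero_of_column_eq_zero j.succ fun i => by simp [hf]

lemma eval_degreeCochain_boundary_univ :
    eval R (degreeCochain R) (boundary R (simplex R (List.ofFn (id : Fin (K + 1) → _)))) =
      (-1) ^ K := by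
  have hfaces (i : Fin K) :
      degreeCochain R (List.ofFn (id ∘ i.castSucc.succAbove)) = 0 :=
    degreeCochain_eq_zero (j := i) (by simp [List.mem_ofFn, Fin.succAbove_ne])
  have hlast : labelMatrix R (id ∘ (Fin.last K).succAbove) = 1 := by
    ext i j
    simp [labelMatrix, Matrix.one_apply]
  rw [boundary_simplex_ofFn, map_sum, Fin.sum_univ_castSucc]
  simp only [map_smul, eval_simplex, hfaces, degreeCochain_ofFn, hlast]
  simp

end DegreeCochain

section Join

variable {A B : Type*}

/-- The entries of the left summand. -/
def lefts (l : List (A ⊕ B)) : List A := l.filterMap Sum.getLeft?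

/-- The entries of the right summand. -/
def rights (l : List (A ⊕ B)) : List B := l.filterMap Sum.getRight?

@[simp] lemma lefts_inl_cons (a : A) (l : List (A ⊕ B)) : lefts (.inl a :: l) = a :: lefts l := by
  simp [lefts]

@[simp] lemma lefts_inr_cons (b : B) (l : List (A ⊕ B)) : lefts (.inr b :: l) = lefts l := rfl

@[simp] lemma rights_inl_cons (a : A) (l : List (A ⊕ B)) : rights (.inl a :: l) = rights l := rfl

@[simp] lemma rights_inr_cons (b : B) (l : List (A ⊕ B)) :
    rights (.inr b :: l) = b :: rights l := by
  simp [rights]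

@[simp] lemma lefts_map_inr (b : List B) : lefts (b.map (.inr : B → A ⊕ B)) = [] := by
  induction b with
  | nil => rfl
  | cons x b ih => simpa using ih

@[simp] lemma rights_map_inr (b : List B) : rights (b.map (.inr : B → A ⊕ B)) = b := by
  induction b with
  | nil => rfl
  | cons x b ih => simpa using ih

@[simp] lemma lefts_join (a : List A) (b : List B) :
    lefts (a.map .inl ++ b.map .inr) = a := by
  induction a with
  | nil => simp
  | cons x a ih => simpa using ih

@[simp] lemma rights_join (a : List A) (b : List B) :
    rights (a.map .inl ++ b.map .inr) = b := by
  induction a with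
  | nil => simp
  | cons x a ih => simpa using ih

/-- Simplices of a join: the vertices of the left factor precede those of the right one. -/
def LeftsFirst (l : List (A ⊕ B)) : Prop := l.Pairwise fun x y => x.isRight → y.isRight

lemma eq_map_inr_of_isRight {l : List (A ⊕ B)} (h : ∀ x ∈ l, x.isRight) :
    l = (rights l).map .inr := by
  induction l with
  | nil => rfl
  | cons x l ih =>
    rcases x with a | b
    · simpa using h (.inl a)
    · simp [← ih fun x hx => h x (by simp [hx])]

lemma leftsFirst_of_forall_isRight {l : List (A ⊕ B)} (h : ∀ x ∈ l, x.isRight) :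
    LeftsFirst l :=
  List.pairwise_of_forall_mem_list fun _ _ y hy _ => h y hy

lemma LeftsFirst.inl_cons {l : List (A ⊕ B)} (h : LeftsFirst l) (a : A) :
    LeftsFirst (.inl a :: l) :=
  List.pairwise_cons.2 ⟨fun _ _ h => by simp at h, h⟩

lemma LeftsFirst.forall_isRight {l : List (A ⊕ B)} {b : B}
    (h : LeftsFirst (.inr b :: l)) : ∀ x ∈ .inr b :: l, x.isRight := by
  rintro x (- | ⟨-, hx⟩)
  · rfl
  · exact (List.pairwise_cons.1 h).1 x hx rfl

lemma LeftsFirst.eq_join {l : List (A ⊕ B)} (h : LeftsFirst l) :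
    l = (lefts l).map .inl ++ (rights l).map .inr := by
  induction l with
  | nil => rfl
  | cons x l ih =>
    rw [LeftsFirst, List.pairwise_cons] at h
    rcases x with a | b
    · simp [← ih h.2]
    · have hl := eq_map_inr_of_isRight fun y hy => h.1 y hy rfl
      rw [hl]
      simp

variable {R : Type*} [CommRing R] {K : ℕ}

/-- The exterior product of a cochain on the left factor of a join with the degree cochain on the
right factor. -/
noncomputable def joinCochain (f : List A → R) (l : List (A ⊕ Fin (K + 1))) : R :=
  f (lefts l) * degreeCochain R (rights l)

lemma eval_joinCochain_const_mul (r : R) (f : List A → R) (c : ListChain R (A ⊕ Fin (K + 1))) :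
    eval R (joinCochain fun l => r * f l) c = r * eval R (joinCochain f) c := by
  rw [← eval_const_mul]
  exact eval_congr (fun l _ => mul_assoc r _ _) (mem_supportedOn_true c)

lemma eval_joinCochain_map_inr (f : List A → R) (c : ListChain R (Fin (K + 1))) :
    eval R (joinCochain f) (map R .inr c) = f [] * eval R (degreeCochain R) c := by
  rw [eval_map, ← eval_const_mul]
  simp [joinCochain]

lemma eval_joinCochain_boundary_join (f : List A → R) (a : List A) (b : List (Fin (K + 1))) :
    eval R (joinCochain f) (boundary R (simplex R (a.map .inl ++ b.map .inr))) =
      eval R f (boundary R (simplex R a)) * degreeCochain R b +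
        (-1) ^ a.length * f a * eval R (degreeCochain R) (boundary R (simplex R b)) := by
  induction a generalizing f with
  | nil => simp [← map_simplex, ← map_boundary, eval_joinCochain_map_inr]
  | cons g a ih =>
    have htail : eval R (fun w => joinCochain f (.inl g :: w))
        (boundary R (simplex R (a.map .inl ++ b.map .inr))) = _ := ih fun t => f (g :: t)
    rw [List.map_cons, List.cons_append, eval_boundary_cons, eval_boundary_cons, htail, joinCochain,
      lefts_join, rights_join, List.length_cons]
    ring

/-- The simplices of the join of a simplex on `A` with the boundary of the simplex on
`Fin (K + 1)`. -/
def InBoundaryJoin (l : List (A ⊕ Fin (K + 1))) : Prop := LeftsFirst l ∧ ∃ j, .inr j ∉ l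

lemma eval_joinCochain_boundary {f : List A → R} (hf : IsCocycle R f)
    {l : List (A ⊕ Fin (K + 1))} (hl : InBoundaryJoin l) :
    eval R (joinCochain f) (boundary R (simplex R l)) = 0 := by
  obtain ⟨hsorted, j, hj⟩ := hl
  rw [hsorted.eq_join] at hj ⊢
  rw [eval_joinCochain_boundary_join, hf, eval_degreeCochain_boundary (j := j) (by simpa using hj)]
  simp

end Join

end ListChain

/-- Vertices of the join of the circles indexed by `ι`, each subdivided into `2 * p` arcs, with the
boundary of a `K`-simplex. In each circle the arcs join `(true, h)` to `(false, h)` and to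
`(false, h + 1)`. -/
abbrev JoinVertex (p : ℕ) (ι : Type*) (K : ℕ) : Type _ := (ι × Bool × ZMod p) ⊕ Fin (K + 1)

namespace JoinVertex

open ListChain

section Cells

variable {p : ℕ} {ι : Type*} {K : ℕ}

/-- The generator of the deck group, acting on vertices. -/
def shift : Equiv.Perm (JoinVertex p ι K) :=
  .sumCongr (.prodCongr (.refl ι) (.prodCongr (.refl Bool) (.addRight 1))) (.refl _)

/-- The projection remembering of a vertex of a circle only its group coordinate. -/
def label : JoinVertex p ι K → ZMod p ⊕ Fin (K + 1) := Sum.map (fun v => v.2.2) id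

/-- The generator of the deck group, acting on labels. -/
def labelShift : ZMod p ⊕ Fin (K + 1) → ZMod p ⊕ Fin (K + 1) := Sum.map (· + 1) id

lemma label_shift (x : JoinVertex p ι K) : label (shift x) = labelShift (label x) := by
  rcases x with x | x <;> rfl

lemma isRight_label (x : JoinVertex p ι K) : (label x).isRight = x.isRight := by
  rcases x with x | x <;> rfl

lemma label_eq_inr {x : JoinVertex p ι K} {j : Fin (K + 1)} : label x = .inr j ↔ x = .inr j := by
  rcases x with x | x <;> simp [label]

lemma lefts_map_labelShift (l : List (ZMod p ⊕ Fin (K + 1))) :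
    lefts (l.map labelShift) = (lefts l).map (· + 1) := by
  induction l with
  | nil => rfl
  | cons x l ih => rcases x with x | x <;> simpa [labelShift] using ih

lemma rights_map_labelShift (l : List (ZMod p ⊕ Fin (K + 1))) :
    rights (l.map labelShift) = rights l := by
  induction l with
  | nil => rfl
  | cons x l ih => rcases x with x | x <;> simpa [labelShift] using ih

/-- Names of the maximal simplices of the join: `(h, d, j)` is spanned by the arcs from
`(true, h i)` to `(false, h i + d i)` and the face of the `K`-simplex opposite to `j`. -/
abbrev Cell (p : ℕ) (ι : Type*) (K : ℕ) : Type _ := (ι → ZMod p) × (ι → Bool) × Fin (K + 1)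

/-- The vertices of a maximal simplex of the join. -/
def cellVertices (c : Cell p ι K) : Set (JoinVertex p ι K) :=
  {x | x.elim (fun v => v.2.2 = c.1 v.1 + if v.2.1 then 0 else ((c.2.1 v.1).toNat : ZMod p))
    (· ≠ c.2.2)}

@[simp] lemma inl_mem_cellVertices {c : Cell p ι K} {i : ι} {b : Bool} {g : ZMod p} :
    .inl (i, b, g) ∈ cellVertices c ↔ g = c.1 i + if b then 0 else ((c.2.1 i).toNat : ZMod p) :=
  Iff.rfl

@[simp] lemma inr_mem_cellVertices {c : Cell p ι K} {j : Fin (K + 1)} :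
    .inr j ∈ cellVertices c ↔ j ≠ c.2.2 :=
  Iff.rfl

/-- Simplices of the subjoin of the boundary of the `K`-simplex with the circles in `js`. -/
def IsSimplexOver (js : List ι) (l : List (JoinVertex p ι K)) : Prop :=
  LeftsFirst l ∧ l.length ≤ 2 * js.length + K ∧ (∀ v, .inl v ∈ l → v.1 ∈ js) ∧
    ∃ c, ∀ x ∈ l, x ∈ cellVertices c

/-- Simplices of the join. -/
def IsSimplex [Fintype ι] (l : List (JoinVertex p ι K)) : Prop :=
  LeftsFirst l ∧ l.length ≤ 2 * Fintype.card ι + K ∧ ∃ c, ∀ x ∈ l, x ∈ cellVertices c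

lemma IsSimplex.sublist [Fintype ι] {l l' : List (JoinVertex p ι K)} (h : IsSimplex l)
    (hsub : l'.Sublist l) : IsSimplex l' :=
  ⟨h.1.sublist hsub, hsub.length_le.trans h.2.1, h.2.2.imp fun _ hc x hx => hc x (hsub.subset hx)⟩

lemma IsSimplexOver.cons_arc {js : List ι} {l : List (JoinVertex p ι K)}
    (hl : IsSimplexOver js l) {i : ι} (hi : i ∉ js) (h : ZMod p) (d : Bool) :
    IsSimplexOver (i :: js)
      (.inl (i, false, h + (d.toNat : ZMod p)) :: .inl (i, true, h) :: l) := by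
  classical
  obtain ⟨hsorted, hlen, hjs, c, hc⟩ := hl
  refine ⟨(hsorted.inl_cons _).inl_cons _, by simp only [List.length_cons]; omega, ?_,
    (Function.update c.1 i h, Function.update c.2.1 i d, c.2.2), ?_⟩
  · simp only [List.mem_cons, Sum.inl.injEq]
    rintro v (rfl | rfl | hv)
    exacts [.inl rfl, .inl rfl, .inr (hjs v hv)]
  · simp only [List.forall_mem_cons]
    refine ⟨by simp, by simp, fun x hx => ?_⟩
    have hxc := hc x hx
    rcases x with ⟨i', b, g⟩ | j
    · have hne : i' ≠ i := fun h => hi (h ▸ hjs _ hx)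
      simpa [hne] using hxc
    · exact hxc

lemma IsSimplexOver.isSimplex [Fintype ι] {js : List ι} {l : List (JoinVertex p ι K)}
    (hl : IsSimplexOver js l) (hjs : js.Nodup) : IsSimplex l :=
  ⟨hl.1, hl.2.1.trans (by have := hjs.length_le_card; omega), hl.2.2.2⟩

end Cells

section Chains

variable {p : ℕ} {ι : Type*} {K : ℕ}

/-- The join of a chain with the two arcs of the `i`-th circle at `(true, h)`. -/
noncomputable def arcsJoin (i : ι) (h : ZMod p) :
    ListChain (ZMod p) (JoinVertex p ι K) →ₗ[ZMod p] ListChain (ZMod p) (JoinVertex p ι K) :=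
  (cone _ (.inl (i, false, h)) - cone _ (.inl (i, false, h + 1))) ∘ₗ cone _ (.inl (i, true, h))

lemma boundary_arcsJoin (i : ι) (h : ZMod p) (c : ListChain (ZMod p) (JoinVertex p ι K)) :
    boundary _ (arcsJoin i h c) = arcsJoin i h (boundary _ c) +
      (cone _ (.inl (i, false, h + 1)) c - cone _ (.inl (i, false, h)) c) := by
  simp only [arcsJoin, LinearMap.comp_apply, LinearMap.sub_apply, map_sub, boundary_cone]
  abel

lemma map_shift_arcsJoin (i : ι) (h : ZMod p) (c : ListChain (ZMod p) (JoinVertex p ι K)) :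
    map _ shift (arcsJoin i h c) = arcsJoin i (h + 1) (map _ shift c) := by
  simp [arcsJoin, map_cone, shift]

lemma arcsJoin_mem {js : List ι} {c : ListChain (ZMod p) (JoinVertex p ι K)}
    (hc : c ∈ supportedOn _ (IsSimplexOver js)) {i : ι} (hi : i ∉ js) (h : ZMod p) :
    arcsJoin i h c ∈ supportedOn _ (IsSimplexOver (i :: js)) := by
  have hmem (d : Bool) :
      cone _ (.inl (i, false, h + (d.toNat : ZMod p))) (cone _ (.inl (i, true, h)) c) ∈
        supportedOn (ZMod p) (IsSimplexOver (i :: js)) :=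
    cone_mem (P := fun l => IsSimplexOver (i :: js) (.inl (i, false, h + (d.toNat : ZMod p)) :: l))
      _
      (fun _ hl => hl) (cone_mem _ (fun l hl => hl.cons_arc hi h d) hc)
  have hsub := sub_mem (hmem false) (hmem true)
  simpa [arcsJoin] using hsub

/-- The fundamental cycle of the boundary of the `K`-simplex. -/
noncomputable def rightSphere : ListChain (ZMod p) (JoinVertex p ι K) :=
  map _ .inr (boundary _ (simplex _ (List.ofFn id)))

lemma boundary_rightSphere : boundary _ (rightSphere : ListChain _ (JoinVertex p ι K)) = 0 := by
  rw [rightSphere, ← map_boundary, boundary_boundary, map_zero]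

lemma map_shift_rightSphere :
    map _ shift (rightSphere : ListChain _ (JoinVertex p ι K)) = rightSphere := by
  rw [rightSphere, map_map]
  rfl

lemma rightSphere_mem :
    (rightSphere : ListChain _ (JoinVertex p ι K)) ∈ supportedOn _ (IsSimplexOver []) := by
  refine map_mem (P := (IsFacet · (List.ofFn id))) (Q := IsSimplexOver []) Sum.inr
    (fun l hl => ?_) (boundary_simplex_mem _)
  have hlen : l.length + 1 = K + 1 := by simpa using hl.2
  obtain ⟨j, hj⟩ : ∃ j, j ∉ l.toFinset := by
    by_contra! hall
    have huniv := Finset.card_le_card fun j (_ : j ∈ Finset.univ) => hall j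
    have hcard := l.toFinset_card_le
    simp only [Finset.card_univ, Fintype.card_fin] at huniv
    omega
  refine ⟨leftsFirst_of_forall_isRight (by simp), by simp; omega, by simp, (0, fun _ => false, j),
    fun x hx => ?_⟩
  obtain ⟨j', hj', rfl⟩ := List.mem_map.1 hx
  exact fun h : j' = j => hj (List.mem_toFinset.2 (h ▸ hj'))

variable [NeZero p]

/-- The join of a chain with the `i`-th circle. -/
noncomputable def circleJoin (i : ι) :
    ListChain (ZMod p) (JoinVertex p ι K) →ₗ[ZMod p] ListChain (ZMod p) (JoinVertex p ι K) :=
  ∑ h, arcsJoin i h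

/-- The fundamental cycle of the join of the right sphere with the circles in a list. -/
noncomputable def sphereOver (js : List ι) : ListChain (ZMod p) (JoinVertex p ι K) :=
  js.foldr (fun i c => circleJoin i c) rightSphere

lemma boundary_circleJoin (i : ι) (c : ListChain (ZMod p) (JoinVertex p ι K)) :
    boundary _ (circleJoin i c) = circleJoin i (boundary _ c) := by
  have htelescope :
      ∑ h : ZMod p, (cone _ (.inl (i, false, h + 1)) c - cone _ (.inl (i, false, h)) c) =
        (0 : ListChain (ZMod p) (JoinVertex p ι K)) := by
    rw [Finset.sum_sub_distrib, sub_eq_zero]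
    exact Equiv.sum_comp (Equiv.addRight (1 : ZMod p)) fun h => cone _ (.inl (i, false, h)) c
  rw [circleJoin, LinearMap.sum_apply, LinearMap.sum_apply, map_sum]
  simp only [boundary_arcsJoin, Finset.sum_add_distrib, htelescope, add_zero]

lemma map_shift_circleJoin (i : ι) (c : ListChain (ZMod p) (JoinVertex p ι K)) :
    map _ shift (circleJoin i c) = circleJoin i (map _ shift c) := by
  simp only [circleJoin, LinearMap.sum_apply, map_sum, map_shift_arcsJoin]
  exact Equiv.sum_comp (Equiv.addRight (1 : ZMod p)) fun h => arcsJoin i h (map _ shift c)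

lemma boundary_sphereOver (js : List ι) :
    boundary _ (sphereOver js : ListChain _ (JoinVertex p ι K)) = 0 := by
  induction js with
  | nil => exact boundary_rightSphere
  | cons i js ih => exact (boundary_circleJoin i _).trans (by rw [← sphereOver, ih, map_zero])

lemma map_shift_sphereOver (js : List ι) :
    map _ shift (sphereOver js : ListChain _ (JoinVertex p ι K)) = sphereOver js := by
  induction js with
  | nil => exact map_shift_rightSphere
  | cons i js ih => exact (map_shift_circleJoin i _).trans (congrArg (circleJoin i) ih)

lemma boundary_arcsJoin_sphereOver (i : ι) (js : List ι) :
    boundary _ (arcsJoin i 0 (sphereOver js) : ListChain _ (JoinVertex p ι K)) =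
      map _ shift (cone _ (.inl (i, false, 0)) (sphereOver js)) -
        cone _ (.inl (i, false, 0)) (sphereOver js) := by
  rw [boundary_arcsJoin, boundary_sphereOver, map_zero, zero_add, map_cone, map_shift_sphereOver]
  rfl

lemma sphereOver_mem {js : List ι} (hjs : js.Nodup) :
    (sphereOver js : ListChain _ (JoinVertex p ι K)) ∈ supportedOn _ (IsSimplexOver js) := by
  induction js with
  | nil => exact rightSphere_mem
  | cons i js ih =>
    obtain ⟨hi, hjs⟩ := List.nodup_cons.1 hjs
    change circleJoin i (sphereOver js) ∈ _
    rw [circleJoin, LinearMap.sum_apply]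
    exact Submodule.sum_mem _ fun h _ => arcsJoin_mem (ih hjs) hi h

lemma cone_sphereOver_mem [Fintype ι] {i : ι} {js : List ι} (h : (i :: js).Nodup) :
    cone _ (.inl (i, false, 0)) (sphereOver js : ListChain _ (JoinVertex p ι K)) ∈
      supportedOn _ IsSimplex := by
  obtain ⟨hi, hjs⟩ := List.nodup_cons.1 h
  refine cone_mem _ (fun l hl => ?_) (sphereOver_mem hjs)
  have harc := (hl.cons_arc hi 0 false).isSimplex h
  simp only [Bool.toNat_false, Nat.cast_zero, add_zero] at harc
  exact harc.sublist ((List.sublist_cons_self _ _).cons_cons _)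

lemma arcsJoin_sphereOver_mem [Fintype ι] {i : ι} {js : List ι} (h : (i :: js).Nodup) :
    arcsJoin i 0 (sphereOver js : ListChain _ (JoinVertex p ι K)) ∈ supportedOn _ IsSimplex := by
  obtain ⟨hi, hjs⟩ := List.nodup_cons.1 h
  exact supportedOn_mono (fun l hl => hl.isSimplex h) (arcsJoin_mem (sphereOver_mem hjs) hi 0)

end Chains

section Evaluation

variable {p : ℕ} {ι : Type*} {K : ℕ}

lemma eval_map_label_arcsJoin (f : List (ZMod p) → ZMod p) (i : ι) (h : ZMod p)
    (c : ListChain (ZMod p) (JoinVertex p ι K)) :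
    eval _ (joinCochain f) (map _ label (arcsJoin i h c)) =
      eval _ (joinCochain fun l => f (h :: h :: l)) (map _ label c) -
        eval _ (joinCochain fun l => f ((h + 1) :: h :: l)) (map _ label c) := by
  simp only [arcsJoin, LinearMap.comp_apply, LinearMap.sub_apply, map_sub, map_cone, eval_cone]
  rfl

lemma eval_joinCochain_map_labelShift (m : ℕ) (c : ListChain (ZMod p) (ZMod p ⊕ Fin (K + 1))) :
    eval _ (joinCochain (lensCochain m)) (map _ labelShift c) =
      eval _ (joinCochain (lensCochain m)) c := by
  rw [eval_map]
  refine eval_congr (fun l _ => ?_) (mem_supportedOn_true c)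
  rw [joinCochain, joinCochain, lefts_map_labelShift, rights_map_labelShift, lensCochain_shift]

variable [NeZero p]

lemma eval_map_label_sphereOver (hp : 2 ≤ p) (js : List ι) (a : ZMod p) :
    eval _ (joinCochain fun l => bocksteinPow js.length (a :: l))
      (map _ label (sphereOver js : ListChain _ (JoinVertex p ι K))) = (-1) ^ K := by
  induction js generalizing a with
  | nil =>
    have hlabel : (label : JoinVertex p ι K → _) ∘ .inr = .inr := rfl
    rw [sphereOver, List.foldr_nil, rightSphere, map_map, hlabel, eval_joinCochain_map_inr,
      eval_degreeCochain_boundary_univ]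
    simp [bocksteinPow]
  | cons i js ih =>
    change eval _ _ (map _ label (circleJoin i (sphereOver js))) = _
    simp only [circleJoin, LinearMap.sum_apply, map_sum, eval_map_label_arcsJoin, List.length_cons,
      bocksteinPow, eval_joinCochain_const_mul, ih, ← sub_mul]
    rw [← Finset.sum_mul, sum_bockstein hp, one_mul]

lemma eval_map_label_arcsJoin_sphereOver (hp : 2 ≤ p) (i : ι) (js : List ι) :
    eval _ (joinCochain (lensCochain js.length))
      (map _ label (arcsJoin i 0 (sphereOver js) : ListChain _ (JoinVertex p ι K))) ≠ 0 := by
  have : Fact (1 < p) := ⟨hp⟩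
  simp only [eval_map_label_arcsJoin, lensCochain, eval_joinCochain_const_mul,
    eval_map_label_sphereOver hp]
  simp [neg_one_pow_ne_zero]

end Evaluation

section Obstruction

variable {p : ℕ} {ι : Type*} {K : ℕ}

/-- The carrier for chain maps that restrict to the labelling on the right factor up to
homotopy. -/
def Carries (l : List (JoinVertex p ι K)) (w : List (ZMod p ⊕ Fin (K + 1))) : Prop :=
  InBoundaryJoin w ∧ ((∀ x ∈ l, x.isRight) → w ⊆ l.map label)

lemma Carries.mono {l l' : List (JoinVertex p ι K)} {w : List (ZMod p ⊕ Fin (K + 1))}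
    (h : Carries l' w) (hsub : l'.Sublist l) : Carries l w :=
  ⟨h.1, fun hr =>
    List.Subset.trans (h.2 fun x hx => hr x (hsub.subset hx)) (List.map_subset _ hsub.subset)⟩

variable [Fintype ι]

lemma IsSimplex.inBoundaryJoin_map_label {l : List (JoinVertex p ι K)} (hl : IsSimplex l) :
    InBoundaryJoin (l.map label) := by
  obtain ⟨hsorted, -, c, hc⟩ := hl
  refine ⟨List.pairwise_map.2 (hsorted.imp fun h => by simpa only [isRight_label] using h), c.2.2,
    fun hmem => ?_⟩
  obtain ⟨x, hx, hxc⟩ := List.mem_map.1 hmem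
  exact inr_mem_cellVertices.1 (hc _ (label_eq_inr.1 hxc ▸ hx)) rfl

lemma IsSimplex.inBoundaryJoin_of_subset {l : List (JoinVertex p ι K)} (hl : IsSimplex l)
    (hr : ∀ x ∈ l, x.isRight) {w : List (ZMod p ⊕ Fin (K + 1))} (hw : w ⊆ l.map label) :
    InBoundaryJoin w := by
  refine ⟨leftsFirst_of_forall_isRight fun y hy => ?_, ?_⟩
  · obtain ⟨x, hx, rfl⟩ := List.mem_map.1 (hw hy)
    exact (isRight_label x).trans (hr x hx)
  · exact hl.inBoundaryJoin_map_label.2.imp fun j hj h => hj (hw h)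

lemma Carries.label_cons {x : JoinVertex p ι K} {l : List (JoinVertex p ι K)}
    {w : List (ZMod p ⊕ Fin (K + 1))} (hl : IsSimplex (x :: l)) (h : Carries (x :: l) w) :
    Carries (x :: l) (label x :: w) := by
  rcases x with v | j
  · obtain ⟨⟨hsorted, j, hj⟩, -⟩ := h
    exact ⟨⟨hsorted.inl_cons _, j, by simpa [label] using hj⟩, fun hr => by simpa using hr (.inl v)⟩
  · have hr := LeftsFirst.forall_isRight hl.1
    have hsub : label (.inr j) :: w ⊆ (.inr j :: l).map label :=
      List.cons_subset.2 ⟨List.mem_map_of_mem List.mem_cons_self, h.2 hr⟩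
    exact ⟨hl.inBoundaryJoin_of_subset hr hsub, fun _ => hsub⟩

variable {θ : ListChain (ZMod p) (JoinVertex p ι K) →ₗ[ZMod p]
  ListChain (ZMod p) (ZMod p ⊕ Fin (K + 1))}

lemma coneHomotopy_mem
    (hθ : ∀ l, IsSimplex l → θ (simplex _ l) ∈ supportedOn _ InBoundaryJoin)
    (hright : ∀ l, IsSimplex l → (∀ x ∈ l, x.isRight) →
      θ (simplex _ l) ∈ supportedOn _ (· ⊆ l.map label))
    {l : List (JoinVertex p ι K)} (hl : IsSimplex l) :
    coneHomotopy θ label (simplex _ l) ∈ supportedOn _ InBoundaryJoin := by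
  refine supportedOn_mono (fun _ h => h.1) (coneHomotopy_simplex_mem (Q := Carries)
    (fun _ _ h => h.sublist) (fun l hl => ?_)
    (fun l hl => ⟨hl.inBoundaryJoin_map_label, fun _ => List.Subset.refl _⟩)
    (fun _ _ _ _ hsub h => h.mono hsub) (fun _ _ _ => Carries.label_cons) hl)
  by_cases hr : ∀ x ∈ l, x.isRight
  · exact supportedOn_mono (fun w hw => ⟨hl.inBoundaryJoin_of_subset hr hw, fun _ => hw⟩)
      (hright l hl hr)
  · exact supportedOn_mono (fun w hw => ⟨hw, fun h => absurd h hr⟩) (hθ l hl)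

variable [NeZero p]

/- The homotopy between `θ` and the labelling contributes a boundary, on which the cocycle vanishes,
and the value on `boundary c`, which is a difference of translates. -/
lemma eval_apply_eq_eval_map_label (m : ℕ) (hnil : θ (simplex _ []) = simplex _ [])
    (hbd : ∀ c, boundary _ (θ c) = θ (boundary _ c))
    (hshift : ∀ l, IsSimplex l → θ (simplex _ (l.map shift)) = map _ labelShift (θ (simplex _ l)))
    (hθ : ∀ l, IsSimplex l → θ (simplex _ l) ∈ supportedOn _ InBoundaryJoin)
    (hright : ∀ l, IsSimplex l → (∀ x ∈ l, x.isRight) →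
      θ (simplex _ l) ∈ supportedOn _ (· ⊆ l.map label))
    {c d : ListChain (ZMod p) (JoinVertex p ι K)} (hc : c ∈ supportedOn _ IsSimplex)
    (hd : d ∈ supportedOn _ IsSimplex) (hcd : boundary _ c = map _ shift d - d) :
    eval _ (joinCochain (lensCochain m)) (θ c) =
      eval _ (joinCochain (lensCochain m)) (map _ label c) := by
  have hexact : eval _ (joinCochain (lensCochain m)) (boundary _ (coneHomotopy θ label c)) = 0 :=
    eqOn_supportedOn
      (f := (eval _ (joinCochain (lensCochain m))) ∘ₗ boundary _ ∘ₗ coneHomotopy θ label) (g := 0)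
      (fun l hl => eqOn_supportedOn
        (f := eval _ (joinCochain (lensCochain m)) ∘ₗ boundary _) (g := 0)
        (fun w hw => eval_joinCochain_boundary (isCocycle_lensCochain m) hw)
        (coneHomotopy_mem hθ hright hl)) hc
  have hequiv : eval _ (joinCochain (lensCochain m)) (coneHomotopy θ label (boundary _ c)) = 0 := by
    rw [hcd, map_sub, coneHomotopy_map (fun _ _ h => h.sublist) label_shift hshift hd, map_sub,
      eval_joinCochain_map_labelShift, sub_self]
  have hspec := congrArg (eval _ (joinCochain (lensCochain m)))
    (boundary_coneHomotopy (lab := label) hbd hnil c)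
  rw [map_add, map_sub, hexact, hequiv, add_zero] at hspec
  exact sub_eq_zero.1 hspec.symm

theorem exists_isSimplex_apply_not_mem (hp : 2 ≤ p) {m : ℕ} (hm : Fintype.card ι = m + 1)
    (hnil : θ (simplex _ []) = simplex _ []) (hbd : ∀ c, boundary _ (θ c) = θ (boundary _ c))
    (hshift : ∀ l, IsSimplex l → θ (simplex _ (l.map shift)) = map _ labelShift (θ (simplex _ l)))
    (hθ : ∀ l, IsSimplex l → θ (simplex _ l) ∈ supportedOn _ InBoundaryJoin)
    (hright : ∀ l, IsSimplex l → (∀ x ∈ l, x.isRight) →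
      θ (simplex _ l) ∈ supportedOn _ (· ⊆ l.map label)) :
    ∃ l, IsSimplex l ∧ θ (simplex _ l) ∉
      supportedOn _ (fun w => joinCochain (lensCochain (p := p) m) w = 0) := by
  classical
  by_contra! hzero
  obtain ⟨i⟩ : Nonempty ι := Fintype.card_pos_iff.1 (by omega)
  obtain ⟨js, hjs, rfl⟩ : ∃ js : List ι, (i :: js).Nodup ∧ js.length = m :=
    ⟨(Finset.univ.erase i).toList, List.nodup_cons.2 ⟨by simp, Finset.nodup_toList _⟩, by simp [hm]⟩
  refine eval_map_label_arcsJoin_sphereOver (K := K) hp i js ?_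
  rw [← eval_apply_eq_eval_map_label js.length hnil hbd hshift hθ hright
    (arcsJoin_sphereOver_mem hjs) (cone_sphereOver_mem hjs) (boundary_arcsJoin_sphereOver i js)]
  exact eqOn_supportedOn (f := eval _ (joinCochain (lensCochain js.length)) ∘ₗ θ) (g := 0)
    (fun l hl => eval_eq_zero (fun _ h => h) (hzero l hl)) (arcsJoin_sphereOver_mem hjs)

end Obstruction

end JoinVertex

namespace ListChain

section Barycentre

variable {E : Type*}

/-- The barycentre of a list of points. -/
noncomputable def barycentre [AddCommGroup E] [Module ℝ E] (l : List E) : E :=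
  (l.length : ℝ)⁻¹ • l.sum

lemma barycentre_map [AddCommGroup E] [Module ℝ E] (f : E →ₗ[ℝ] E) (l : List E) :
    barycentre (l.map f) = f (barycentre l) := by
  rw [barycentre, barycentre, List.length_map, ← map_list_sum, map_smul]

lemma barycentre_mem [AddCommGroup E] [Module ℝ E] {l : List E} (hl : l ≠ []) {C : Set E}
    (hC : Convex ℝ C) (h : ∀ x ∈ l, x ∈ C) : barycentre l ∈ C := by
  have hlen : (l.length : ℝ) ≠ 0 := by simpa using hl
  rw [barycentre, ← Fin.sum_univ_getElem, Finset.smul_sum]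
  exact hC.sum_mem (fun _ _ => by positivity) (by simp [hlen]) fun _ _ => h _ (List.getElem_mem _)

variable [NormedAddCommGroup E] [NormedSpace ℝ E]

lemma dist_barycentre_le {l : List E} {M : ℕ} (hM : l.length ≤ M) {d : ℝ}
    (h : ∀ x ∈ l, ∀ y ∈ l, dist x y ≤ d) {x : E} (hx : x ∈ l) :
    dist (barycentre l) x ≤ (1 - (M : ℝ)⁻¹) * d := by
  obtain ⟨n, hn, rfl⟩ := List.mem_iff_getElem.1 hx
  have hlen : (0 : ℝ) < l.length := by exact_mod_cast (Nat.zero_le n).trans_lt hn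
  have hd : 0 ≤ d := dist_nonneg.trans (h _ hx _ hx)
  have hsum : barycentre l - l[n] = (l.length : ℝ)⁻¹ • ∑ i : Fin l.length, (l[i] - l[n]) := by
    have hget : ∑ i : Fin l.length, l[i] = l.sum := Fin.sum_univ_getElem l
    rw [Finset.sum_sub_distrib, smul_sub, hget, barycentre]
    simp [← Nat.cast_smul_eq_nsmul ℝ, smul_smul, hlen.ne']
  have hnorm : ∑ i : Fin l.length, ‖l[i] - l[n]‖ ≤ (l.length - 1) * d := by
    rw [← Finset.sum_erase Finset.univ (a := ⟨n, hn⟩) (by simp)]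
    refine (Finset.sum_le_card_nsmul _ _ d fun i _ => ?_).trans_eq ?_
    · exact (dist_eq_norm _ _).symm.trans_le (h _ (List.getElem_mem _) _ hx)
    · rw [Finset.card_erase_of_mem (Finset.mem_univ _), Finset.card_univ, Fintype.card_fin,
        nsmul_eq_mul, Nat.cast_pred ((Nat.zero_le n).trans_lt hn)]
  calc dist (barycentre l) l[n] = (l.length : ℝ)⁻¹ * ‖∑ i : Fin l.length, (l[i] - l[n])‖ := by
        rw [dist_eq_norm, hsum, norm_smul, norm_inv, Real.norm_natCast]
    _ ≤ (l.length : ℝ)⁻¹ * ((l.length - 1) * d) := by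
        gcongr
        exact (norm_sum_le _ _).trans hnorm
    _ = (1 - (l.length : ℝ)⁻¹) * d := by field_simp
    _ ≤ (1 - (M : ℝ)⁻¹) * d := by gcongr

/-- The properties of the simplices `w` in the barycentric subdivision of a simplex `l` on at most
`M` vertices: the mesh shrinks by a definite factor. -/
def IsRefinement (M : ℕ) (l w : List E) : Prop :=
  w.length = l.length ∧ (∀ x ∈ w, x ∈ convexHull ℝ {y | y ∈ l}) ∧
    ∀ d : ℝ, (∀ x ∈ l, ∀ y ∈ l, dist x y ≤ d) → ∀ x ∈ w, ∀ y ∈ w, dist x y ≤ (1 - (M : ℝ)⁻¹) * d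

lemma IsRefinement.barycentre_cons {M : ℕ} {l l' w : List E} (hM : l.length ≤ M) (hl : l ≠ [])
    (hfacet : IsFacet l' l) (hw : IsRefinement M l' w) : IsRefinement M l (barycentre l :: w) := by
  have hhull : ∀ x ∈ w, x ∈ convexHull ℝ {y | y ∈ l} := fun x hx =>
    convexHull_mono (fun _ hy => hfacet.1.subset hy) (hw.2.1 x hx)
  refine ⟨by rw [List.length_cons, hw.1, hfacet.2], ?_, fun d hd => ?_⟩
  · exact List.forall_mem_cons.2
      ⟨barycentre_mem hl (convex_convexHull ℝ _) fun x hx => subset_convexHull ℝ _ hx, hhull⟩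
  have hball : ∀ x ∈ w, dist x (barycentre l) ≤ (1 - (M : ℝ)⁻¹) * d := fun x hx =>
    convexHull_min (fun y hy => (dist_comm _ _).trans_le (dist_barycentre_le hM hd hy))
      (convex_closedBall (barycentre l) ((1 - (M : ℝ)⁻¹) * d)) (hhull x hx)
  have hself : dist (barycentre l) (barycentre l) ≤ (1 - (M : ℝ)⁻¹) * d := by
    obtain ⟨x, hx⟩ := List.exists_mem_of_ne_nil l hl
    exact (dist_self _).trans_le (dist_nonneg.trans (dist_barycentre_le hM hd hx))
  refine List.forall_mem_cons.2 ⟨List.forall_mem_cons.2 ⟨hself, fun y hy => ?_⟩, fun x hx =>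
    List.forall_mem_cons.2 ⟨hball x hx, ?_⟩⟩
  · exact (dist_comm _ _).trans_le (hball y hy)
  · exact hw.2.2 d (fun a ha b hb => hd a (hfacet.1.subset ha) b (hfacet.1.subset hb)) x hx

lemma subdivision_barycentre_mem {R : Type*} [Ring R] {M : ℕ} {l : List E} (hM : l.length ≤ M) :
    subdivision R barycentre (simplex R l) ∈ supportedOn R (IsRefinement M l) :=
  supportedOn_mono (fun _ h => h hM)
    (subdivision_simplex_mem (P := fun l w => l.length ≤ M → IsRefinement M l w)
      (fun _ => ⟨rfl, by simp, by simp⟩)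
      (fun _ _ _ hl hfacet hw hM =>
        (hw ((Nat.le_succ _).trans (hfacet.2.trans_le hM))).barycentre_cons hM hl hfacet) l)

end Barycentre

section Flags

/-- Decreasing chains of nonempty subsets of `C` of diameter at most `d`. -/
def IsFlagIn {E : Type*} [Dist E] (C : Set E) (d : ℝ) (w : List (Set E)) : Prop :=
  w.Pairwise (· ⊇ ·) ∧ ∀ s ∈ w, s.Nonempty ∧ s ⊆ C ∧ ∀ x ∈ s, ∀ y ∈ s, dist x y ≤ d

variable {R E : Type*} [Ring R]

lemma subdivision_flag_mem (l : List E) :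
    subdivision R (fun l : List E => {x | x ∈ l}) (simplex R l) ∈
      supportedOn R (fun w => w.Pairwise (· ⊇ ·) ∧ ∀ s ∈ w, s.Nonempty ∧ s ⊆ {x | x ∈ l}) := by
  refine subdivision_simplex_mem (R := R)
    (P := fun l w => w.Pairwise (· ⊇ ·) ∧ ∀ s ∈ w, s.Nonempty ∧ s ⊆ {x | x ∈ l}) (by simp) ?_ l
  rintro l l' w hl hfacet ⟨hw, hsub⟩
  have hsub' : ∀ s ∈ w, s ⊆ {x | x ∈ l} := fun s hs x hx => hfacet.1.subset ((hsub s hs).2 hx)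
  exact ⟨List.pairwise_cons.2 ⟨hsub', hw⟩, List.forall_mem_cons.2
    ⟨⟨List.exists_mem_of_ne_nil l hl, subset_rfl⟩, fun s hs => ⟨(hsub s hs).1, hsub' s hs⟩⟩⟩

variable [NormedAddCommGroup E] [NormedSpace ℝ E]

variable (R E) in
/-- Iterated barycentric subdivision, in which the last subdivision records a simplex as the flag
of the vertex sets of its faces. -/
noncomputable def flagSubdivision (N : ℕ) : ListChain R E →ₗ[R] ListChain R (Set E) :=
  subdivision R (fun l => {x | x ∈ l}) ∘ₗ (subdivision R barycentre) ^ N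

lemma flagSubdivision_succ (N : ℕ) (c : ListChain R E) :
    flagSubdivision R E (N + 1) c = flagSubdivision R E N (subdivision R barycentre c) := by
  rw [flagSubdivision, pow_succ]
  rfl

lemma flagSubdivision_simplex_nil (N : ℕ) :
    flagSubdivision R E N (simplex R []) = simplex R [] := by
  induction N with
  | zero => exact subdivision_simplex_nil _
  | succ N ih => rw [flagSubdivision_succ, subdivision_simplex_nil, ih]

lemma boundary_flagSubdivision (N : ℕ) (c : ListChain R E) :
    boundary R (flagSubdivision R E N c) = flagSubdivision R E N (boundary R c) := by
  induction N generalizing c with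
  | zero => exact boundary_subdivision _ _
  | succ N ih => rw [flagSubdivision_succ, flagSubdivision_succ, ih, boundary_subdivision]

lemma flagSubdivision_map (N : ℕ) (f : E →ₗ[ℝ] E) (c : ListChain R E) :
    flagSubdivision R E N (map R f c) = map R (f '' ·) (flagSubdivision R E N c) := by
  induction N generalizing c with
  | zero => exact subdivision_map (fun l => by ext x; simp) c
  | succ N ih =>
    rw [flagSubdivision_succ, flagSubdivision_succ, subdivision_map (barycentre_map f), ih]

lemma flagSubdivision_mem {M : ℕ} {C : Set E} (hC : Convex ℝ C) (N : ℕ) {l : List E}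
    (hM : l.length ≤ M) (hl : ∀ x ∈ l, x ∈ C) {d : ℝ} (hd : ∀ x ∈ l, ∀ y ∈ l, dist x y ≤ d) :
    flagSubdivision R E N (simplex R l) ∈
      supportedOn R (IsFlagIn C ((1 - (M : ℝ)⁻¹) ^ N * d)) := by
  induction N generalizing l d with
  | zero =>
    refine supportedOn_mono (fun w hw => ⟨hw.1, fun s hs => ⟨(hw.2 s hs).1, ?_, ?_⟩⟩)
      (subdivision_flag_mem l)
    · exact fun x hx => hl x ((hw.2 s hs).2 hx)
    · rw [pow_zero, one_mul]
      exact fun x hx y hy => hd x ((hw.2 s hs).2 hx) y ((hw.2 s hs).2 hy)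
  | succ N ih =>
    rw [flagSubdivision_succ, pow_succ, mul_assoc]
    refine apply_mem_of_simplex (fun w hw => ?_) (subdivision_barycentre_mem hM)
    exact ih (hw.1.trans_le hM) (fun x hx => convexHull_min hl hC (hw.2.1 x hx)) (hw.2.2 d hd)

end Flags

end ListChain

namespace JoinVertex

open ListChain

variable {p : ℕ} {ι : Type*} {K : ℕ}

section Face

/-- The deck transformation of the affine realisation of the join. -/
def translate : (JoinVertex p ι K → ℝ) →ₗ[ℝ] (JoinVertex p ι K → ℝ) :=
  LinearMap.funLeft ℝ ℝ shift.symm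

lemma translate_apply (v : JoinVertex p ι K → ℝ) (x : JoinVertex p ι K) :
    translate v x = v (shift.symm x) := rfl

lemma translate_single [DecidableEq ι] (x : JoinVertex p ι K) :
    translate (Pi.single x 1) = Pi.single (shift x) (1 : ℝ) := by
  funext y
  simp only [translate_apply, Pi.single_apply, Equiv.symm_apply_eq]

variable [NeZero p] [Fintype ι]

/-- The closed face of the standard simplex spanned by a set of vertices. -/
def Face (A : Set (JoinVertex p ι K)) : Set (JoinVertex p ι K → ℝ) :=
  {v | v ∈ stdSimplex ℝ (JoinVertex p ι K) ∧ ∀ x ∉ A, v x = 0}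

lemma convex_face (A : Set (JoinVertex p ι K)) : Convex ℝ (Face A) := by
  rintro v ⟨hv, hvA⟩ w ⟨hw, hwA⟩ a b ha hb hab
  exact ⟨convex_stdSimplex ℝ _ hv hw ha hb hab, fun x hx => by simp [hvA x hx, hwA x hx]⟩

lemma face_mono {A B : Set (JoinVertex p ι K)} (h : A ⊆ B) : Face A ⊆ Face B :=
  fun _ hv => ⟨hv.1, fun x hx => hv.2 x fun hA => hx (h hA)⟩

lemma single_mem_face [DecidableEq ι] {A : Set (JoinVertex p ι K)} {x : JoinVertex p ι K}
    (hx : x ∈ A) : Pi.single x 1 ∈ Face A :=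
  ⟨single_mem_stdSimplex ℝ x, fun _ hy => Pi.single_eq_of_ne (ne_of_mem_of_not_mem hx hy).symm _⟩

lemma dist_le_one_of_mem_face {A : Set (JoinVertex p ι K)} {v w : JoinVertex p ι K → ℝ}
    (hv : v ∈ Face A) (hw : w ∈ Face A) : dist v w ≤ 1 := by
  refine (dist_pi_le_iff zero_le_one).2 fun x => ?_
  have hvx := mem_Icc_of_mem_stdSimplex hv.1 x
  have hwx := mem_Icc_of_mem_stdSimplex hw.1 x
  exact (Real.dist_le_of_mem_Icc hvx hwx).trans_eq (sub_zero 1)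

end Face

section FlagLabelling

variable [NeZero p] [Fintype ι]

/-- The subdivision of a simplex of the join into flags of vertex sets. -/
noncomputable def flags [DecidableEq ι] (N : ℕ) :
    ListChain (ZMod p) (JoinVertex p ι K) →ₗ[ZMod p]
      ListChain (ZMod p) (Set (JoinVertex p ι K → ℝ)) :=
  flagSubdivision (ZMod p) _ N ∘ₗ map _ (Pi.single · 1)

lemma flags_mem [DecidableEq ι] {ε : ℝ} {M N : ℕ} (hN : (1 - (M : ℝ)⁻¹) ^ N ≤ ε)
    {l : List (JoinVertex p ι K)} (hl : l.length ≤ M) {A : Set (JoinVertex p ι K)}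
    (hA : ∀ x ∈ l, x ∈ A) :
    flags N (simplex _ l) ∈ supportedOn _ (IsFlagIn (Face A) ε) := by
  have hface : ∀ v ∈ l.map (Pi.single · 1), v ∈ Face A := by
    simp only [List.forall_mem_map]
    exact fun x hx => single_mem_face (hA x hx)
  rw [flags, LinearMap.comp_apply, map_simplex]
  refine supportedOn_mono (fun w hw => ⟨hw.1, fun s hs => ⟨(hw.2 s hs).1, (hw.2 s hs).2.1, ?_⟩⟩)
    (flagSubdivision_mem (convex_face A) N ((List.length_map _).trans_le hl) hface
      fun v hv v' hv' => dist_le_one_of_mem_face (hface v hv) (hface v' hv'))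
  exact fun x hx y hy => ((hw.2 s hs).2.2 x hx y hy).trans (by rwa [mul_one])

lemma flags_map_shift [DecidableEq ι] (N : ℕ) (c : ListChain (ZMod p) (JoinVertex p ι K)) :
    flags N (map _ shift c) = map _ (translate '' ·) (flags N c) := by
  rw [flags, LinearMap.comp_apply, LinearMap.comp_apply, ← flagSubdivision_map, map_map, map_map]
  congr 3
  funext x
  exact (translate_single x).symm

/-- A labelling of the subsets of the realisation that is equivariant, sends fine flags to simplices
and is compatible with the right sphere. -/
structure IsFlagLabelling (ε : ℝ) (lab : Set (JoinVertex p ι K → ℝ) → ZMod p ⊕ Fin (K + 1)) :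
    Prop where
  map_translate : ∀ c s, s.Nonempty → s ⊆ Face (cellVertices c) →
    lab (translate '' s) = labelShift (lab s)
  inBoundaryJoin : ∀ c w, IsFlagIn (Face (cellVertices c)) ε w → InBoundaryJoin (w.map lab)
  mem_of_subset_face : ∀ c s J, s.Nonempty → s ⊆ Face (cellVertices c) → s ⊆ Face (.inr '' J) →
    lab s ∈ Sum.inr '' J

lemma IsFlagLabelling.map_flags_mem [DecidableEq ι] {ε : ℝ}
    {lab : Set (JoinVertex p ι K → ℝ) → ZMod p ⊕ Fin (K + 1)} (hlab : IsFlagLabelling ε lab)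
    {M N : ℕ} (hN : (1 - (M : ℝ)⁻¹) ^ N ≤ ε) {l : List (JoinVertex p ι K)} (hl : l.length ≤ M)
    {c : Cell p ι K} (hc : ∀ x ∈ l, x ∈ cellVertices c) (hr : ∀ x ∈ l, x.isRight) :
    map _ lab (flags N (simplex _ l)) ∈ supportedOn _ (· ⊆ l.map label) := by
  have himage : .inr '' {j | .inr j ∈ l} ⊆ cellVertices c :=
    Set.image_subset_iff.2 fun j hj => hc _ hj
  have hmem : ∀ x ∈ l, x ∈ (.inr '' {j | .inr j ∈ l} : Set (JoinVertex p ι K)) := by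
    rintro (x | j) hx
    exacts [by simpa using hr _ hx, ⟨j, hx, rfl⟩]
  refine map_mem lab (fun w hw y hy => ?_) (flags_mem hN hl hmem)
  obtain ⟨s, hs, rfl⟩ := List.mem_map.1 hy
  obtain ⟨hs0, hsF, -⟩ := hw.2 s hs
  obtain ⟨j, hj, hjs⟩ := hlab.mem_of_subset_face c s _ hs0 (hsF.trans (face_mono himage)) hsF
  exact List.mem_map.2 ⟨.inr j, hj, hjs⟩

theorem IsFlagLabelling.exists_joinCochain_ne_zero (hp : 2 ≤ p) {m : ℕ}
    (hm : Fintype.card ι = m + 1) {ε : ℝ} (hε : 0 < ε)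
    {lab : Set (JoinVertex p ι K → ℝ) → ZMod p ⊕ Fin (K + 1)} (hlab : IsFlagLabelling ε lab) :
    ∃ c w, IsFlagIn (Face (cellVertices c)) ε w ∧
      joinCochain (lensCochain (p := p) m) (w.map lab) ≠ 0 := by
  classical
  set M := 2 * Fintype.card ι + K
  obtain ⟨N, hN⟩ : ∃ N : ℕ, (1 - (M : ℝ)⁻¹) ^ N < ε := by
    have hMpos : (0 : ℝ) < (M : ℝ)⁻¹ := inv_pos.2 (by exact_mod_cast (by omega : 0 < M))
    exact exists_pow_lt_of_lt_one hε (by linarith)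
  have hflags : ∀ l : List (JoinVertex p ι K), IsSimplex l → ∃ c,
      flags N (simplex _ l) ∈ supportedOn _ (IsFlagIn (Face (cellVertices c)) ε) :=
    fun l hl => hl.2.2.imp fun c hc => flags_mem hN.le hl.2.1 hc
  have hshift : ∀ l : List (JoinVertex p ι K), IsSimplex l →
      (map _ lab ∘ₗ flags N) (simplex _ (l.map shift)) =
        map _ labelShift ((map _ lab ∘ₗ flags N) (simplex (ZMod p) l)) := by
    intro l hl
    obtain ⟨c, hc⟩ := hflags l hl
    rw [LinearMap.comp_apply, LinearMap.comp_apply, ← map_simplex, flags_map_shift, map_map,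
      map_map]
    refine eqOn_supportedOn (fun w hw => ?_) hc
    rw [map_simplex, map_simplex]
    exact congrArg (simplex _) (List.map_congr_left fun s hs =>
      hlab.map_translate c s (hw.2 s hs).1 (hw.2 s hs).2.1)
  obtain ⟨l, hl, hne⟩ := exists_isSimplex_apply_not_mem (θ := map _ lab ∘ₗ flags N) hp hm
    (by simp [flags, flagSubdivision_simplex_nil])
    (fun c => by simp [flags, ← map_boundary, boundary_flagSubdivision]) hshift
    (fun l hl => (hflags l hl).elim fun c hc => map_mem lab (hlab.inBoundaryJoin c) hc)
    (fun l hl hr => hl.2.2.elim fun c hc => hlab.map_flags_mem hN.le hl.2.1 hc hr)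
  obtain ⟨c, hc⟩ := hflags l hl
  by_contra! hzero
  exact hne (map_mem lab (hzero c) hc)

end FlagLabelling

end JoinVertex

/-- A value related by `R` to an element of its domain, where the latter is chosen depending on the
domain only. -/
noncomputable def pickValue {A G : Type*} [Nonempty G] (R : A → G → Prop) : G :=
  Classical.epsilon fun g => ∃ h : {a | ∃ g, R a g}.Nonempty, R h.some g

lemma pickValue_spec {A G : Type*} [Nonempty G] {R : A → G → Prop}
    (h : {a | ∃ g, R a g}.Nonempty) : R h.some (pickValue R) := by
  obtain ⟨g, hg⟩ := h.some_mem
  exact (Classical.epsilon_spec (p := fun g => ∃ h : {a | ∃ g, R a g}.Nonempty, R h.some g)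
    ⟨g, h, hg⟩).2

lemma pickValue_eq {A G : Type*} [Nonempty G] {R R' : A → G → Prop} {φ : G → G}
    (hdom : {a | ∃ g, R' a g} = {a | ∃ g, R a g}) (h : {a | ∃ g, R a g}.Nonempty)
    (hφ : ∀ a g, R a g → R' a (φ g)) (hR' : ∀ a g g', R' a g → R' a g' → g = g') :
    pickValue R' = φ (pickValue R) := by
  have h' : {a | ∃ g, R' a g}.Nonempty := hdom ▸ h
  have hsome : h'.some = h.some := by congr 1
  exact hR' h'.some _ _ (pickValue_spec h') (hsome ▸ hφ _ _ (pickValue_spec h))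

lemma exists_lebesgue_number {X : Type*} [PseudoMetricSpace X] {K S : Set X} (hK : IsCompact K)
    {G : Set X → Prop} (h : ∀ x ∈ K, ∃ U, G U ∧ U ∈ 𝓝[S] x) :
    ∃ δ > 0, ∀ x ∈ K, ∃ U, G U ∧ ∀ y ∈ S, dist y x < δ → y ∈ U := by
  choose! U hG hU using h
  choose! T hT hTU using fun x hx => mem_nhdsWithin_iff_exists_mem_nhds_inter.1 (hU x hx)
  obtain ⟨δ, hδ, hball⟩ := lebesgue_number_lemma_of_metric (c := fun x : K => interior (T x)) hK
    (fun _ => isOpen_interior)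
    fun x hx => Set.mem_iUnion.2 ⟨⟨x, hx⟩, mem_interior_iff_mem_nhds.2 (hT x hx)⟩
  refine ⟨δ, hδ, fun x hx => ?_⟩
  obtain ⟨z, hz⟩ := hball x hx
  exact ⟨U z, hG z z.2, fun y hyS hy => hTU z z.2 ⟨interior_subset (hz hy), hyS⟩⟩

namespace JoinVertex

open ListChain

variable {p : ℕ} {ι : Type*} {K : ℕ}

section Polyhedron

/-- The join coordinate of a point of the realisation: `0` on the join of circles and `1` on the
boundary of the simplex. -/
def rightMass (v : JoinVertex p ι K → ℝ) : ℝ := ∑ j, v (.inr j)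

lemma continuous_rightMass : Continuous (rightMass (p := p) (ι := ι) (K := K)) := by
  unfold rightMass
  fun_prop

lemma rightMass_translate (v : JoinVertex p ι K → ℝ) : rightMass (translate v) = rightMass v := rfl

variable [NeZero p] [Fintype ι]

variable (p ι K) in
/-- The affine realisation of the join. -/
def polyhedron : Set (JoinVertex p ι K → ℝ) := ⋃ c, Face (cellVertices c)

lemma rightMass_le_add (v w : JoinVertex p ι K → ℝ) :
    rightMass v ≤ rightMass w + (K + 1) * dist v w := by
  have hsum : ∑ j : Fin (K + 1), (v (.inr j) - w (.inr j)) ≤ (K + 1) * dist v w := by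
    refine (Finset.sum_le_card_nsmul _ _ (dist v w) fun j _ => ?_).trans_eq (by simp)
    exact (le_abs_self _).trans (dist_le_pi_dist v w (.inr j))
  rw [Finset.sum_sub_distrib] at hsum
  exact sub_le_iff_le_add'.1 hsum

lemma sum_inl_add_rightMass {A : Set (JoinVertex p ι K)} {v : JoinVertex p ι K → ℝ}
    (hv : v ∈ Face A) : ∑ x, v (.inl x) + rightMass v = 1 := by
  rw [← hv.1.2, Fintype.sum_sum_type, rightMass]

lemma rightMass_eq_one {J : Set (Fin (K + 1))} {v : JoinVertex p ι K → ℝ}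
    (hv : v ∈ Face (.inr '' J)) : rightMass v = 1 := by
  rw [← sum_inl_add_rightMass hv, Finset.sum_eq_zero fun x _ => hv.2 _ (by simp), zero_add]

lemma isCompact_face (A : Set (JoinVertex p ι K)) : IsCompact (Face A) := by
  have hclosed : IsClosed {v : JoinVertex p ι K → ℝ | ∀ x ∉ A, v x = 0} := by
    simp only [Set.ofPred_forall]
    exact isClosed_biInter fun x _ => isClosed_eq (continuous_apply x) continuous_const
  exact (isCompact_stdSimplex ℝ _).inter_right hclosed

lemma face_cellVertices_subset (c : Cell p ι K) : Face (cellVertices c) ⊆ polyhedron p ι K :=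
  Set.subset_iUnion (fun c : Cell p ι K => Face (cellVertices c)) c

lemma isCompact_polyhedron : IsCompact (polyhedron p ι K) := by
  classical exact isCompact_iUnion fun c => isCompact_face (cellVertices c)

lemma translate_mem_face {c : Cell p ι K} {v : JoinVertex p ι K → ℝ}
    (hv : v ∈ Face (cellVertices c)) :
    translate v ∈ Face (cellVertices (c.1 + 1, c.2)) := by
  refine ⟨⟨fun x => hv.1.1 _, ?_⟩, fun x hx => hv.2 _ fun h => hx ?_⟩
  · rw [← hv.1.2]
    exact Equiv.sum_comp shift.symm v
  · obtain ⟨y, rfl⟩ := shift.surjective x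
    rw [Equiv.symm_apply_apply] at h
    rcases y with ⟨i, b, g⟩ | j
    · exact inl_mem_cellVertices.2
        ((congrArg (· + 1) (inl_mem_cellVertices.1 h)).trans (add_right_comm _ _ _))
    · exact h

lemma exists_inl_ne_zero {v : JoinVertex p ι K → ℝ} (hv : v ∈ polyhedron p ι K)
    (hmass : rightMass v < 1) : ∃ x, v (.inl x) ≠ 0 := by
  obtain ⟨c, hc⟩ := Set.mem_iUnion.1 hv
  by_contra! hzero
  have hsum := sum_inl_add_rightMass hc
  rw [Finset.sum_eq_zero fun x _ => hzero x, zero_add] at hsum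
  exact hmass.ne hsum

end Polyhedron

section Label

variable {J : Type*}

variable (O : J → ZMod p → Set (JoinVertex p ι K → ℝ))
  (Φ : (JoinVertex p ι K → ℝ) → Fin (K + 1) → ℝ)

/-- The sets labelled by an element of `ZMod p`. -/
def IsLeft (s : Set (JoinVertex p ι K → ℝ)) : Prop := ∃ z ∈ s, rightMass z < 1 / 2

open Classical in
/-- The `ZMod p`-valued label of a set: read off a member of one of the families `O i` that contains
the set if there is one, and off a vertex of a circle otherwise. -/
noncomputable def groupLabel (s : Set (JoinVertex p ι K → ℝ)) : ZMod p :=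
  if ∃ i g, s ⊆ O i g then pickValue fun i g => s ⊆ O i g
  else pickValue fun (q : ι × Bool) g => ∃ z ∈ s, z (.inl (q.1, q.2, g)) ≠ 0

/-- A coordinate at which a vector is maximal. -/
noncomputable def argmax (u : Fin (K + 1) → ℝ) : Fin (K + 1) := (Finite.exists_max u).choose

/-- The label in the boundary of the simplex: a vertex whose open star meets the image of `s`. -/
noncomputable def rightLabel (s : Set (JoinVertex p ι K → ℝ)) : Fin (K + 1) :=
  Classical.epsilon (· ∈ (fun z => argmax (Φ z)) '' s)

open Classical in
/-- The labelling of small sets induced by an equivariant map of joins. -/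
noncomputable def joinLabel (s : Set (JoinVertex p ι K → ℝ)) : ZMod p ⊕ Fin (K + 1) :=
  if IsLeft s then .inl (groupLabel O s) else .inr (rightLabel Φ s)

variable {O Φ} {s t : Set (JoinVertex p ι K → ℝ)}

lemma le_argmax (u : Fin (K + 1) → ℝ) (i : Fin (K + 1)) : u i ≤ u (argmax u) :=
  (Finite.exists_max u).choose_spec i

lemma exists_argmax_eq_rightLabel (hs : s.Nonempty) : ∃ z ∈ s, argmax (Φ z) = rightLabel Φ s :=
  Classical.epsilon_spec (hs.image fun z => argmax (Φ z))

lemma isRight_joinLabel : (joinLabel O Φ s).isRight ↔ ¬ IsLeft s := by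
  rw [joinLabel]
  split_ifs with h <;> simp [h]

lemma joinLabel_eq_inr {j : Fin (K + 1)} :
    joinLabel O Φ s = .inr j ↔ ¬ IsLeft s ∧ rightLabel Φ s = j := by
  rw [joinLabel]
  split_ifs with h <;> simp [h]

lemma IsLeft.mono (h : IsLeft s) (hst : s ⊆ t) : IsLeft t := h.imp fun _ hz => ⟨hst hz.1, hz.2⟩

lemma one_half_le_rightMass (h : ¬ IsLeft s) {z : JoinVertex p ι K → ℝ} (hz : z ∈ s) :
    1 / 2 ≤ rightMass z :=
  not_lt.1 fun hlt => h ⟨z, hz, hlt⟩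

lemma isLeft_translate_image : IsLeft (translate '' s) ↔ IsLeft s := by
  simp only [IsLeft, Set.exists_mem_image, rightMass_translate]

lemma exists_translate_image_ne_zero {q : ι × Bool} {g : ZMod p} :
    (∃ z ∈ translate '' s, z (.inl (q.1, q.2, g + 1)) ≠ 0) ↔
      ∃ z ∈ s, z (.inl (q.1, q.2, g)) ≠ 0 := by
  have hshift : (shift (K := K)).symm (.inl (q.1, q.2, g + 1)) = .inl (q.1, q.2, g) := by
    rw [Equiv.symm_apply_eq]
    rfl
  simp only [Set.exists_mem_image, translate_apply, hshift]

lemma setOf_exists_add_one {A : Type*} {R R' : A → ZMod p → Prop}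
    (h : ∀ {a g}, R' a (g + 1) ↔ R a g) : {a | ∃ g, R' a g} = {a | ∃ g, R a g} := by
  ext a
  exact (((Equiv.addRight (1 : ZMod p)).exists_congr_left).trans
    (exists_congr fun g => by simp [← h])).symm

lemma leftsFirst_map_joinLabel {w : List (Set (JoinVertex p ι K → ℝ))} (hw : w.Pairwise (· ⊇ ·)) :
    LeftsFirst (w.map (joinLabel O Φ)) :=
  List.pairwise_map.2 <| hw.imp fun hst hs =>
    isRight_joinLabel.2 fun hleft => isRight_joinLabel.1 hs (hleft.mono hst)

lemma lefts_map_joinLabel [DecidablePred (IsLeft (p := p) (ι := ι) (K := K))]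
    (w : List (Set (JoinVertex p ι K → ℝ))) :
    lefts (w.map (joinLabel O Φ)) = (w.filter (IsLeft ·)).map (groupLabel O) := by
  induction w with
  | nil => rfl
  | cons s w ih => by_cases h : IsLeft s <;> simp [joinLabel, h, ih]

lemma mem_rights {A B : Type*} {l : List (A ⊕ B)} {b : B} : b ∈ rights l ↔ .inr b ∈ l := by
  simp [rights, List.mem_filterMap, Sum.getRight?_eq_some_iff]

end Label

section JoinRetraction

variable [NeZero p] [Fintype ι] {J : Type*}

/-- Data encoding an equivariant map from the join to the join of `J` copies of `ZMod p` with the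
boundary of the simplex. Where the join coordinate is at least `1 / 2`, the map `Φ` gives the
coordinate in the latter up to radial projection. Where it is between `1 / 2` and `5 / 8`, the
equivariant families `O i` of disjoint open sets cover the points at which the last coordinate of
`Φ` is not the strict maximum. -/
structure IsJoinRetraction (O : J → ZMod p → Set (JoinVertex p ι K → ℝ))
    (Φ : (JoinVertex p ι K → ℝ) → Fin (K + 1) → ℝ) : Prop where
  mem_nhdsWithin : ∀ i g, ∀ v ∈ polyhedron p ι K, v ∈ O i g → O i g ∈ 𝓝[polyhedron p ι K] v
  eq_of_mem : ∀ i g g' v, v ∈ O i g → v ∈ O i g' → g = g'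
  translate_mem : ∀ i g, ∀ v ∈ polyhedron p ι K, translate v ∈ O i (g + 1) ↔ v ∈ O i g
  map_translate : ∀ v ∈ polyhedron p ι K, Φ (translate v) = Φ v
  continuousOn : ContinuousOn Φ {v ∈ polyhedron p ι K | 1 / 2 ≤ rightMass v}
  exists_lt : ∀ v ∈ polyhedron p ι K, 1 / 2 ≤ rightMass v → ∃ i j, Φ v i < Φ v j
  mem_or_lt_last : ∀ v ∈ polyhedron p ι K, 1 / 2 ≤ rightMass v → rightMass v ≤ 5 / 8 →
    (∃ i g, v ∈ O i g) ∨ ∀ j ≠ Fin.last K, Φ v j < Φ v (Fin.last K)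
  mem_of_isMax : ∀ A, ∀ v ∈ polyhedron p ι K, v ∈ Face (.inr '' A) →
    ∀ i, (∀ j, Φ v j ≤ Φ v i) → i ∈ A

variable {O : J → ZMod p → Set (JoinVertex p ι K → ℝ)}
  {Φ : (JoinVertex p ι K → ℝ) → Fin (K + 1) → ℝ} {s t : Set (JoinVertex p ι K → ℝ)}

section Equivariance

lemma IsJoinRetraction.translate_image_subset (h : IsJoinRetraction O Φ) (hs : s ⊆ polyhedron p ι K)
    {i : J} {g : ZMod p} : translate '' s ⊆ O i (g + 1) ↔ s ⊆ O i g := by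
  rw [Set.image_subset_iff]
  exact forall₂_congr fun z hz => h.translate_mem i g z (hs hz)

lemma eq_of_inl_ne_zero {c : Cell p ι K} (hs : s ⊆ Face (cellVertices c)) {q : ι × Bool}
    {g g' : ZMod p} (h : ∃ z ∈ s, z (.inl (q.1, q.2, g)) ≠ 0)
    (h' : ∃ z ∈ s, z (.inl (q.1, q.2, g')) ≠ 0) : g = g' := by
  obtain ⟨z, hz, hne⟩ := h
  obtain ⟨z', hz', hne'⟩ := h'
  have hg := inl_mem_cellVertices.1 (not_imp_comm.1 ((hs hz).2 _) hne)
  have hg' := inl_mem_cellVertices.1 (not_imp_comm.1 ((hs hz').2 _) hne')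
  exact hg.trans hg'.symm

lemma IsJoinRetraction.groupLabel_translate_image (h : IsJoinRetraction O Φ) {c : Cell p ι K}
    (hs : s ⊆ Face (cellVertices c)) (hleft : IsLeft s) :
    groupLabel O (translate '' s) = groupLabel O s + 1 := by
  have hsub : ∀ {i g}, translate '' s ⊆ O i (g + 1) ↔ s ⊆ O i g :=
    h.translate_image_subset (hs.trans (face_cellVertices_subset c))
  have hdom : {i | ∃ g, translate '' s ⊆ O i g} = {i | ∃ g, s ⊆ O i g} :=
    setOf_exists_add_one hsub
  have hcond : (∃ i g, translate '' s ⊆ O i g) ↔ ∃ i g, s ⊆ O i g :=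
    exists_congr fun i => Set.ext_iff.1 hdom i
  obtain ⟨z, hz, hmass⟩ := hleft
  by_cases hcover : ∃ i g, s ⊆ O i g
  · rw [groupLabel, groupLabel, if_pos (hcond.2 hcover), if_pos hcover]
    refine pickValue_eq hdom hcover (φ := (· + 1)) (fun i g => hsub.2) fun i g g' hg hg' => ?_
    exact h.eq_of_mem i g g' _ (hg (Set.mem_image_of_mem _ hz)) (hg' (Set.mem_image_of_mem _ hz))
  · rw [groupLabel, groupLabel, if_neg (hcond.not.2 hcover), if_neg hcover]
    obtain ⟨x, hx⟩ := exists_inl_ne_zero (face_cellVertices_subset c (hs hz))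
      (hmass.trans (by norm_num))
    have htrans : translate '' s ⊆ Face (cellVertices (c.1 + 1, c.2)) :=
      Set.image_subset_iff.2 fun z hz => translate_mem_face (hs hz)
    exact pickValue_eq (setOf_exists_add_one exists_translate_image_ne_zero)
      ⟨(x.1, x.2.1), x.2.2, z, hz, hx⟩ (φ := (· + 1))
      (fun q g => exists_translate_image_ne_zero.2) fun q g g' => eq_of_inl_ne_zero htrans

lemma IsJoinRetraction.rightLabel_translate_image (h : IsJoinRetraction O Φ)
    (hs : s ⊆ polyhedron p ι K) : rightLabel Φ (translate '' s) = rightLabel Φ s := by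
  rw [rightLabel, rightLabel, Set.image_image]
  congr 1
  funext j
  rw [Set.image_congr fun z hz => by rw [h.map_translate z (hs hz)]]

lemma IsJoinRetraction.joinLabel_translate_image (h : IsJoinRetraction O Φ) {c : Cell p ι K}
    (hs : s ⊆ Face (cellVertices c)) :
    joinLabel O Φ (translate '' s) = labelShift (joinLabel O Φ s) := by
  by_cases hleft : IsLeft s
  · rw [joinLabel, joinLabel, if_pos (isLeft_translate_image.2 hleft), if_pos hleft,
      h.groupLabel_translate_image hs hleft]
    rfl
  · rw [joinLabel, joinLabel, if_neg (isLeft_translate_image.not.2 hleft), if_neg hleft,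
      h.rightLabel_translate_image (hs.trans (face_cellVertices_subset c))]
    rfl

end Equivariance

lemma IsJoinRetraction.joinLabel_mem_of_subset_face (h : IsJoinRetraction O Φ)
    {A : Set (Fin (K + 1))} (hs : s ⊆ polyhedron p ι K) (hne : s.Nonempty)
    (hsA : s ⊆ Face (.inr '' A)) : joinLabel O Φ s ∈ Sum.inr '' A := by
  have hright : ¬ IsLeft s := by
    rintro ⟨z, hz, hmass⟩
    rw [rightMass_eq_one (hsA hz)] at hmass
    norm_num at hmass
  obtain ⟨z, hz, hlabel⟩ := exists_argmax_eq_rightLabel (Φ := Φ) hne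
  refine ⟨rightLabel Φ s, ?_, (joinLabel_eq_inr.2 ⟨hright, rfl⟩).symm⟩
  exact hlabel ▸ h.mem_of_isMax A z (hs hz) (hsA hz) _ (le_argmax _)

section Mesh

/-- A bound on the diameter of sets for which `joinLabel` is well behaved. -/
structure IsMeshBound (O : J → ZMod p → Set (JoinVertex p ι K → ℝ))
    (Φ : (JoinVertex p ι K → ℝ) → Fin (K + 1) → ℝ) (ε : ℝ) : Prop where
  mul_le : (K + 1) * ε ≤ 1 / 8
  exists_forall_exists_lt : ∀ s ⊆ polyhedron p ι K, s.Nonempty → (∀ x ∈ s, ∀ y ∈ s, dist x y ≤ ε) →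
    ¬ IsLeft s → ∃ j, ∀ y ∈ s, ∃ i, Φ y j < Φ y i
  subset_or_lt_last : ∀ s ⊆ polyhedron p ι K, (∀ x ∈ s, ∀ y ∈ s, dist x y ≤ ε) → ∀ x ∈ s,
    1 / 2 ≤ rightMass x → rightMass x ≤ 5 / 8 →
      (∃ i g, s ⊆ O i g) ∨ ∀ j ≠ Fin.last K, Φ x j < Φ x (Fin.last K)

lemma isCompact_one_half_le : IsCompact {v ∈ polyhedron p ι K | 1 / 2 ≤ rightMass v} :=
  isCompact_polyhedron.inter_right (isClosed_le continuous_const continuous_rightMass)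

lemma IsJoinRetraction.exists_lebesgue_number_lt (h : IsJoinRetraction O Φ) :
    ∃ δ > 0, ∀ x ∈ {v ∈ polyhedron p ι K | 1 / 2 ≤ rightMass v}, ∃ j,
      ∀ y ∈ {v ∈ polyhedron p ι K | 1 / 2 ≤ rightMass v}, dist y x < δ → ∃ i, Φ y j < Φ y i := by
  have hlocal : ∀ x ∈ {v ∈ polyhedron p ι K | 1 / 2 ≤ rightMass v}, ∃ U,
      (∃ j, ∀ y ∈ U, ∃ i, Φ y j < Φ y i) ∧
        U ∈ 𝓝[{v ∈ polyhedron p ι K | 1 / 2 ≤ rightMass v}] x := by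
    intro x hx
    obtain ⟨j, i, hij⟩ := h.exists_lt x hx.1 hx.2
    have hcont := continuousWithinAt_pi.1 (h.continuousOn x hx)
    exact ⟨{y | Φ y j < Φ y i}, ⟨j, fun y hy => ⟨i, hy⟩⟩, (hcont j).eventually_lt (hcont i) hij⟩
  obtain ⟨δ, hδ, hball⟩ := exists_lebesgue_number isCompact_one_half_le hlocal
  refine ⟨δ, hδ, fun x hx => ?_⟩
  obtain ⟨U, ⟨j, hj⟩, hU⟩ := hball x hx
  exact ⟨j, fun y hy hyx => hj y (hU y hy hyx)⟩

lemma IsJoinRetraction.exists_lebesgue_number_mem (h : IsJoinRetraction O Φ) :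
    ∃ δ > 0, ∀ x ∈ polyhedron p ι K, 1 / 2 ≤ rightMass x → rightMass x ≤ 5 / 8 →
      (∃ i g, ∀ y ∈ polyhedron p ι K, dist y x < δ → y ∈ O i g) ∨
        ∀ j ≠ Fin.last K, Φ x j < Φ x (Fin.last K) := by
  set P := polyhedron p ι K
  have hK : IsCompact {v ∈ P | 1 / 2 ≤ rightMass v ∧ rightMass v ≤ 5 / 8} :=
    isCompact_polyhedron.inter_right ((isClosed_le continuous_const continuous_rightMass).inter
      (isClosed_le continuous_rightMass continuous_const))
  have hlocal : ∀ x ∈ {v ∈ P | 1 / 2 ≤ rightMass v ∧ rightMass v ≤ 5 / 8}, ∃ U,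
      ((∃ i g, U ⊆ O i g) ∨ ∀ y ∈ U, 1 / 2 ≤ rightMass y → ∀ j ≠ Fin.last K,
        Φ y j < Φ y (Fin.last K)) ∧ U ∈ 𝓝[P] x := by
    rintro x ⟨hxP, hx, hx'⟩
    rcases h.mem_or_lt_last x hxP hx hx' with ⟨i, g, hxO⟩ | hlast
    · exact ⟨O i g, .inl ⟨i, g, subset_rfl⟩, h.mem_nhdsWithin i g x hxP hxO⟩
    · have hcont := continuousWithinAt_pi.1 (h.continuousOn x ⟨hxP, hx⟩)
      refine ⟨_, .inr fun y hy => hy, eventually_nhdsWithin_iff.2 ?_⟩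
      have hlt : ∀ᶠ y in 𝓝[{v ∈ P | 1 / 2 ≤ rightMass v}] x,
          ∀ j ≠ Fin.last K, Φ y j < Φ y (Fin.last K) :=
        Filter.eventually_all.2 fun j => Filter.eventually_imp_distrib_left.2 fun hj =>
          (hcont j).eventually_lt (hcont _) (hlast j hj)
      exact (eventually_nhdsWithin_iff.1 hlt).mono fun y hy hyP hmass => hy ⟨hyP, hmass⟩
  obtain ⟨δ, hδ, hball⟩ := exists_lebesgue_number hK hlocal
  refine ⟨δ, hδ, fun x hxP hx hx' => ?_⟩
  obtain ⟨U, ⟨i, g, hU⟩ | hU, hδU⟩ := hball x ⟨hxP, hx, hx'⟩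
  · exact .inl ⟨i, g, fun y hy hyx => hU (hδU y hy hyx)⟩
  · exact .inr (hU x (hδU x hxP (by rwa [dist_self])) hx)

lemma IsJoinRetraction.exists_isMeshBound (h : IsJoinRetraction O Φ) :
    ∃ ε > 0, IsMeshBound O Φ ε := by
  obtain ⟨δ, hδ, hlt⟩ := h.exists_lebesgue_number_lt
  obtain ⟨δ', hδ', hmem⟩ := h.exists_lebesgue_number_mem
  have hK : (0 : ℝ) < K + 1 := by positivity
  obtain ⟨ε, hε, hεmin⟩ := exists_between (show 0 < min (1 / 8 / ((K : ℝ) + 1)) (min δ δ') by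
    positivity)
  obtain ⟨hεK, hεδ, hεδ'⟩ : ε < 1 / 8 / ((K : ℝ) + 1) ∧ ε < δ ∧ ε < δ' := by
    simpa only [lt_min_iff] using hεmin
  refine ⟨ε, hε, (lt_div_iff₀' hK).1 hεK |>.le, ?_, ?_⟩
  · rintro s hsP ⟨x, hx⟩ hdiam hright
    obtain ⟨j, hj⟩ := hlt x ⟨hsP hx, one_half_le_rightMass hright hx⟩
    exact ⟨j, fun y hy => hj y ⟨hsP hy, one_half_le_rightMass hright hy⟩
      ((hdiam y hy x hx).trans_lt hεδ)⟩
  · intro s hsP hdiam x hx hmass hmass'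
    refine (hmem x (hsP hx) hmass hmass').imp_left ?_
    rintro ⟨i, g, hig⟩
    exact ⟨i, g, fun y hy => hig y (hsP hy) ((hdiam y hy x hx).trans_lt hεδ')⟩

end Mesh

section Labelling

variable {ε : ℝ} {c : Cell p ι K} {w : List (Set (JoinVertex p ι K → ℝ))}

lemma IsMeshBound.exists_inr_not_mem (h : IsMeshBound O Φ ε)
    (hw : IsFlagIn (Face (cellVertices c)) ε w) : ∃ j, .inr j ∉ w.map (joinLabel O Φ) := by
  classical
  by_contra! hall
  have hright : ∀ j, ∃ s ∈ w.filter (¬ IsLeft ·), rightLabel Φ s = j := by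
    intro j
    obtain ⟨s, hs, hlabel⟩ := List.mem_map.1 (hall j)
    obtain ⟨hs', hj⟩ := joinLabel_eq_inr.1 hlabel
    exact ⟨s, List.mem_filter.2 ⟨hs, by simpa using hs'⟩, hj⟩
  obtain ⟨t, rest, hsplit⟩ : ∃ t rest, w.filter (¬ IsLeft ·) = t :: rest := by
    obtain ⟨s, hs, -⟩ := hright 0
    exact List.exists_cons_of_ne_nil (List.ne_nil_of_mem hs)
  have hrest : ∀ s ∈ w.filter (¬ IsLeft ·), s ⊆ t := by
    have hpair := hw.1.filter (¬ IsLeft ·)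
    rw [hsplit] at hpair ⊢
    exact List.forall_mem_cons.2 ⟨subset_rfl, (List.pairwise_cons.1 hpair).1⟩
  obtain ⟨htw, htright⟩ : t ∈ w ∧ ¬ IsLeft t := by
    simpa using List.mem_filter.1 (hsplit ▸ List.mem_cons_self : t ∈ w.filter (¬ IsLeft ·))
  obtain ⟨htne, htface, htdiam⟩ := hw.2 t htw
  obtain ⟨j, hj⟩ := h.exists_forall_exists_lt t (htface.trans (face_cellVertices_subset c)) htne
    htdiam htright
  obtain ⟨s, hs, rfl⟩ := hright j
  obtain ⟨z, hz, hlabel⟩ := exists_argmax_eq_rightLabel (Φ := Φ)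
    (hw.2 s (List.mem_filter.1 hs).1).1
  obtain ⟨i, hi⟩ := hj z (hrest s hs hz)
  exact (le_argmax (Φ z) i).not_gt (hlabel ▸ hi)

lemma IsJoinRetraction.isFlagLabelling (h : IsJoinRetraction O Φ) (hε : IsMeshBound O Φ ε) :
    IsFlagLabelling ε (joinLabel O Φ) where
  map_translate _ _ _ hs := h.joinLabel_translate_image hs
  inBoundaryJoin _ _ hw := ⟨leftsFirst_map_joinLabel hw.1, hε.exists_inr_not_mem hw⟩
  mem_of_subset_face c _ _ hne hs hsA :=
    h.joinLabel_mem_of_subset_face (hs.trans (face_cellVertices_subset c)) hne hsA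

end Labelling

section Vanishing

variable {ε : ℝ} {c : Cell p ι K} {w : List (Set (JoinVertex p ι K → ℝ))}

lemma IsMeshBound.exists_subset_of_isLeft (h : IsMeshBound O Φ ε)
    (hw : IsFlagIn (Face (cellVertices c)) ε w) {j : Fin K}
    (hj : .inr j.castSucc ∈ w.map (joinLabel O Φ)) (hs : s ∈ w) (hleft : IsLeft s) :
    ∃ i g, s ⊆ O i g := by
  obtain ⟨t, ht, hlabel⟩ := List.mem_map.1 hj
  obtain ⟨htright, hjt⟩ := joinLabel_eq_inr.1 hlabel
  obtain ⟨x, hxt, hx⟩ := exists_argmax_eq_rightLabel (Φ := Φ) (hw.2 t ht).1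
  have hts : t ⊆ s := by
    have hcomp : w.Pairwise fun s t => s ⊆ t ∨ t ⊆ s := hw.1.imp .inr
    have : Std.Symm fun s t : Set (JoinVertex p ι K → ℝ) => s ⊆ t ∨ t ⊆ s := ⟨fun _ _ => Or.symm⟩
    exact (hcomp.forall_of_forall (fun _ _ => .inl subset_rfl) hs ht).resolve_left
      fun hst => htright (hleft.mono hst)
  obtain ⟨z, hz, hmass⟩ := hleft
  have hclose : rightMass x ≤ 5 / 8 := by
    have hdist := (hw.2 s hs).2.2 x (hts hxt) z hz
    have := rightMass_le_add x z
    have := mul_le_mul_of_nonneg_left hdist (by positivity : (0 : ℝ) ≤ K + 1)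
    linarith [h.mul_le]
  refine (h.subset_or_lt_last s ((hw.2 s hs).2.1.trans (face_cellVertices_subset c)) (hw.2 s hs).2.2
    x (hts hxt) (one_half_le_rightMass htright hxt) hclose).resolve_right fun hlast => ?_
  refine (hlast _ ?_).not_ge (le_argmax (Φ x) (Fin.last K))
  rw [hx, hjt]
  exact j.castSucc_ne_last

lemma IsJoinRetraction.ncard_lt_ncard [Finite J] (h : IsJoinRetraction O Φ) (ht : t.Nonempty)
    (hst : t ⊆ s) (hcover : ∃ i g, s ⊆ O i g) (hne : groupLabel O s ≠ groupLabel O t) :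
    {i | ∃ g, s ⊆ O i g}.ncard < {i | ∃ g, t ⊆ O i g}.ncard := by
  have hsub : {i | ∃ g, s ⊆ O i g} ⊆ {i | ∃ g, t ⊆ O i g} := fun i => Exists.imp fun g => hst.trans
  refine Set.ncard_lt_ncard (hsub.ssubset_of_ne fun heq => hne ?_)
  rw [groupLabel, groupLabel, if_pos hcover, if_pos (show ∃ i g, t ⊆ O i g from hcover.imp hsub)]
  exact (pickValue_eq heq.symm hcover (φ := id) (fun i g => hst.trans)
    fun i g g' hg hg' => h.eq_of_mem i g g' _ (hg ht.some_mem) (hg' ht.some_mem)).symm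

lemma IsJoinRetraction.length_le [Fintype J] (h : IsJoinRetraction O Φ)
    {l : List (Set (JoinVertex p ι K → ℝ))} (hl : l.Pairwise (· ⊇ ·)) (hne : ∀ s ∈ l, s.Nonempty)
    (hcover : ∀ s ∈ l, ∃ i g, s ⊆ O i g) (hlabel : (l.map (groupLabel O)).IsChain (· ≠ ·)) :
    l.length ≤ Fintype.card J := by
  set cov : Set (JoinVertex p ι K → ℝ) → ℕ := fun s => {i | ∃ g, s ⊆ O i g}.ncard
  have hchain : (l.map cov).IsChain (· < ·) := by
    rw [List.isChain_map] at hlabel ⊢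
    refine List.isChain_iff_getElem.2 fun n hn => ?_
    exact h.ncard_lt_ncard (hne _ (List.getElem_mem _))
      (List.pairwise_iff_getElem.1 hl _ _ _ _ n.lt_succ_self)
      (hcover _ (List.getElem_mem _)) (List.isChain_iff_getElem.1 hlabel n hn)
  have hrange : ∀ n ∈ l.map cov, n ∈ Finset.Icc 1 (Fintype.card J) := by
    simp only [List.forall_mem_map, Finset.mem_Icc]
    intro s hs
    exact ⟨(Set.ncard_pos).2 (hcover s hs), (Set.ncard_le_card _).trans_eq Nat.card_eq_fintype_card⟩
  calc l.length = (l.map cov).toFinset.card := by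
        rw [List.toFinset_card_of_nodup (hchain.pairwise.imp ne_of_lt), List.length_map]
    _ ≤ (Finset.Icc 1 (Fintype.card J)).card :=
        Finset.card_le_card fun n hn => hrange n (List.mem_toFinset.1 hn)
    _ = Fintype.card J := by simp

theorem IsJoinRetraction.two_mul_card_le [Nonempty ι] [Fintype J]
    (h : IsJoinRetraction O Φ) (hp : 2 ≤ p) (hK : 1 ≤ K) :
    2 * Fintype.card ι ≤ Fintype.card J := by
  classical
  obtain ⟨m, hm⟩ : ∃ m, Fintype.card ι = m + 1 := Nat.exists_eq_succ_of_ne_zero Fintype.card_ne_zero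
  obtain ⟨ε, hε, hmesh⟩ := h.exists_isMeshBound
  obtain ⟨c, w, hw, hne⟩ := (h.isFlagLabelling hmesh).exists_joinCochain_ne_zero hp hm hε
  obtain ⟨hlen, hchain⟩ := of_lensCochain_ne_zero (left_ne_zero_of_mul hne)
  have hright : .inr (Fin.castSucc ⟨0, hK⟩) ∈ w.map (joinLabel O Φ) :=
    mem_rights.1 (not_imp_comm.1 degreeCochain_eq_zero (right_ne_zero_of_mul hne))
  rw [lefts_map_joinLabel] at hlen hchain
  rw [List.length_map] at hlen
  have hmem : ∀ s ∈ w.filter (IsLeft ·), s ∈ w ∧ IsLeft s := fun s hs => by simpa using hs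
  have hle := h.length_le (hw.1.filter _) (fun s hs => (hw.2 s (hmem s hs).1).1)
    (fun s hs => hmesh.exists_subset_of_isLeft hw hright (hmem s hs).1 (hmem s hs).2) hchain
  omega

end Vanishing

end JoinRetraction

end JoinVertex

/-- The unit sphere of a normed space. -/
abbrev UnitSphere (E : Type*) [NormedAddCommGroup E] : Type _ := Metric.sphere (0 : E) 1

section RadialProj

variable {E : Type*} [NormedAddCommGroup E] [NormedSpace ℝ E] {v : E}

open Classical in
/-- The radial projection of a normed space to its unit sphere, with the value `c` at the origin. -/
noncomputable def radialProj (c : UnitSphere E) (v : E) : UnitSphere E :=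
  if h : v = 0 then c
  else ⟨NormedSpace.normalize v, mem_sphere_zero_iff_norm.2 (NormedSpace.norm_normalize h)⟩

lemma coe_radialProj (c : UnitSphere E) (hv : v ≠ 0) : (radialProj c v : E) = ‖v‖⁻¹ • v := by
  rw [radialProj, dif_neg hv]
  rfl

lemma continuousAt_radialProj (c : UnitSphere E) (hv : v ≠ 0) : ContinuousAt (radialProj c) v := by
  rw [Topology.IsInducing.subtypeVal.continuousAt_iff]
  have hcont : ContinuousAt (fun w : E => ‖w‖⁻¹ • w) v :=
    (continuous_norm.continuousAt.inv₀ (norm_ne_zero_iff.2 hv)).smul continuousAt_id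
  refine hcont.congr ?_
  filter_upwards [isOpen_ne.mem_nhds hv] with w hw using (coe_radialProj c hw).symm

end RadialProj

section Rotate

variable {p : ℕ} [NeZero p] {ι : Type*} [Fintype ι] (ψ : ι → AddChar (ZMod p) ℂ)

lemma norm_eq_of_forall_eq_char_mul {g : ZMod p} {x y : EuclideanSpace ℂ ι}
    (h : ∀ i, y i = ψ i g * x i) : ‖y‖ = ‖x‖ := by
  simp only [EuclideanSpace.norm_eq, h, norm_mul, AddChar.norm_apply, one_mul]

/-- The diagonal action of `ZMod p` on the unit sphere of a coordinate space, with the `i`-th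
coordinate rotated through the character `ψ i`. -/
noncomputable def rotate (g : ZMod p) (x : UnitSphere (EuclideanSpace ℂ ι)) :
    UnitSphere (EuclideanSpace ℂ ι) :=
  ⟨WithLp.toLp 2 fun i => ψ i g * x.1 i, mem_sphere_zero_iff_norm.2 <|
    (norm_eq_of_forall_eq_char_mul ψ fun _ => rfl).trans (norm_eq_of_mem_sphere x)⟩

lemma rotate_apply (g : ZMod p) (x : UnitSphere (EuclideanSpace ℂ ι)) (i : ι) :
    (rotate ψ g x).1 i = ψ i g * x.1 i := rfl

end Rotate

/-- Data on a product of spaces that produces an equivariant map of joins: open sets `V i g`, for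
each `i` disjoint and permuted by the map `T` of the first factor, and a homotopy `F` of the second
projection, invariant under `T`, which ends at the constant `c` off all `V i g`. -/
structure IsCoverDeformation {p : ℕ} {J X Y : Type*} [TopologicalSpace X] [TopologicalSpace Y]
    (T : X → X) (V : J → ZMod p → Set (X × Y)) (c : Y) (F : ℝ × X × Y → Y) : Prop where
  isOpen : ∀ i g, IsOpen (V i g)
  eq_of_mem : ∀ i g g' z, z ∈ V i g → z ∈ V i g' → g = g'
  map_mem : ∀ i g x y, (T x, y) ∈ V i (g + 1) ↔ (x, y) ∈ V i g
  continuous : Continuous F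
  apply_zero : ∀ x y, F (0, x, y) = y
  apply_map : ∀ t x y, F (t, T x, y) = F (t, x, y)
  apply_one : ∀ x y, (∀ i g, (x, y) ∉ V i g) → F (1, x, y) = c

lemma eq_zero_of_mul_add_mul_eq_zero {a b : ℝ} (ha : 0 ≤ a) (hb : 0 ≤ b) {z w : ℂ} (hz : ‖z‖ = 1)
    (hw : ‖w‖ = 1) (hne : w ≠ -z) (h : a * z + b * w = 0) : a = 0 ∧ b = 0 := by
  have hneg : (a : ℂ) * z = -(b * w) := eq_neg_of_add_eq_zero_left h
  have hab : a = b := by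
    simpa [hz, hw, abs_of_nonneg ha, abs_of_nonneg hb] using congrArg norm hneg
  subst hab
  rw [← mul_add, mul_eq_zero, Complex.ofReal_eq_zero] at h
  have ha0 : a = 0 := h.resolve_right fun hzw => hne (eq_neg_of_add_eq_zero_right hzw)
  exact ⟨ha0, ha0⟩

lemma exists_norm_eq_one_ne_ne (a b : ℂ) : ∃ μ : ℂ, ‖μ‖ = 1 ∧ μ ≠ a ∧ μ ≠ b := by
  by_contra! h
  have h1 := h 1 (by simp)
  have hneg := h (-1) (by simp)
  have hI := h Complex.I (by simp)
  have hone : (1 : ℂ) ≠ -1 := by norm_num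
  have hIone : Complex.I ≠ 1 := fun h => by simpa using congrArg Complex.im h
  have hIneg : Complex.I ≠ -1 := fun h => by simpa using congrArg Complex.im h
  by_cases ha : 1 = a
  · subst ha
    exact hIneg ((hI hIone).trans (hneg hone.symm).symm)
  · have hb := h1 ha
    subst hb
    have ha' : -1 = a := by_contra fun hne => hone (hneg hne).symm
    exact hIone (hI fun hIa => hIneg (hIa.trans ha'.symm))

/-- The function that is `1` up to `5 / 8`, vanishes from `3 / 4` on and is affine in between. -/
noncomputable def cutoff (s : ℝ) : ℝ := max 0 (min 1 (6 - 8 * s))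

lemma continuous_cutoff : Continuous cutoff := by
  unfold cutoff
  fun_prop

lemma cutoff_of_le {s : ℝ} (h : s ≤ 5 / 8) : cutoff s = 1 := by
  rw [cutoff, min_eq_left (by linarith), max_eq_right zero_le_one]

lemma cutoff_of_ge {s : ℝ} (h : 3 / 4 ≤ s) : cutoff s = 0 :=
  max_eq_left ((min_le_right _ _).trans (by linarith))

namespace JoinVertex

variable {p : ℕ} {ι : Type*} {K : ℕ}

section LeftCoord

variable [NeZero p] (ψ : ι → AddChar (ZMod p) ℂ) (μ : ι → ℂ)

/-- The affine map to a coordinate space which sends the `g`-th vertices of the two kinds of the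
`i`-th circle to `ψ i g` and `μ i * ψ i g` in the `i`-th coordinate. -/
noncomputable def leftCoord (v : JoinVertex p ι K → ℝ) : EuclideanSpace ℂ ι :=
  WithLp.toLp 2 fun i =>
    ∑ g, ((v (.inl (i, false, g)) : ℂ) + v (.inl (i, true, g)) * μ i) * ψ i g

lemma leftCoord_apply (v : JoinVertex p ι K → ℝ) (i : ι) : leftCoord ψ μ v i =
    ∑ g, ((v (.inl (i, false, g)) : ℂ) + v (.inl (i, true, g)) * μ i) * ψ i g := rfl

lemma continuous_leftCoord : Continuous (leftCoord (K := K) ψ μ) := by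
  refine (PiLp.continuous_toLp 2 _).comp (continuous_pi fun i => ?_)
  exact continuous_finsetSum _ fun g _ => by fun_prop

lemma leftCoord_translate (v : JoinVertex p ι K → ℝ) (i : ι) :
    leftCoord ψ μ (translate v) i = ψ i 1 * leftCoord ψ μ v i := by
  rw [leftCoord_apply, leftCoord_apply, Finset.mul_sum, ← Equiv.sum_comp (Equiv.addRight 1)]
  refine Finset.sum_congr rfl fun g _ => ?_
  have hshift (b : Bool) : translate v (.inl (i, b, g + 1)) = v (.inl (i, b, g)) :=
    congrArg v (shift.symm_apply_apply (.inl (i, b, g)))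
  rw [Equiv.coe_addRight, hshift, hshift, (ψ i).map_add_eq_mul]
  ring

variable {ψ μ} [Fintype ι]

lemma leftCoord_apply_of_mem_face {c : Cell p ι K} {v : JoinVertex p ι K → ℝ}
    (hv : v ∈ Face (cellVertices c)) (i : ι) :
    leftCoord ψ μ v i = ψ i (c.1 i) *
      (v (.inl (i, false, c.1 i + (c.2.1 i).toNat)) * ψ i (c.2.1 i).toNat +
        v (.inl (i, true, c.1 i)) * μ i) := by
  have hzero (b : Bool) (g : ZMod p)
      (hg : g ≠ c.1 i + if b then 0 else ((c.2.1 i).toNat : ZMod p)) :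
      (v (.inl (i, b, g)) : ℂ) = 0 := by
    rw [hv.2 _ (mt inl_mem_cellVertices.1 hg), Complex.ofReal_zero]
  simp only [leftCoord_apply, add_mul, Finset.sum_add_distrib]
  rw [Finset.sum_eq_single (c.1 i + ((c.2.1 i).toNat : ZMod p))
      (fun g _ hg => by rw [hzero false g hg, zero_mul]) (by simp),
    Finset.sum_eq_single (c.1 i)
      (fun g _ hg => by rw [hzero true g (by simpa using hg), zero_mul, zero_mul]) (by simp),
    (ψ i).map_add_eq_mul]
  ring

lemma leftCoord_ne_zero (hμ : ∀ i, ‖μ i‖ = 1) (hne : ∀ i (d : Bool), μ i ≠ -ψ i d.toNat)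
    {v : JoinVertex p ι K → ℝ} (hv : v ∈ polyhedron p ι K) (hmass : rightMass v < 1) :
    leftCoord ψ μ v ≠ 0 := by
  intro hzero
  obtain ⟨⟨i, b, g⟩, hx⟩ := exists_inl_ne_zero hv hmass
  obtain ⟨c, hc⟩ := Set.mem_iUnion.1 hv
  have hi := (leftCoord_apply_of_mem_face (ψ := ψ) (μ := μ) hc i).symm
  rw [hzero, PiLp.zero_apply, mul_eq_zero] at hi
  have hψ : ψ i (c.1 i) ≠ 0 := norm_ne_zero_iff.1 (by simp)
  obtain ⟨hfalse, htrue⟩ := eq_zero_of_mul_add_mul_eq_zero (hc.1.1 _) (hc.1.1 _)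
    ((ψ i).norm_apply _) (hμ i) (hne i _) (hi.resolve_left hψ)
  have hg := inl_mem_cellVertices.1 (by_contra fun hmem => hx (hc.2 _ hmem))
  subst hg
  cases b
  · exact hx hfalse
  · exact hx (by simpa using htrue)

end LeftCoord

section RightCoord

variable {E : Type*} [NormedAddCommGroup E] [NormedSpace ℝ E] (A : E ≃L[ℝ] (Fin K → ℝ))

/-- The coordinates of a point of `E`, extended by `0` in the last place. The simplex with `K + 1`
vertices, projected along its diagonal, is a neighbourhood of the origin in these coordinates. -/
noncomputable def simplexCoord (y : E) : Fin (K + 1) → ℝ :=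
  Fin.snoc (α := fun _ => ℝ) (A y) 0

/-- The point of `E` whose coordinates differ from those of `v` by a constant. -/
noncomputable def rightCoord (v : JoinVertex p ι K → ℝ) : E :=
  A.symm fun i => v (.inr i.castSucc) - v (.inr (Fin.last K))

lemma simplexCoord_castSucc (y : E) (i : Fin K) : simplexCoord A y i.castSucc = A y i :=
  Fin.snoc_castSucc _ _ _

lemma simplexCoord_last (y : E) : simplexCoord A y (Fin.last K) = 0 :=
  Fin.snoc_last _ _

lemma continuous_simplexCoord : Continuous (simplexCoord A) :=
  A.continuous.finSnoc continuous_const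

lemma simplexCoord_smul (r : ℝ) (y : E) (j : Fin (K + 1)) :
    simplexCoord A (r • y) j = r * simplexCoord A y j := by
  cases j using Fin.lastCases with
  | last => rw [simplexCoord_last, simplexCoord_last, mul_zero]
  | cast i =>
    rw [simplexCoord_castSucc, simplexCoord_castSucc, map_smul, Pi.smul_apply, smul_eq_mul]

lemma simplexCoord_rightCoord (v : JoinVertex p ι K → ℝ) (j : Fin (K + 1)) :
    simplexCoord A (rightCoord A v) j = v (.inr j) - v (.inr (Fin.last K)) := by
  cases j using Fin.lastCases with
  | last => rw [simplexCoord_last, sub_self]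
  | cast i => rw [simplexCoord_castSucc, rightCoord, A.apply_symm_apply]

lemma exists_simplexCoord_lt {y : E} (hy : y ≠ 0) :
    ∃ i j, simplexCoord A y i < simplexCoord A y j := by
  by_contra! hle
  refine hy (A.map_eq_zero_iff.1 (funext fun i => ?_))
  rw [← simplexCoord_castSucc, Pi.zero_apply, ← simplexCoord_last A y]
  exact le_antisymm (hle _ _) (hle _ _)

lemma continuous_rightCoord : Continuous (rightCoord (p := p) (ι := ι) A) :=
  A.symm.continuous.comp (continuous_pi fun i => by fun_prop)

lemma rightCoord_ne_zero [NeZero p] [Fintype ι] {v : JoinVertex p ι K → ℝ}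
    (hv : v ∈ polyhedron p ι K) (hmass : 0 < rightMass v) : rightCoord A v ≠ 0 := by
  intro hzero
  have hlast (j : Fin (K + 1)) : v (.inr j) = v (.inr (Fin.last K)) := by
    rw [← sub_eq_zero, ← simplexCoord_rightCoord A, hzero, ← zero_smul ℝ (0 : E),
      simplexCoord_smul, zero_mul]
  obtain ⟨c, hc⟩ := Set.mem_iUnion.1 hv
  have hmissing : v (.inr c.2.2) = 0 := hc.2 _ (by rw [inr_mem_cellVertices, not_not])
  refine hmass.ne' (Finset.sum_eq_zero fun j _ => ?_)
  rw [hlast j, ← hlast c.2.2, hmissing]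

end RightCoord

end JoinVertex

namespace JoinVertex

variable {p : ℕ} [NeZero p] {ι : Type*} [Fintype ι] {K : ℕ} {J E : Type*} [NormedAddCommGroup E]
  [NormedSpace ℝ E]

lemma translate_mem_polyhedron {v : JoinVertex p ι K → ℝ} (hv : v ∈ polyhedron p ι K) :
    translate v ∈ polyhedron p ι K := by
  obtain ⟨c, hc⟩ := Set.mem_iUnion.1 hv
  exact face_cellVertices_subset _ (translate_mem_face hc)

section JoinMap

variable (ψ : ι → AddChar (ZMod p) ℂ) (μ : ι → ℂ) (A : E ≃L[ℝ] (Fin K → ℝ))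
  (b : UnitSphere (EuclideanSpace ℂ ι)) (c : UnitSphere E)
  (V : J → ZMod p → Set (UnitSphere (EuclideanSpace ℂ ι) × UnitSphere E))
  (F : ℝ × UnitSphere (EuclideanSpace ℂ ι) × UnitSphere E → UnitSphere E)

/-- The map from the part `0 < rightMass v < 1` of the realisation to the product of spheres; the
base points `b` and `c` are taken where one of the coordinates degenerates. -/
noncomputable def spherePair (v : JoinVertex p ι K → ℝ) :
    UnitSphere (EuclideanSpace ℂ ι) × UnitSphere E :=
  (radialProj b (leftCoord ψ μ v), radialProj c (rightCoord A v))

/-- The pullback of the sets `V i g` to the interior of the join. -/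
def joinCover (i : J) (g : ZMod p) : Set (JoinVertex p ι K → ℝ) :=
  {v | v ∈ polyhedron p ι K ∧ 0 < rightMass v ∧ rightMass v < 1 ∧
    spherePair ψ μ A b c v ∈ V i g}

/-- The map that follows the homotopy `F` while the join coordinate decreases. -/
noncomputable def joinMap (v : JoinVertex p ι K → ℝ) : Fin (K + 1) → ℝ :=
  simplexCoord A (F (cutoff (rightMass v), spherePair ψ μ A b c v))

variable {ψ μ A b c V F} {v : JoinVertex p ι K → ℝ}

lemma spherePair_translate (hμ : ∀ i, ‖μ i‖ = 1) (hne : ∀ i (d : Bool), μ i ≠ -ψ i d.toNat)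
    (hv : v ∈ polyhedron p ι K) (hmass : rightMass v < 1) :
    spherePair ψ μ A b c (translate v) =
      (rotate ψ 1 (spherePair ψ μ A b c v).1, (spherePair ψ μ A b c v).2) := by
  have hzero : leftCoord ψ μ v ≠ 0 := leftCoord_ne_zero hμ hne hv hmass
  have hnorm : ‖leftCoord ψ μ (translate v)‖ = ‖leftCoord ψ μ v‖ :=
    norm_eq_of_forall_eq_char_mul ψ (leftCoord_translate ψ μ v)
  have hzero' : leftCoord ψ μ (translate v) ≠ 0 := by
    rwa [← norm_ne_zero_iff, hnorm, norm_ne_zero_iff]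
  refine Prod.ext (Subtype.ext (PiLp.ext fun i => ?_)) rfl
  simp only [spherePair, rotate_apply, coe_radialProj b hzero, coe_radialProj b hzero', hnorm,
    PiLp.smul_apply, leftCoord_translate, mul_smul_comm]

lemma continuousAt_rightPoint (hv : v ∈ polyhedron p ι K) (hmass : 0 < rightMass v) :
    ContinuousAt (fun v : JoinVertex p ι K → ℝ => radialProj c (rightCoord A v)) v :=
  (continuousAt_radialProj c (rightCoord_ne_zero A hv hmass)).comp
    (continuous_rightCoord A).continuousAt

lemma continuousAt_spherePair (hμ : ∀ i, ‖μ i‖ = 1) (hne : ∀ i (d : Bool), μ i ≠ -ψ i d.toNat)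
    (hv : v ∈ polyhedron p ι K) (hpos : 0 < rightMass v) (hmass : rightMass v < 1) :
    ContinuousAt (spherePair ψ μ A b c) v :=
  ((continuousAt_radialProj b (leftCoord_ne_zero hμ hne hv hmass)).comp
    (continuous_leftCoord ψ μ).continuousAt).prodMk (continuousAt_rightPoint hv hpos)

lemma joinCover_mem_nhdsWithin (hμ : ∀ i, ‖μ i‖ = 1)
    (hne : ∀ i (d : Bool), μ i ≠ -ψ i d.toNat) (hV : ∀ i g, IsOpen (V i g)) {i : J} {g : ZMod p}
    (h : v ∈ joinCover ψ μ A b c V i g) : joinCover ψ μ A b c V i g ∈ 𝓝[polyhedron p ι K] v := by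
  obtain ⟨hv, hpos, hmass, hmem⟩ := h
  have hcont : ContinuousAt (spherePair ψ μ A b c) v :=
    continuousAt_spherePair hμ hne hv hpos hmass
  filter_upwards [self_mem_nhdsWithin,
    nhdsWithin_le_nhds (continuous_rightMass.continuousAt.eventually (lt_mem_nhds hpos)),
    nhdsWithin_le_nhds (continuous_rightMass.continuousAt.eventually (gt_mem_nhds hmass)),
    nhdsWithin_le_nhds (hcont.eventually ((hV i g).mem_nhds hmem))] with w h₁ h₂ h₃ h₄
    using ⟨h₁, h₂, h₃, h₄⟩

lemma translate_mem_joinCover (hμ : ∀ i, ‖μ i‖ = 1)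
    (hne : ∀ i (d : Bool), μ i ≠ -ψ i d.toNat)
    (hV : ∀ i g x y, (rotate ψ 1 x, y) ∈ V i (g + 1) ↔ (x, y) ∈ V i g) (i : J) (g : ZMod p)
    (hv : v ∈ polyhedron p ι K) :
    translate v ∈ joinCover ψ μ A b c V i (g + 1) ↔ v ∈ joinCover ψ μ A b c V i g := by
  simp only [joinCover, Set.mem_ofPred_eq, hv, translate_mem_polyhedron hv, true_and,
    rightMass_translate]
  refine and_congr_right fun _ => and_congr_right fun hmass => ?_
  rw [spherePair_translate hμ hne hv hmass, hV]

lemma joinMap_of_ge (hF : ∀ x y, F (0, x, y) = y) (hmass : 3 / 4 ≤ rightMass v) :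
    joinMap ψ μ A b c F v = simplexCoord A (radialProj c (rightCoord A v)) := by
  rw [joinMap, cutoff_of_ge hmass]
  exact congrArg (fun y : UnitSphere E => simplexCoord A y) (hF _ _)

lemma joinMap_translate (hμ : ∀ i, ‖μ i‖ = 1) (hne : ∀ i (d : Bool), μ i ≠ -ψ i d.toNat)
    (hF₀ : ∀ x y, F (0, x, y) = y) (hF : ∀ t x y, F (t, rotate ψ 1 x, y) = F (t, x, y))
    (hv : v ∈ polyhedron p ι K) :
    joinMap ψ μ A b c F (translate v) = joinMap ψ μ A b c F v := by
  rcases lt_or_ge (rightMass v) 1 with hmass | hmass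
  · rw [joinMap, joinMap, spherePair_translate hμ hne hv hmass, rightMass_translate, hF]
  · rw [joinMap_of_ge hF₀ (by rw [rightMass_translate]; linarith),
      joinMap_of_ge hF₀ (by linarith)]
    rfl

lemma continuousAt_joinMap (hμ : ∀ i, ‖μ i‖ = 1) (hne : ∀ i (d : Bool), μ i ≠ -ψ i d.toNat)
    (hF₀ : ∀ x y, F (0, x, y) = y) (hF : Continuous F) (hv : v ∈ polyhedron p ι K)
    (hpos : 0 < rightMass v) : ContinuousAt (joinMap ψ μ A b c F) v := by
  have hA : Continuous fun y : UnitSphere E => simplexCoord A y :=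
    (continuous_simplexCoord A).comp continuous_subtype_val
  rcases lt_or_ge (rightMass v) 1 with hmass | hmass
  · exact (hA.comp hF).continuousAt.comp <|
      (continuous_cutoff.comp continuous_rightMass).continuousAt.prodMk
        (continuousAt_spherePair hμ hne hv hpos hmass)
  · have hright : ContinuousAt (fun v => simplexCoord A (radialProj c (rightCoord A v))) v :=
      hA.continuousAt.comp (continuousAt_rightPoint hv hpos)
    refine hright.congr ?_
    filter_upwards [continuous_rightMass.continuousAt.eventually
      (lt_mem_nhds (show 3 / 4 < rightMass v by linarith))] with w hw
      using (joinMap_of_ge hF₀ hw.le).symm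

lemma mem_joinCover_or_joinMap_lt_last (hA : A c = fun _ => -1)
    (hF : ∀ x y, (∀ i g, (x, y) ∉ V i g) → F (1, x, y) = c) (hv : v ∈ polyhedron p ι K)
    (hpos : 0 < rightMass v) (hmass : rightMass v ≤ 5 / 8) :
    (∃ i g, v ∈ joinCover ψ μ A b c V i g) ∨
      ∀ j ≠ Fin.last K, joinMap ψ μ A b c F v j < joinMap ψ μ A b c F v (Fin.last K) := by
  by_cases hmem : ∃ i g, spherePair ψ μ A b c v ∈ V i g
  · obtain ⟨i, g, hmem⟩ := hmem
    exact Or.inl ⟨i, g, hv, hpos, by linarith, hmem⟩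
  · push Not at hmem
    have hc : F (1, spherePair ψ μ A b c v) = c := hF _ _ hmem
    refine Or.inr fun j hj => ?_
    obtain ⟨i, rfl⟩ := Fin.exists_castSucc_eq.2 hj
    rw [joinMap, cutoff_of_le hmass, hc, simplexCoord_castSucc, simplexCoord_last, hA]
    exact neg_one_lt_zero

lemma mem_of_joinMap_isMax (hF : ∀ x y, F (0, x, y) = y) (hv : v ∈ polyhedron p ι K)
    {S : Set (Fin (K + 1))} (hS : v ∈ Face (.inr '' S)) {i : Fin (K + 1)}
    (hmax : ∀ j, joinMap ψ μ A b c F v j ≤ joinMap ψ μ A b c F v i) : i ∈ S := by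
  have hmass : rightMass v = 1 := rightMass_eq_one hS
  have hzero : rightCoord A v ≠ 0 := rightCoord_ne_zero A hv (by linarith)
  have hle (j : Fin (K + 1)) : v (.inr j) ≤ v (.inr i) := by
    have hj := hmax j
    simp only [joinMap_of_ge hF (show 3 / 4 ≤ rightMass v by linarith), coe_radialProj c hzero,
      simplexCoord_smul, simplexCoord_rightCoord] at hj
    exact sub_le_sub_iff_right _ |>.1
      (le_of_mul_le_mul_left hj (inv_pos.2 (norm_pos_iff.2 hzero)))
  by_contra hi
  have hvi : v (.inr i) = 0 := hS.2 _ (by simpa using hi)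
  have hnonpos : rightMass v ≤ 0 := Finset.sum_nonpos fun j _ => hvi ▸ hle j
  linarith

theorem isJoinRetraction_joinMap (hμ : ∀ i, ‖μ i‖ = 1)
    (hne : ∀ i (d : Bool), μ i ≠ -ψ i d.toNat) (hA : A c = fun _ => -1)
    (h : IsCoverDeformation (rotate ψ 1) V c F) :
    IsJoinRetraction (joinCover ψ μ A b c V) (joinMap ψ μ A b c F) where
  mem_nhdsWithin _ _ _ _ := joinCover_mem_nhdsWithin hμ hne h.isOpen
  eq_of_mem i g g' _ hg hg' := h.eq_of_mem i g g' _ hg.2.2.2 hg'.2.2.2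
  translate_mem i g _ := translate_mem_joinCover hμ hne h.map_mem i g
  map_translate _ := joinMap_translate hμ hne h.apply_zero h.apply_map
  continuousOn _ hv := (continuousAt_joinMap hμ hne h.apply_zero h.continuous hv.1
    (one_half_pos.trans_le hv.2)).continuousWithinAt
  exists_lt _ _ _ := exists_simplexCoord_lt A (ne_zero_of_mem_unit_sphere _)
  mem_or_lt_last _ hv hpos := mem_joinCover_or_joinMap_lt_last hA h.apply_one hv
    (one_half_pos.trans_le hpos)
  mem_of_isMax _ _ hv hS _ := mem_of_joinMap_isMax h.apply_zero hv hS

end JoinMap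

end JoinVertex

lemma exists_continuousLinearEquiv_apply_eq_neg_one {E : Type*} [NormedAddCommGroup E]
    [NormedSpace ℝ E] [FiniteDimensional ℝ E] {c : E} (hc : c ≠ 0) :
    ∃ A : E ≃L[ℝ] (Fin (Module.finrank ℝ E) → ℝ), A c = fun _ => -1 := by
  let A₀ : E ≃L[ℝ] (Fin (Module.finrank ℝ E) → ℝ) := ContinuousLinearEquiv.ofFinrankEq (by simp)
  have : Nontrivial E := ⟨c, 0, hc⟩
  have hneg : (fun _ => -1 : Fin (Module.finrank ℝ E) → ℝ) ≠ 0 := fun h => by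
    simpa using congrFun h ⟨0, Module.finrank_pos⟩
  obtain ⟨B, hB⟩ := SeparatingDual.exists_continuousLinearEquiv_apply_eq (R := ℝ)
    (A₀.map_ne_zero_iff.2 hc) hneg
  exact ⟨A₀.trans B, hB⟩

theorem IsCoverDeformation.two_mul_card_le {p : ℕ} [NeZero p] {ι J E : Type*} [Fintype ι]
    [Nonempty ι] [Fintype J] [NormedAddCommGroup E] [NormedSpace ℝ E] [FiniteDimensional ℝ E]
    {ψ : ι → AddChar (ZMod p) ℂ}
    {V : J → ZMod p → Set (UnitSphere (EuclideanSpace ℂ ι) × UnitSphere E)} {c : UnitSphere E}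
    {F : ℝ × UnitSphere (EuclideanSpace ℂ ι) × UnitSphere E → UnitSphere E}
    (h : IsCoverDeformation (rotate ψ 1) V c F) (hp : 2 ≤ p) :
    2 * Fintype.card ι ≤ Fintype.card J := by
  classical
  choose μ hμ hμ₀ hμ₁ using fun i => exists_norm_eq_one_ne_ne (-1) (-ψ i 1)
  have hne (i : ι) (d : Bool) : μ i ≠ -ψ i d.toNat := by
    cases d
    · simpa using hμ₀ i
    · simpa using hμ₁ i
  have hc : (c : E) ≠ 0 := ne_zero_of_mem_unit_sphere c
  have : Nontrivial E := ⟨c, 0, hc⟩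
  obtain ⟨A, hA⟩ := exists_continuousLinearEquiv_apply_eq_neg_one hc
  obtain ⟨b⟩ : Nonempty (UnitSphere (EuclideanSpace ℂ ι)) :=
    (NormedSpace.sphere_nonempty.2 zero_le_one).to_subtype
  exact (JoinVertex.isJoinRetraction_joinMap (b := b) hμ hne hA h).two_mul_card_le hp
    Module.finrank_pos

open scoped unitInterval

section LiftNullhomotopy

variable {A B E L : Type*} [TopologicalSpace A] [TopologicalSpace B] [TopologicalSpace E]
  {π : E → L}

theorem isLocallyConstant_of_comp_eq_const (hπ : IsLocallyInjective π) {g : A → E}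
    (hg : Continuous g) {l : L} (h : ∀ a, π (g a) = l) : IsLocallyConstant g := by
  refine (IsLocallyConstant.iff_eventually_eq g).2 fun a => ?_
  have hcomp : π ∘ g = π ∘ fun _ => g a := funext fun a' => (h a').trans (h a).symm
  exact (hπ.isOpen_eqLocus hg continuous_const hcomp).mem_nhds rfl

variable [TopologicalSpace L]

/-- The lift `K` is natural: it commutes with every deck transformation `T` at points of `A` with
equal images in `B`. -/
theorem exists_lift_nullhomotopy (hπ : IsCoveringMap π) {φ : C(B, L)} (hφ : φ.Nullhomotopic)
    (u : C(A, B)) (f : C(A, E)) (hf : ∀ a, φ (u a) = π (f a)) :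
    ∃ (l : L) (K : C(I × A, E)), (∀ a, K (0, a) = f a) ∧ (∀ a, π (K (1, a)) = l) ∧
      ∀ T : E → E, Continuous T → (∀ e, π (T e) = π e) → ∀ a a', u a' = u a → f a' = T (f a) →
        ∀ t, K (t, a') = T (K (t, a)) := by
  obtain ⟨l, ⟨h⟩⟩ := hφ
  let H : C(I × A, L) := ⟨fun z => h (z.1, u z.2), by fun_prop⟩
  have hH₀ (a : A) : H (0, a) = π (f a) := (h.apply_zero _).trans (hf a)
  have hlift (z : I × A) : π (hπ.liftHomotopy H f hH₀ z) = H z :=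
    congrFun (hπ.liftHomotopy_lifts H f hH₀) z
  refine ⟨l, hπ.liftHomotopy H f hH₀, hπ.liftHomotopy_zero H f hH₀,
    fun a => (hlift _).trans (h.apply_one _), fun T hT hπT a a' hu hfa => congrFun ?_⟩
  refine hπ.eq_of_comp_eq (by fun_prop) (by fun_prop) (funext fun t => ?_) 0 ?_
  · simp only [Function.comp_apply, hπT, hlift]
    exact congrArg (fun b => h (t, b)) hu
  · rw [hπ.liftHomotopy_zero, hπ.liftHomotopy_zero, hfa]

theorem exists_isLocallyConstant_of_nullhomotopic {G : Type*} [AddGroup G] [AddAction G E]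
    (hπ : IsAddQuotientCoveringMap π G) {φ : C(B, L)} (hφ : φ.Nullhomotopic)
    (u : C(A, B)) (f : C(A, E)) (hf : ∀ a, φ (u a) = π (f a)) :
    ∃ γ : A → G, IsLocallyConstant γ ∧
      ∀ a a' g, u a' = u a → f a' = g +ᵥ f a → γ a' = g + γ a := by
  obtain ⟨l, K, -, hK₁, hK⟩ := exists_lift_nullhomotopy hπ.isCoveringMap hφ u f hf
  obtain ⟨e, rfl⟩ := hπ.surjective l
  have := hπ.isCancelVAdd
  have := hπ.toContinuousConstVAdd
  choose γ hγ using fun a => hπ.apply_eq_iff_mem_orbit.1 (hK₁ a)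
  have hinj {g g' : G} (h : g +ᵥ e = g' +ᵥ e) : g = g' := IsCancelVAdd.right_cancel _ _ _ h
  refine ⟨γ, (IsLocallyConstant.iff_eventually_eq γ).2 fun a => ?_, fun a a' g hu hfa => hinj ?_⟩
  · have hconst : IsLocallyConstant fun a => K (1, a) := isLocallyConstant_of_comp_eq_const
      hπ.isCoveringMap.isLocalHomeomorph.isLocallyInjective (by fun_prop) hK₁
    filter_upwards [hconst.eventually_eq a] with a' ha'
    exact hinj ((hγ a').trans (ha'.trans (hγ a).symm))
  · rw [add_vadd]
    calc γ a' +ᵥ e = K (1, a') := hγ a'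
      _ = g +ᵥ K (1, a) := hK _ (continuous_const_vadd g) (fun _ => hπ.map_vadd g) a a' hu hfa 1
      _ = g +ᵥ (γ a +ᵥ e) := congrArg (g +ᵥ ·) (hγ a).symm

theorem exists_homotopy_const_of_nullhomotopic [PathConnectedSpace E] (hπ : IsCoveringMap π)
    {φ : C(B, L)} (hφ : φ.Nullhomotopic) (u : C(A, B)) (f : C(A, E))
    (hf : ∀ a, φ (u a) = π (f a)) :
    ∃ (c : E) (K : f.Homotopy (ContinuousMap.const A c)),
      ∀ a a', u a' = u a → f a' = f a → ∀ t, K (t, a') = K (t, a) := by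
  obtain ⟨l, K, hK₀, hK₁, hK⟩ := exists_lift_nullhomotopy hπ hφ u f hf
  obtain ⟨c⟩ : Nonempty E := inferInstance
  let P (e : E) : Path e c := (PathConnectedSpace.joined e c).somePath
  have hconst : IsLocallyConstant fun a => K (1, a) := isLocallyConstant_of_comp_eq_const
    hπ.isLocalHomeomorph.isLocallyInjective (by fun_prop) hK₁
  have hP : Continuous fun z : I × A => P (K (1, z.2)) z.1 := by
    refine continuous_iff_continuousAt.2 fun ⟨t, a⟩ => ?_
    have heq : (fun z : I × A => P (K (1, a)) z.1) =ᶠ[𝓝 (t, a)] fun z => P (K (1, z.2)) z.1 := by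
      filter_upwards [continuous_snd.continuousAt.eventually (hconst.eventually_eq a)] with z hz
      rw [hz]
    exact ContinuousAt.congr (by fun_prop) heq
  let K₁ : f.Homotopy (K.comp ⟨fun a => (1, a), by fun_prop⟩) := ⟨K, hK₀, fun _ => rfl⟩
  let K₂ : (K.comp ⟨fun a => (1, a), by fun_prop⟩).Homotopy (ContinuousMap.const A c) :=
    ⟨⟨_, hP⟩, fun a => (P (K (1, a))).source, fun a => (P (K (1, a))).target⟩
  refine ⟨c, K₁.trans K₂, fun a a' hu hfa t => ?_⟩
  have hKeq (s : I) : K (s, a') = K (s, a) :=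
    hK id continuous_id (fun _ => rfl) a a' hu hfa s
  rw [ContinuousMap.Homotopy.trans_apply, ContinuousMap.Homotopy.trans_apply]
  split_ifs
  · exact hKeq _
  · exact congrArg (fun e => P e _) (hKeq 1)

end LiftNullhomotopy

/-- The open sets counted by the Lusternik–Schnirelmann category: those whose inclusion into the
space is homotopic to a constant map. -/
def IsContractibleIn {X : Type*} [TopologicalSpace X] (U : Set X) : Prop :=
  ContinuousMap.Nullhomotopic (⟨Subtype.val, continuous_subtype_val⟩ : C(U, X))

section CoverProd

variable {G X Y L M : Type*} [AddGroup G] [AddAction G X] [TopologicalSpace X]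
  [TopologicalSpace L] {π : X → L} {ρ : Y → M} {U : Set (L × M)}

lemma vadd_mem_preimage_prodMap (hπ : IsAddQuotientCoveringMap π G) (g : G) {x : X} {y : Y} :
    (g +ᵥ x, y) ∈ Prod.map π ρ ⁻¹' U ↔ (x, y) ∈ Prod.map π ρ ⁻¹' U := by
  simp only [Set.mem_preimage, Prod.map_apply, hπ.map_vadd]

variable [TopologicalSpace Y] [TopologicalSpace M]

theorem IsContractibleIn.exists_translates (hU : IsContractibleIn U) (hUo : IsOpen U)
    (hπ : IsAddQuotientCoveringMap π G) (hρ : Continuous ρ) :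
    ∃ V : G → Set (X × Y), (∀ g, IsOpen (V g)) ∧ (∀ g g' z, z ∈ V g → z ∈ V g' → g = g') ∧
      (∀ g h x y, (g +ᵥ x, y) ∈ V (g + h) ↔ (x, y) ∈ V h) ∧
      ⋃ g, V g = Prod.map π ρ ⁻¹' U := by
  have hcont : Continuous (Prod.map π ρ) := hπ.continuous.prodMap hρ
  obtain ⟨γ, hγ, hγG⟩ := exists_isLocallyConstant_of_nullhomotopic hπ
    (hU.comp_right ContinuousMap.fst) ⟨_, hcont.restrictPreimage (s := U)⟩
    ⟨fun a => a.1.1, by fun_prop⟩ fun _ => rfl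
  have hγ_vadd (g : G) {x : X} {y : Y} (h h') : γ ⟨(g +ᵥ x, y), h'⟩ = g + γ ⟨(x, y), h⟩ :=
    hγG _ _ g (Subtype.ext (Prod.ext (hπ.map_vadd g) rfl)) rfl
  refine ⟨fun g => Subtype.val '' (γ ⁻¹' {g}),
    fun g => (hUo.preimage hcont).isOpenMap_subtype_val _ (hγ _), ?_, fun g h x y => ⟨?_, ?_⟩, ?_⟩
  · rintro g g' z ⟨a, rfl, rfl⟩ ⟨a', rfl, h⟩
    rw [Subtype.ext h]
  · rintro ⟨⟨_, hz⟩, hγz, rfl⟩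
    have hz' := (vadd_mem_preimage_prodMap hπ g).1 hz
    exact ⟨⟨(x, y), hz'⟩, add_left_cancel ((hγ_vadd g hz' hz).symm.trans hγz), rfl⟩
  · rintro ⟨⟨_, hz⟩, rfl, rfl⟩
    exact ⟨⟨_, (vadd_mem_preimage_prodMap hπ g).2 hz⟩, hγ_vadd g hz _, rfl⟩
  · rw [← Set.image_iUnion, ← Set.preimage_iUnion, Set.iUnion_of_singleton, Set.preimage_univ,
      Set.image_univ, Subtype.range_coe]

theorem IsContractibleIn.exists_homotopy_snd [PathConnectedSpace Y] (hU : IsContractibleIn U)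
    (hπ : IsAddQuotientCoveringMap π G) (hρ : IsCoveringMap ρ) :
    ∃ (c : Y) (K : C(I × (Prod.map π ρ ⁻¹' U), Y)), (∀ a, K (0, a) = a.1.2) ∧
      (∀ a, K (1, a) = c) ∧
      ∀ (g : G) t x y h h', K (t, ⟨(g +ᵥ x, y), h'⟩) = K (t, ⟨(x, y), h⟩) := by
  have hcont : Continuous (Prod.map π ρ) := hπ.continuous.prodMap hρ.continuous
  obtain ⟨c, K, hK⟩ := exists_homotopy_const_of_nullhomotopic hρ
    (hU.comp_right ContinuousMap.snd) ⟨_, hcont.restrictPreimage (s := U)⟩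
    ⟨fun a => a.1.2, by fun_prop⟩ fun _ => rfl
  exact ⟨c, K, K.apply_zero, K.apply_one, fun g t x y h h' =>
    hK ⟨_, h⟩ ⟨_, h'⟩ (Subtype.ext (Prod.ext (hπ.map_vadd g) rfl)) rfl t⟩

end CoverProd

theorem exists_invariant_bump {G X Y : Type*} [AddGroup G] [Finite G] [AddAction G X]
    [TopologicalSpace X] [TopologicalSpace Y] [ContinuousConstVAdd G X] [NormalSpace (X × Y)]
    {C W : Set (X × Y)} (hC : IsClosed C) (hW : IsOpen W) (hCW : C ⊆ W)
    (hCG : ∀ (g : G) x y, (x, y) ∈ C → (g +ᵥ x, y) ∈ C) :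
    ∃ φ : X × Y → ℝ, Continuous φ ∧ (∀ z ∉ W, ∀ᶠ w in 𝓝 z, φ w = 0) ∧ (∀ z ∈ C, φ z = 1) ∧
      ∀ (g : G) x y, φ (g +ᵥ x, y) = φ (x, y) := by
  cases nonempty_fintype G
  obtain ⟨W', hW', hCW', hW'W⟩ := normal_exists_closure_subset hC hW hCW
  obtain ⟨f, hf₀, hf₁, -⟩ := exists_continuous_zero_one_of_isClosed (s := W'ᶜ) (t := C)
    hW'.isClosed_compl hC (Set.disjoint_left.2 fun _ hz hz' => hz (hCW' hz'))
  refine ⟨fun z => ∏ g : G, f (g +ᵥ z.1, z.2), ?_, fun z hz => ?_, fun z hz => ?_, fun h x y => ?_⟩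
  · exact continuous_finsetProd _ fun g _ => f.continuous.comp
      ((continuous_fst.const_vadd g).prodMk continuous_snd)
  · filter_upwards [isClosed_closure.isOpen_compl.mem_nhds fun h => hz (hW'W h)] with w hw
    refine Finset.prod_eq_zero (Finset.mem_univ 0) ?_
    rw [zero_vadd]
    exact hf₀ fun h => hw (subset_closure h)
  · exact Finset.prod_eq_one fun g _ => hf₁ (hCG g _ _ hz)
  · refine Fintype.prod_equiv (Equiv.addRight h) _ _ fun g => ?_
    simp only [Equiv.coe_addRight, add_vadd]

section ExtendHomotopy

variable {Z Y : Type*} {W : Set Z} {e : Z → Y} {φ : Z → ℝ} {t : ℝ} {z : Z}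

open Classical in
/-- The homotopy of `e : Z → Y` which runs through a homotopy `K` of the restriction of `e` to `W`,
reparametrized by `φ`, and is constant outside `W`. -/
noncomputable def extendHomotopy (e : Z → Y) (K : I × W → Y) (φ : Z → ℝ) (w : ℝ × Z) : Y :=
  if h : w.2 ∈ W then K (Set.projIcc 0 1 zero_le_one (w.1 * φ w.2), ⟨w.2, h⟩) else e w.2

lemma extendHomotopy_of_mem (K : I × W → Y) (hz : z ∈ W) : extendHomotopy e K φ (t, z) =
    K (Set.projIcc 0 1 zero_le_one (t * φ z), ⟨z, hz⟩) := dif_pos hz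

lemma extendHomotopy_of_notMem (K : I × W → Y) (hz : z ∉ W) :
    extendHomotopy e K φ (t, z) = e z := dif_neg hz

lemma extendHomotopy_of_mul_eq_zero {K : I × W → Y} (hK : ∀ a, K (0, a) = e a)
    (h : t * φ z = 0) : extendHomotopy e K φ (t, z) = e z := by
  by_cases hz : z ∈ W
  · rw [extendHomotopy_of_mem K hz, h, Set.projIcc_left]
    exact hK _
  · exact extendHomotopy_of_notMem K hz

lemma extendHomotopy_of_mul_eq_one {K : I × W → Y} {c : Y} (hK : ∀ a, K (1, a) = c) (hz : z ∈ W)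
    (h : t * φ z = 1) : extendHomotopy e K φ (t, z) = c := by
  rw [extendHomotopy_of_mem K hz, h, Set.projIcc_right]
  exact hK _

lemma continuous_extendHomotopy [TopologicalSpace Z] [TopologicalSpace Y] (he : Continuous e)
    (hW : IsOpen W) {K : I × W → Y} (hK : Continuous K) (hK₀ : ∀ a, K (0, a) = e a)
    (hφ : Continuous φ) (hφ₀ : ∀ z ∉ W, ∀ᶠ w in 𝓝 z, φ w = 0) :
    Continuous (extendHomotopy e K φ) := by
  refine continuous_iff_continuousAt.2 fun ⟨t, z⟩ => ?_
  by_cases hz : z ∈ W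
  · have hopen : IsOpen (Prod.snd ⁻¹' W : Set (ℝ × Z)) := hW.preimage continuous_snd
    refine ContinuousOn.continuousAt ?_ (hopen.mem_nhds hz)
    rw [continuousOn_iff_continuous_domRestrict]
    have hrestrict : Set.domRestrict (Prod.snd ⁻¹' W) (extendHomotopy e K φ) = fun w =>
        K (Set.projIcc 0 1 zero_le_one (w.1.1 * φ w.1.2), ⟨w.1.2, w.2⟩) :=
      funext fun w => extendHomotopy_of_mem K w.2
    rw [hrestrict]
    exact hK.comp ((continuous_projIcc.comp (by fun_prop)).prodMk
      (Continuous.subtype_mk (by fun_prop) _))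
  · have heq : (fun w : ℝ × Z => e w.2) =ᶠ[𝓝 (t, z)] extendHomotopy e K φ := by
      filter_upwards [continuous_snd.continuousAt.eventually (hφ₀ z hz)] with w hw
      exact (extendHomotopy_of_mul_eq_zero hK₀ (by rw [hw, mul_zero])).symm
    exact ContinuousAt.congr (by fun_prop) heq

end ExtendHomotopy

section CoverDeformation

variable {p : ℕ} [NeZero p] {X Y : Type*} [TopologicalSpace X] [TopologicalSpace Y]
  [AddAction (ZMod p) X] [NormalSpace (X × Y)]

lemma exists_isCoverDeformation_of_homotopy [ContinuousConstVAdd (ZMod p) X] {J : Type*}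
    {V : J → ZMod p → Set (X × Y)} (hVo : ∀ i g, IsOpen (V i g))
    (hV : ∀ i g g' z, z ∈ V i g → z ∈ V i g' → g = g')
    (hVG : ∀ i g h x y, (g +ᵥ x, y) ∈ V i (g + h) ↔ (x, y) ∈ V i h)
    {W : Set (X × Y)} (hWo : IsOpen W) (hWG : ∀ (g : ZMod p) x y, (g +ᵥ x, y) ∈ W ↔ (x, y) ∈ W)
    (hVW : ∀ z, (∀ i g, z ∉ V i g) → z ∈ W) {c : Y} {K : C(I × W, Y)}
    (hK₀ : ∀ a, K (0, a) = a.1.2) (hK₁ : ∀ a, K (1, a) = c)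
    (hKG : ∀ (g : ZMod p) t x y h h', K (t, ⟨(g +ᵥ x, y), h'⟩) = K (t, ⟨(x, y), h⟩)) :
    ∃ F, IsCoverDeformation ((1 : ZMod p) +ᵥ ·) V c F := by
  have hclosed : IsClosed {z | ∀ i g, z ∉ V i g} := by
    simp only [Set.ofPred_forall]
    exact isClosed_iInter fun i => isClosed_iInter fun g => (hVo i g).isClosed_compl
  have hinv (g : ZMod p) (x : X) (y : Y) (h : ∀ i g, (x, y) ∉ V i g) (i : J) (g' : ZMod p) :
      (g +ᵥ x, y) ∉ V i g' := by
    rw [← add_neg_cancel_left g g', hVG]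
    exact h i _
  obtain ⟨φ, hφ, hφ₀, hφ₁, hφG⟩ := exists_invariant_bump hclosed hWo hVW hinv
  refine ⟨extendHomotopy Prod.snd K φ, hVo, hV, fun i g x y => ?_, ?_, ?_, fun t x y => ?_, ?_⟩
  · rw [add_comm]
    exact hVG i 1 g x y
  · exact continuous_extendHomotopy continuous_snd hWo K.continuous hK₀ hφ hφ₀
  · exact fun x y => extendHomotopy_of_mul_eq_zero hK₀ (zero_mul _)
  · by_cases h : (x, y) ∈ W
    · rw [extendHomotopy_of_mem _ h, extendHomotopy_of_mem _ ((hWG 1 x y).2 h), hφG, hKG]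
    · rw [extendHomotopy_of_notMem _ h, extendHomotopy_of_notMem _ (mt (hWG 1 x y).1 h)]
  · exact fun x y h => extendHomotopy_of_mul_eq_one hK₁ (hVW _ h) (by rw [hφ₁ _ h, one_mul])

theorem exists_isCoverDeformation [PathConnectedSpace Y] {L M : Type*} [TopologicalSpace L]
    [TopologicalSpace M] {π : X → L} {ρ : Y → M} (hπ : IsAddQuotientCoveringMap π (ZMod p))
    (hρ : IsCoveringMap ρ) {N : ℕ} {U : Fin (N + 1) → Set (L × M)} (hUo : ∀ i, IsOpen (U i))
    (hU : ⋃ i, U i = Set.univ) (hUc : ∀ i, IsContractibleIn (U i)) :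
    ∃ (V : Fin N → ZMod p → Set (X × Y)) (c : Y) (F : ℝ × X × Y → Y),
      IsCoverDeformation ((1 : ZMod p) +ᵥ ·) V c F := by
  have := hπ.toContinuousConstVAdd
  choose V hVo hV hVG hVU using fun i : Fin N =>
    (hUc i.castSucc).exists_translates (hUo _) hπ hρ.continuous
  obtain ⟨c, K, hK₀, hK₁, hKG⟩ := (hUc (Fin.last N)).exists_homotopy_snd hπ hρ
  have hVW (z : X × Y) (hz : ∀ i g, z ∉ V i g) : z ∈ Prod.map π ρ ⁻¹' U (Fin.last N) := by
    obtain ⟨i, hi⟩ := Set.mem_iUnion.1 (hU.ge (Set.mem_univ (Prod.map π ρ z)))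
    induction i using Fin.lastCases with
    | last => exact hi
    | cast i =>
      obtain ⟨g, hg⟩ := Set.mem_iUnion.1 ((hVU i).ge hi)
      exact absurd hg (hz i g)
  exact ⟨V, c, exists_isCoverDeformation_of_homotopy hVo hV hVG
    ((hUo _).preimage (hπ.continuous.prodMap hρ.continuous))
    (fun g _ _ => vadd_mem_preimage_prodMap hπ g) hVW hK₀ hK₁ hKG⟩

end CoverDeformation

section Category

variable {X L : Type*} [TopologicalSpace X] [TopologicalSpace L]

theorem IsContractibleIn.prod {U : Set X} {V : Set L} (hU : IsContractibleIn U)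
    (hV : IsContractibleIn V) : IsContractibleIn (U ×ˢ V) := by
  obtain ⟨x, hx⟩ := hU
  obtain ⟨l, hl⟩ := hV
  let split : C(U ×ˢ V, U × V) := ⟨fun z => (⟨z.1.1, z.2.1⟩, ⟨z.1.2, z.2.2⟩), by fun_prop⟩
  exact ContinuousMap.Nullhomotopic.comp_left ⟨(x, l), hx.prodMap hl⟩ split

theorem IsContractibleIn.of_contractibleSpace (U : Set X) [ContractibleSpace U] :
    IsContractibleIn U :=
  (id_nullhomotopic U).comp_right ⟨Subtype.val, continuous_subtype_val⟩

theorem IsContractibleIn.exists_of_isLocalHomeomorph {S : Set X} (hS : IsContractibleIn S)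
    (hSo : IsOpen S) {π : X → L} (hπ : IsLocalHomeomorph π) {x : X} (hx : x ∈ S) :
    ∃ O, IsOpen O ∧ π x ∈ O ∧ IsContractibleIn O := by
  obtain ⟨e, hxe, rfl⟩ := hπ x
  refine ⟨e '' (e.source ∩ S), hπ.isOpenMap _ (e.open_source.inter hSo), ⟨x, ⟨hxe, hx⟩, rfl⟩, ?_⟩
  have hsymm (l) (hl : l ∈ e '' (e.source ∩ S)) : l ∈ e.target ∧ e.symm l ∈ S := by
    obtain ⟨w, hw, rfl⟩ := hl
    exact ⟨e.map_source hw.1, (e.left_inv hw.1).symm ▸ hw.2⟩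
  have hcont : Continuous fun l : e '' (e.source ∩ S) => e.symm l :=
    (e.continuousOn_symm.mono fun l hl => (hsymm l hl).1).domRestrict
  let lift : C(e '' (e.source ∩ S), S) :=
    ⟨fun l => ⟨e.symm l, (hsymm l l.2).2⟩, hcont.subtype_mk _⟩
  have hlift : (⟨Subtype.val, continuous_subtype_val⟩ : C(e '' (e.source ∩ S), L)) =
      (ContinuousMap.mk e hπ.continuous).comp (.comp ⟨Subtype.val, continuous_subtype_val⟩ lift) :=
    ContinuousMap.ext fun l => (e.right_inv (hsymm l l.2).1).symm
  rw [IsContractibleIn, hlift]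
  exact (hS.comp_left lift).comp_right _

theorem exists_categorical_cover_lsCat [CompactSpace X] [Nonempty X]
    (h : ∀ x : X, ∃ O, IsOpen O ∧ x ∈ O ∧ IsContractibleIn O) :
    ∃ U : Fin (lsCat X + 1) → Set X, (∀ i, IsOpen (U i)) ∧ ⋃ i, U i = Set.univ ∧
      ∀ i, IsContractibleIn (U i) := by
  choose O hO hx hc using h
  obtain ⟨t, ht⟩ := isCompact_univ.elim_finite_subcover O hO fun x _ => Set.mem_iUnion.2 ⟨x, hx x⟩
  have hmem (x : X) : ∃ y ∈ t, x ∈ O y := by simpa using ht (Set.mem_univ x)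
  obtain ⟨y, hy, -⟩ := hmem (Classical.arbitrary X)
  obtain ⟨n, hn⟩ := Nat.exists_eq_add_of_le' (Finset.card_pos.2 ⟨y, hy⟩)
  let e : t ≃ Fin (n + 1) := t.equivFinOfCardEq hn
  refine Nat.sInf_mem (s := {n | ∃ U : Fin (n + 1) → Set X, (∀ i, IsOpen (U i)) ∧
    ⋃ i, U i = Set.univ ∧ ∀ i, IsContractibleIn (U i)})
    ⟨n, fun i => O (e.symm i), fun i => hO _, Set.eq_univ_of_forall fun x => ?_, fun i => hc _⟩
  obtain ⟨z, hz, hxz⟩ := hmem x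
  exact Set.mem_iUnion.2 ⟨e ⟨z, hz⟩, by rwa [e.symm_apply_apply]⟩

theorem exists_isContractibleIn_unitSphere {E : Type*} [NormedAddCommGroup E]
    [InnerProductSpace ℝ E] (x : UnitSphere E) : ∃ S, IsOpen S ∧ x ∈ S ∧ IsContractibleIn S := by
  have hneg : ‖((-x : UnitSphere E) : E)‖ = 1 := norm_eq_of_mem_sphere _
  have hsource : (stereographic hneg).source = {-x}ᶜ := stereographic_source hneg
  refine ⟨_, (stereographic hneg).open_source, ?_, ?_⟩
  · rw [hsource]
    exact ne_neg_of_mem_unit_sphere ℝ x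
  · have htarget : ContractibleSpace (stereographic hneg).target := by
      rw [stereographic_target]
      exact (Homeomorph.Set.univ _).contractibleSpace
    have := (stereographic hneg).toHomeomorphSourceTarget.contractibleSpace
    exact .of_contractibleSpace _

end Category

instance pathConnectedSpace_unitSphere {ι : Type*} [Fintype ι] [Nonempty ι] :
    PathConnectedSpace (UnitSphere (EuclideanSpace ℂ ι)) := by
  have : FiniteDimensional ℝ (EuclideanSpace ℂ ι) := FiniteDimensional.complexToReal _
  have hdim : 1 < Module.rank ℝ (EuclideanSpace ℂ ι) := by
    rw [← Module.finrank_eq_rank, finrank_real_of_complex, finrank_euclideanSpace]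
    exact_mod_cast by linarith [Fintype.card_pos (α := ι)]
  exact isPathConnected_iff_pathConnectedSpace.1 (isPathConnected_sphere hdim 0 zero_le_one)

section RotateAction

variable {p : ℕ} [NeZero p] {ι : Type*} [Fintype ι] (ψ : ι → AddChar (ZMod p) ℂ)

/-- The action of `ZMod p` by `rotate ψ`, a definition rather than an instance because the sphere
does not determine the weights `ψ`. -/
@[reducible] noncomputable def rotateAction :
    AddAction (ZMod p) (UnitSphere (EuclideanSpace ℂ ι)) where
  vadd := rotate ψ
  add_vadd g h x := by
    refine Subtype.ext (PiLp.ext fun i => ?_)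
    change ψ i (g + h) * x.1 i = ψ i g * (ψ i h * x.1 i)
    rw [AddChar.map_add_eq_mul, mul_assoc]
  zero_vadd x := by
    refine Subtype.ext (PiLp.ext fun i => ?_)
    change ψ i 0 * x.1 i = x.1 i
    rw [AddChar.map_zero_eq_one, one_mul]

lemma continuous_rotate (g : ZMod p) : Continuous (rotate ψ g) :=
  ((PiLp.continuous_toLp 2 _).comp (by fun_prop)).subtype_mk _

lemma eq_zero_of_rotate_eq_self (hψ : ∀ i, Function.Injective (ψ i)) {g : ZMod p}
    {x : UnitSphere (EuclideanSpace ℂ ι)} (h : rotate ψ g x = x) : g = 0 := by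
  obtain ⟨i, hi⟩ : ∃ i, x.1 i ≠ 0 := by
    by_contra! hzero
    exact ne_zero_of_mem_unit_sphere x (PiLp.ext hzero)
  have hmul : ψ i g * x.1 i = 1 * x.1 i := by rw [← rotate_apply, h, one_mul]
  exact hψ i ((mul_right_cancel₀ hi hmul).trans (AddChar.map_zero_eq_one _).symm)

end RotateAction

section LensSpace

instance compactSpace_lensSpace {p k : ℕ} (ℓ : Fin k → ℤ) : CompactSpace (LensSpace p k ℓ) :=
  inferInstanceAs (CompactSpace (Quot (lensRel p k ℓ)))

/-- The characters of `ZMod p` by which it acts on the coordinates of `ℂ^k` to define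
`LensSpace p k ℓ`. -/
noncomputable def lensChar (p : ℕ) [NeZero p] {k : ℕ} (ℓ : Fin k → ℤ) (j : Fin k) :
    AddChar (ZMod p) ℂ :=
  ZMod.stdAddChar.mulShift (ℓ j)

variable {p : ℕ} [NeZero p] {k : ℕ}

lemma lensChar_intCast (ℓ : Fin k → ℤ) (j : Fin k) (m : ℤ) :
    lensChar p ℓ j m = Complex.exp (2 * Real.pi * Complex.I * m * ℓ j / p) := by
  rw [lensChar, AddChar.mulShift_apply, ← Int.cast_mul, ZMod.stdAddChar_coe]
  push_cast
  ring_nf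

lemma injective_lensChar {ℓ : Fin k → ℤ} {j : Fin k} (h : IsCoprime (ℓ j) (p : ℤ)) :
    Function.Injective (lensChar p ℓ j) := by
  have hunit : IsUnit (ℓ j : ZMod p) := (ZMod.coe_int_isUnit_iff_isCoprime _ _).2 h.symm
  intro g g' hg
  exact hunit.mul_left_cancel (ZMod.injective_stdAddChar (by
    simpa only [lensChar, AddChar.mulShift_apply] using hg))

lemma lensRel_iff {ℓ : Fin k → ℤ} {x y : UnitSphere (EuclideanSpace ℂ (Fin k))} :
    lensRel p k ℓ x y ↔ ∃ g : ZMod p, y = rotate (lensChar p ℓ) g x := by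
  refine (ZMod.intCast_surjective.exists.trans (exists_congr fun m => ?_)).symm
  simp only [Subtype.ext_iff, PiLp.ext_iff, rotate_apply, lensChar_intCast]

theorem isAddQuotientCoveringMap_mk_lensRel {ℓ : Fin k → ℤ}
    (hℓ : ∀ j, IsCoprime (ℓ j) (p : ℤ)) :
    let _ := rotateAction (lensChar p ℓ)
    IsAddQuotientCoveringMap (Quot.mk (lensRel p k ℓ) : _ → LensSpace p k ℓ) (ZMod p) := by
  intro _
  have hrel : lensRel p k ℓ = (AddAction.orbitRel (ZMod p) _).r :=
    funext₂ fun x y => propext <| (lensRel_iff.trans (exists_congr fun _ => eq_comm)).trans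
      ((AddAction.orbitRel (ZMod p) _).comm' (x := y) (y := x))
  have hequiv : Equivalence (lensRel p k ℓ) := hrel ▸ (AddAction.orbitRel (ZMod p) _).iseqv
  have : ContinuousConstVAdd (ZMod p) (UnitSphere (EuclideanSpace ℂ (Fin k))) :=
    ⟨continuous_rotate _⟩
  have : IsCancelVAdd (ZMod p) (UnitSphere (EuclideanSpace ℂ (Fin k))) :=
    isCancelVAdd_iff_eq_zero_of_vadd_eq.2 fun _ _ =>
      eq_zero_of_rotate_eq_self _ fun j => injective_lensChar (hℓ j)
  refine isQuotientMap_quot_mk.isAddQuotientCoveringMap_of_properlyDiscontinuousVAdd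
    fun {x y} => ?_
  rw [Quot.eq, hequiv.eqvGen_iff, hrel]
  rfl

theorem exists_isContractibleIn_lensSpace {ℓ : Fin k → ℤ} (hℓ : ∀ j, IsCoprime (ℓ j) (p : ℤ))
    (l : LensSpace p k ℓ) : ∃ O, IsOpen O ∧ l ∈ O ∧ IsContractibleIn O := by
  let _ := rotateAction (lensChar p ℓ)
  obtain ⟨x, rfl⟩ := Quot.exists_rep l
  obtain ⟨S, hSo, hx, hS⟩ := exists_isContractibleIn_unitSphere x
  exact hS.exists_of_isLocalHomeomorph hSo
    (isAddQuotientCoveringMap_mk_lensRel hℓ).isCoveringMap.isLocalHomeomorph hx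

end LensSpace

theorem lsCat_prod_lensSpace_lower_general {p q k k' : ℕ} (hp : 2 ≤ p) (hq : q ≠ 0) (hk' : k' ≠ 0)
    {ℓ : Fin k → ℤ} (hℓ : ∀ j, IsCoprime (ℓ j) (p : ℤ))
    {ℓ' : Fin k' → ℤ} (hℓ' : ∀ j, IsCoprime (ℓ' j) (q : ℤ)) :
    2 * k ≤ lsCat (LensSpace p k ℓ × LensSpace q k' ℓ') := by
  obtain rfl | hk := Nat.eq_zero_or_pos k
  · exact Nat.zero_le _
  have : NeZero p := ⟨by lia⟩
  have : NeZero q := ⟨hq⟩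
  have : Nonempty (Fin k) := ⟨⟨0, hk⟩⟩
  have : Nonempty (Fin k') := ⟨⟨0, Nat.pos_of_ne_zero hk'⟩⟩
  have : Nonempty (LensSpace p k ℓ) := .map (Quot.mk _) PathConnectedSpace.nonempty
  have : Nonempty (LensSpace q k' ℓ') := .map (Quot.mk _) PathConnectedSpace.nonempty
  let _ := rotateAction (lensChar p ℓ)
  let _ := rotateAction (lensChar q ℓ')
  have hlocal (z : LensSpace p k ℓ × LensSpace q k' ℓ') :
      ∃ O, IsOpen O ∧ z ∈ O ∧ IsContractibleIn O := by
    obtain ⟨A, hAo, hzA, hA⟩ := exists_isContractibleIn_lensSpace hℓ z.1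
    obtain ⟨B, hBo, hzB, hB⟩ := exists_isContractibleIn_lensSpace hℓ' z.2
    exact ⟨A ×ˢ B, hAo.prod hBo, ⟨hzA, hzB⟩, hA.prod hB⟩
  obtain ⟨U, hUo, hU, hUc⟩ := exists_categorical_cover_lsCat hlocal
  obtain ⟨V, c, F, hF⟩ := exists_isCoverDeformation (isAddQuotientCoveringMap_mk_lensRel hℓ)
    (isAddQuotientCoveringMap_mk_lensRel hℓ').isCoveringMap hUo hU hUc
  simpa only [Fintype.card_fin] using hF.two_mul_card_le (ψ := lensChar p ℓ) hp

/-- For odd `n = 2k-1` and relatively prime `p, q ≥ 2`, `cat (L^n_p × L^n_q) ≥ n + 1`. -/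
theorem lsCat_prod_lensSpace_lower (k : ℕ) (hk : 1 ≤ k) (n : ℕ) (hn : n = 2 * k - 1)
    (p q : ℕ) (hp2 : 2 ≤ p) (hq2 : 2 ≤ q) (hpq : Nat.Coprime p q)
    (ℓ : Fin k → ℤ) (hℓ : ∀ j, IsCoprime (ℓ j) (p : ℤ))
    (ℓ' : Fin k → ℤ) (hℓ' : ∀ j, IsCoprime (ℓ' j) (q : ℤ)) :
    n + 1 ≤ lsCat (LensSpace p k ℓ × LensSpace q k ℓ') := by
  have := lsCat_prod_lensSpace_lower_general (k' := k) hp2 (by lia) (by lia) hℓ hℓ'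
  lia
end

section
/- Let n ≥ 3 be odd and let p, q ≥ 2 be relatively prime integers. Then for every choice of admissible parameters, cat(L^n_p × L^n_q) ≤ 2n − 1. -/
open scoped Topology

/-!
Choose `a_j` inverse to `ℓ_j` modulo `p` and `b_j` inverse to `ℓ'_j` modulo `q`. A rotation of
`(x, y)` by `(ζ, ω) ∈ μ_p × μ_q` multiplies the product `(∑ x_j ^ a_j X ^ j) (∑ y_j ^ b_j X ^ j)`
by `ζ ω`, and coprimality makes `(ζ, ω) ↦ ζ ω` an isomorphism onto `μ_{pq}`. So where one of the
`2k - 1 = n` coefficients is nonzero, requiring it to lie in an open sector of angle `2π / pq`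
picks at most one point of each orbit; two such sectors, rotated against each other, meet every
orbit. Each of the resulting `2n` open sets embeds in the product of lens spaces, and it can be made
to miss a point of each sphere, so that it is contractible in `S^n × S^n`: a coefficient other than
the middle one vanishes identically at a suitable basis vector, and the middle one is needed only if
the product is a monomial, hence both factors are, which excludes points with no zero coordinate.
-/

section Category

open ContinuousMap

variable {X Y Z : Type*} [TopologicalSpace X] [TopologicalSpace Y] [TopologicalSpace Z]

/-- `U` is contractible in `X`: its inclusion into `X` is nullhomotopic. These are the members of
the covers counted by `lsCat`. -/
def ContractibleIn (U : Set X) : Prop :=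
  Nullhomotopic (⟨Subtype.val, continuous_subtype_val⟩ : C(U, X))

theorem lsCat_le_of_card_eq {ι : Type*} [Fintype ι] {m : ℕ} (hι : Fintype.card ι = m + 1)
    {U : ι → Set X} (hU : ∀ i, IsOpen (U i)) (hcover : ⋃ i, U i = Set.univ)
    (hcontr : ∀ i, ContractibleIn (U i)) : lsCat X ≤ m := by
  let e := (Fintype.equivFinOfCardEq hι).symm
  refine Nat.sInf_le ⟨fun i ↦ U (e i), fun i ↦ hU (e i), ?_, fun i ↦ hcontr (e i)⟩
  rw [← hcover]
  exact e.surjective.iUnion_comp U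

theorem ContractibleIn.image {π : Y → X} (hπ : Continuous π) (hopen : IsOpenMap π) {V : Set Y}
    (hV : IsOpen V) (hinj : Set.InjOn π V) (hcontr : ContractibleIn V) :
    ContractibleIn (π '' V) := by
  have hemb : Topology.IsOpenEmbedding (V.domRestrict π) :=
    .of_continuous_injective_isOpenMap (hπ.comp continuous_subtype_val) hinj.injective
      (hopen.domRestrict hV)
  let e : V ≃ₜ π '' V :=
    hemb.toIsEmbedding.toHomeomorph.trans (.setCongr (Set.range_domRestrict π V))
  have hincl : (⟨Subtype.val, continuous_subtype_val⟩ : C(π '' V, X)) =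
      ((⟨π, hπ⟩ : C(Y, X)).comp ⟨Subtype.val, continuous_subtype_val⟩).comp
        (e.symm : C(π '' V, V)) := by
    ext x
    exact congrArg Subtype.val (e.apply_symm_apply x).symm
  rw [ContractibleIn, hincl]
  exact (hcontr.comp_right _).comp_left _

theorem nullhomotopic_of_contractibleSpace [ContractibleSpace Y] (f : C(X, Y)) :
    Nullhomotopic f := by
  simpa only [id_comp] using (id_nullhomotopic Y).comp_left f

theorem nullhomotopic_prodMk {f : C(X, Y)} {g : C(X, Z)} (hf : Nullhomotopic f)
    (hg : Nullhomotopic g) : Nullhomotopic (f.prodMk g) := by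
  obtain ⟨y, ⟨F⟩⟩ := hf
  obtain ⟨z, ⟨G⟩⟩ := hg
  exact ⟨(y, z), ⟨F.prodMk G⟩⟩

end Category

section Sphere

open ContinuousMap Metric

variable {E F : Type*} [NormedAddCommGroup E] [InnerProductSpace ℝ E]
  [NormedAddCommGroup F] [InnerProductSpace ℝ F]

theorem nullhomotopic_of_forall_ne {X : Type*} [TopologicalSpace X] {f : C(X, sphere (0 : E) 1)}
    {v : sphere (0 : E) 1} (hf : ∀ x, f x ≠ v) : Nullhomotopic f := by
  let σ := stereographic (norm_eq_of_mem_sphere v)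
  have hsource : ∀ x, f x ∈ σ.source := by simpa [σ] using hf
  let toPlane : C(X, (ℝ ∙ (v : E))ᗮ) :=
    ⟨fun x ↦ σ (f x), σ.continuousOn.comp_continuous f.continuous hsource⟩
  let fromPlane : C((ℝ ∙ (v : E))ᗮ, sphere (0 : E) 1) :=
    ⟨σ.symm, (isOpenEmbedding_stereographic_symm (norm_eq_of_mem_sphere v)).continuous⟩
  have hfactor : f = fromPlane.comp toPlane :=
    ContinuousMap.ext fun x ↦ (σ.left_inv (hsource x)).symm
  rw [hfactor]
  exact (nullhomotopic_of_contractibleSpace toPlane).comp_right fromPlane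

theorem contractibleIn_of_forall_fst_ne_and_snd_ne {V : Set (sphere (0 : E) 1 × sphere (0 : F) 1)}
    {v : sphere (0 : E) 1} {w : sphere (0 : F) 1} (hV : ∀ z ∈ V, z.1 ≠ v ∧ z.2 ≠ w) :
    ContractibleIn V :=
  nullhomotopic_prodMk
    (nullhomotopic_of_forall_ne (f := ⟨fun z : V ↦ z.1.1, by fun_prop⟩) fun z ↦ (hV z z.2).1)
    (nullhomotopic_of_forall_ne (f := ⟨fun z : V ↦ z.1.2, by fun_prop⟩) fun z ↦ (hV z z.2).2)

end Sphere

section Sector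

open Complex

/-- The open sector of half-angle `π / N` around the positive real axis, an open fundamental domain
for multiplication by `N`-th roots of unity. Intersecting with `slitPlane` removes the origin,
where `arg` has the junk value `0`. -/
def sector (N : ℕ) : Set ℂ :=
  {c | c ∈ slitPlane ∧ |arg c| < Real.pi / N}

variable {N : ℕ}

theorem isOpen_sector (N : ℕ) : IsOpen (sector N) :=
  continuousOn_arg.abs.isOpen_inter_preimage isOpen_slitPlane isOpen_Iio

theorem ne_zero_of_mem_sector {c : ℂ} (hc : c ∈ sector N) : c ≠ 0 :=
  slitPlane_ne_zero hc.1

theorem pow_cpow_nat_inv_of_mem_sector (hN : N ≠ 0) {c : ℂ} (hc : c ∈ sector N) :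
    (c ^ N) ^ (N⁻¹ : ℂ) = c :=
  pow_cpow_nat_inv hN (abs_lt.mp hc.2).1 (abs_lt.mp hc.2).2.le

theorem eq_one_of_mul_mem_sector (hN : N ≠ 0) {ζ c : ℂ} (hζ : ζ ^ N = 1) (hc : c ∈ sector N)
    (hζc : ζ * c ∈ sector N) : ζ = 1 := by
  have hfix : ζ * c = c := by
    rw [← pow_cpow_nat_inv_of_mem_sector hN hζc, mul_pow, hζ, one_mul,
      pow_cpow_nat_inv_of_mem_sector hN hc]
  exact mul_eq_right₀ (ne_zero_of_mem_sector hc) |>.mp hfix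

theorem cpow_nat_inv_mem_sector (hN : N ≠ 0) {z : ℂ} (hz : z ∈ slitPlane) :
    z ^ (N⁻¹ : ℂ) ∈ sector N := by
  have hz0 : z ≠ 0 := slitPlane_ne_zero hz
  have hNpos : (0 : ℝ) < N := Nat.cast_pos.mpr hN.bot_lt
  have harg : |arg z| < Real.pi :=
    (abs_arg_le_pi z).lt_of_ne fun h ↦ (abs_eq Real.pi_pos.le).mp h |>.elim
      (slitPlane_arg_ne_pi hz) (neg_pi_lt_arg z).ne'
  have him : (log z * (N⁻¹ : ℂ)).im = arg z / N := by
    rw [← ofReal_natCast, ← ofReal_inv, im_mul_ofReal, log_im, div_eq_mul_inv]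
  have hbound : |arg z / N| < Real.pi / N := by
    rw [abs_div, abs_of_pos hNpos]
    exact div_lt_div_of_pos_right harg hNpos
  have hle : Real.pi / N ≤ Real.pi :=
    div_le_self Real.pi_pos.le (Nat.one_le_cast.mpr (Nat.one_le_iff_ne_zero.mpr hN))
  have hargroot : arg (z ^ (N⁻¹ : ℂ)) = arg z / N := by
    obtain ⟨hlow, hhigh⟩ := abs_lt.mp (hbound.trans_le hle)
    rw [cpow_def_of_ne_zero hz0, ← log_im, log_exp (him ▸ hlow) (him ▸ hhigh.le), him]
  refine ⟨mem_slitPlane_iff_arg.mpr ⟨?_, ?_⟩, hargroot ▸ hbound⟩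
  · rw [hargroot]
    exact (abs_lt.mp (hbound.trans_le hle)).2.ne
  · rw [cpow_def_of_ne_zero hz0]
    exact exp_ne_zero _

theorem exists_circle_mul_mem_sector (hN : N ≠ 0) {c : ℂ} (hc : c ^ N ∈ slitPlane) :
    ∃ ζ : Circle, ζ ^ N = 1 ∧ ζ * c ∈ sector N := by
  have hc0 : c ≠ 0 := by
    rintro rfl
    exact slitPlane_ne_zero hc (zero_pow hN)
  set w := (c ^ N) ^ (N⁻¹ : ℂ) with hw
  have hroot : (w / c) ^ N = 1 := by
    rw [div_pow, hw, cpow_nat_inv_pow _ hN, div_self (pow_ne_zero N hc0)]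
  let ζ : Circle := ⟨w / c, mem_sphere_zero_iff_norm.mpr (norm_eq_one_of_pow_eq_one hroot hN)⟩
  refine ⟨ζ, Circle.ext hroot, ?_⟩
  rw [show (ζ : ℂ) * c = w from div_mul_cancel₀ w hc0]
  exact cpow_nat_inv_mem_sector hN hc

-- The rays missed by all rotations of the sector are those on which `c ^ N` is negative.
theorem exists_circle_mul_mem_sector_or (hN : N ≠ 0) {η c : ℂ} (hη : η ^ N = -1) (hc : c ≠ 0) :
    ∃ ζ : Circle, ζ ^ N = 1 ∧ (ζ * c ∈ sector N ∨ ζ * (η * c) ∈ sector N) := by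
  rcases mem_slitPlane_or_neg_mem_slitPlane (pow_ne_zero N hc) with h | h
  · obtain ⟨ζ, hζ, hmem⟩ := exists_circle_mul_mem_sector hN h
    exact ⟨ζ, hζ, .inl hmem⟩
  · rw [← neg_one_mul, ← hη, ← mul_pow] at h
    obtain ⟨ζ, hζ, hmem⟩ := exists_circle_mul_mem_sector hN h
    exact ⟨ζ, hζ, .inr hmem⟩

end Sector

section Coprime

variable {p q : ℕ}

theorem exists_mul_eq_of_pow_mul_eq_one {G : Type*} [Group G] (hpq : p.Coprime q) {g : G}
    (hg : g ^ (p * q) = 1) : ∃ a b : G, a ^ p = 1 ∧ b ^ q = 1 ∧ a * b = g := by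
  obtain ⟨u, v, huv⟩ : IsCoprime (p : ℤ) (q : ℤ) := Nat.isCoprime_iff_coprime.mpr hpq
  have hg' : g ^ ((p : ℤ) * q) = 1 := mod_cast hg
  refine ⟨g ^ (v * q), g ^ (u * p), ?_, ?_, ?_⟩
  · rw [← zpow_natCast, ← zpow_mul, show v * q * p = p * q * v by ring, zpow_mul, hg', one_zpow]
  · rw [← zpow_natCast, ← zpow_mul, show u * p * q = p * q * u by ring, zpow_mul, hg', one_zpow]
  · rw [← zpow_add, add_comm, huv, zpow_one]

theorem eq_one_and_eq_one_of_mul_eq_one {G : Type*} [Group G] (hpq : p.Coprime q) {a b : G}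
    (ha : a ^ p = 1) (hb : b ^ q = 1) (hab : a * b = 1) : a = 1 ∧ b = 1 := by
  obtain rfl : b = a⁻¹ := (inv_eq_of_mul_eq_one_right hab).symm
  rw [inv_pow, inv_eq_one] at hb
  obtain rfl : a = 1 := (pow_eq_one_iff_of_coprime hpq).mp ⟨ha, hb⟩
  exact ⟨rfl, inv_one⟩

theorem exists_natCast_mul_modEq_one (hp : p ≠ 0) {l : ℤ} (hl : IsCoprime l p) :
    ∃ a : ℕ, a ≠ 0 ∧ a * l ≡ 1 [ZMOD p] := by
  obtain ⟨u, v, huv⟩ := hl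
  have hpos : (0 : ℤ) < p := by exact_mod_cast hp.bot_lt
  have ha : 0 < u % p + p := by linarith [Int.emod_nonneg u hpos.ne']
  refine ⟨(u % p + p).toNat, by omega, ?_⟩
  rw [Int.toNat_of_nonneg ha.le]
  calc (u % p + p) * l ≡ u * l [ZMOD p] := by
        gcongr
        exact (Int.add_modEq_right).trans (Int.mod_modEq u p)
    _ ≡ u * l + v * p [ZMOD p] := Int.modEq_iff_dvd.mpr (by simp)
    _ = 1 := huv

theorem zpow_eq_self_of_modEq_one {G : Type*} [Group G] {g : G} (hg : g ^ p = 1) {n : ℤ}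
    (hn : n ≡ 1 [ZMOD p]) : g ^ n = g := by
  obtain ⟨c, hc⟩ := hn.symm.dvd
  rw [eq_add_of_sub_eq hc, zpow_add, zpow_mul, zpow_natCast, hg, one_zpow, one_mul, zpow_one]

end Coprime

/-- The unit sphere `S^{2k-1}` of `ℂ^k`. -/
abbrev ComplexSphere (k : ℕ) : Type :=
  Metric.sphere (0 : EuclideanSpace ℂ (Fin k)) 1

section Rotation

variable {k : ℕ} (ℓ : Fin k → ℤ)

/-- The action of the unit circle on `S^{2k-1}` with weights `ℓ`, i.e. `z_j ↦ ζ^{ℓ_j} z_j`. Its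
restriction to `p`-th roots of unity is the action of `ℤ/p` defining the lens space. -/
noncomputable def weightedRotation (ζ : Circle) (x : ComplexSphere k) : ComplexSphere k :=
  ⟨WithLp.toLp 2 fun j ↦ (ζ : ℂ) ^ ℓ j * x.1 j, by
    have hx : ‖x.1‖ = 1 := norm_eq_of_mem_sphere x
    rw [EuclideanSpace.norm_eq] at hx
    rw [mem_sphere_zero_iff_norm, EuclideanSpace.norm_eq]
    simpa only [norm_mul, norm_zpow, Circle.norm_coe, one_zpow, one_mul] using hx⟩

theorem weightedRotation_apply (ζ : Circle) (x : ComplexSphere k) (j : Fin k) :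
    (weightedRotation ℓ ζ x).1 j = (ζ : ℂ) ^ ℓ j * x.1 j :=
  rfl

theorem weightedRotation_one (x : ComplexSphere k) : weightedRotation ℓ 1 x = x := by
  ext j
  rw [weightedRotation_apply, Circle.coe_one, one_zpow, one_mul]

theorem weightedRotation_mul (ζ ω : Circle) (x : ComplexSphere k) :
    weightedRotation ℓ (ζ * ω) x = weightedRotation ℓ ζ (weightedRotation ℓ ω x) := by
  ext j
  simp only [weightedRotation_apply, Circle.coe_mul, mul_zpow, mul_assoc]

theorem continuous_weightedRotation (ζ : Circle) : Continuous (weightedRotation ℓ ζ) := by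
  unfold weightedRotation
  fun_prop

end Rotation

namespace LensSpace

variable {p k : ℕ} (ℓ : Fin k → ℤ)

theorem exp_eq_circle_exp_zpow (p : ℕ) (m l : ℤ) :
    Complex.exp (2 * Real.pi * Complex.I * m * l / p) =
      (Circle.exp (2 * Real.pi * m / p) : ℂ) ^ l := by
  rw [Circle.coe_exp, ← Complex.exp_int_mul]
  congr 1
  push_cast
  ring

theorem exists_circle_exp_eq_iff (hp : p ≠ 0) (ζ : Circle) :
    (∃ m : ℤ, Circle.exp (2 * Real.pi * m / p) = ζ) ↔ ζ ^ p = 1 := by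
  have hp' : (p : ℝ) ≠ 0 := Nat.cast_ne_zero.mpr hp
  constructor
  · rintro ⟨m, rfl⟩
    rw [← Circle.exp_natCast_mul, mul_div_cancel₀ _ hp', mul_comm]
    exact Circle.exp_int_mul_two_pi m
  · intro hζ
    obtain ⟨θ, rfl⟩ := Circle.exp_surjective ζ
    rw [← Circle.exp_natCast_mul, Circle.exp_eq_one] at hζ
    obtain ⟨m, hm⟩ := hζ
    exact ⟨m, congrArg Circle.exp (by field_simp; linarith)⟩

theorem lensRel_iff (hp : p ≠ 0) (x y : ComplexSphere k) :
    lensRel p k ℓ x y ↔ ∃ ζ : Circle, ζ ^ p = 1 ∧ weightedRotation ℓ ζ x = y := by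
  constructor
  · rintro ⟨m, hm⟩
    refine ⟨Circle.exp (2 * Real.pi * m / p), (exists_circle_exp_eq_iff hp _).mp ⟨m, rfl⟩, ?_⟩
    ext j
    rw [weightedRotation_apply, hm, exp_eq_circle_exp_zpow]
  · rintro ⟨ζ, hζ, rfl⟩
    obtain ⟨m, rfl⟩ := (exists_circle_exp_eq_iff hp ζ).mpr hζ
    exact ⟨m, fun j ↦ by rw [weightedRotation_apply, exp_eq_circle_exp_zpow]⟩

theorem equivalence_lensRel (hp : p ≠ 0) : Equivalence (lensRel p k ℓ) where
  refl x := (lensRel_iff ℓ hp x x).mpr ⟨1, one_pow p, weightedRotation_one ℓ x⟩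
  symm {x y} hxy := by
    obtain ⟨ζ, hζ, rfl⟩ := (lensRel_iff ℓ hp x y).mp hxy
    refine (lensRel_iff ℓ hp _ x).mpr ⟨ζ⁻¹, by rw [inv_pow, hζ, inv_one], ?_⟩
    rw [← weightedRotation_mul, inv_mul_cancel, weightedRotation_one]
  trans {x y z} hxy hyz := by
    obtain ⟨ζ, hζ, rfl⟩ := (lensRel_iff ℓ hp x y).mp hxy
    obtain ⟨ω, hω, rfl⟩ := (lensRel_iff ℓ hp _ z).mp hyz
    refine (lensRel_iff ℓ hp x _).mpr ⟨ω * ζ, by rw [mul_pow, hω, hζ, one_mul], ?_⟩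
    rw [weightedRotation_mul]

/-- The covering map `S^{2k-1} → L^{2k-1}_p(ℓ)`. -/
noncomputable def mk (p : ℕ) (ℓ : Fin k → ℤ) (x : ComplexSphere k) : LensSpace p k ℓ :=
  Quot.mk (lensRel p k ℓ) x

theorem mk_eq_mk_iff (hp : p ≠ 0) {x y : ComplexSphere k} :
    mk p ℓ x = mk p ℓ y ↔ ∃ ζ : Circle, ζ ^ p = 1 ∧ weightedRotation ℓ ζ x = y :=
  ((equivalence_lensRel ℓ hp).quot_mk_eq_iff x y).trans (lensRel_iff ℓ hp x y)

theorem mk_weightedRotation (hp : p ≠ 0) {ζ : Circle} (hζ : ζ ^ p = 1) (x : ComplexSphere k) :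
    mk p ℓ (weightedRotation ℓ ζ x) = mk p ℓ x :=
  ((mk_eq_mk_iff ℓ hp).mpr ⟨ζ, hζ, rfl⟩).symm

theorem mk_surjective : Function.Surjective (mk p ℓ) :=
  Quot.mk_surjective

theorem isQuotientMap_mk : Topology.IsQuotientMap (mk p ℓ) :=
  isQuotientMap_quot_mk

theorem isOpenMap_mk (hp : p ≠ 0) : IsOpenMap (mk p ℓ) := by
  intro V hV
  have hsaturation : mk p ℓ ⁻¹' (mk p ℓ '' V) =
      ⋃ (ζ : Circle) (_ : ζ ^ p = 1), weightedRotation ℓ ζ ⁻¹' V := by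
    ext y
    simp only [Set.mem_preimage, Set.mem_image, Set.mem_iUnion, exists_prop]
    constructor
    · rintro ⟨x, hx, hxy⟩
      obtain ⟨ζ, hζ, rfl⟩ := (mk_eq_mk_iff ℓ hp).mp hxy.symm
      exact ⟨ζ, hζ, hx⟩
    · rintro ⟨ζ, hζ, hy⟩
      exact ⟨_, hy, mk_weightedRotation ℓ hp hζ y⟩
  rw [← (isQuotientMap_mk ℓ).isOpen_preimage, hsaturation]
  exact isOpen_iUnion fun ζ ↦ isOpen_iUnion fun _ ↦ hV.preimage (continuous_weightedRotation ℓ ζ)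

end LensSpace

section Polynomial

open Polynomial

/-- `s` is the degree of a nonzero term of `P`, and `s = m` is allowed only if `P` is a monomial of
degree `m`. The middle degree is singled out because, in a product of two polynomials of degree at
most `m`, its coefficient is the only one that no fixed nonzero factor forces to vanish. -/
def IsSelectedDegree {R : Type*} [Semiring R] (m : ℕ) (P : R[X]) (s : ℕ) : Prop :=
  P.coeff s ≠ 0 ∧ (s = m → ∀ t ≠ m, P.coeff t = 0)

theorem exists_isSelectedDegree {R : Type*} [Semiring R] {P : R[X]} (hP : P ≠ 0) (m : ℕ) :
    ∃ s, IsSelectedDegree m P s := by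
  by_cases h : ∃ s ≠ m, P.coeff s ≠ 0
  · obtain ⟨s, hsm, hs⟩ := h
    exact ⟨s, hs, fun hsm' ↦ absurd hsm' hsm⟩
  · push Not at h
    refine ⟨m, fun hm ↦ hP (Polynomial.ext fun t ↦ ?_), fun _ ↦ h⟩
    obtain rfl | ht := eq_or_ne t m
    exacts [hm, h t ht]

theorem IsSelectedDegree.smul {R : Type*} [Semiring R] [NoZeroDivisors R] {m : ℕ} {P : R[X]}
    {s : ℕ} (h : IsSelectedDegree m P s) {c : R} (hc : c ≠ 0) : IsSelectedDegree m (c • P) s := by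
  refine ⟨?_, fun hs t ht ↦ ?_⟩
  · rw [coeff_smul, smul_eq_mul]
    exact mul_ne_zero hc h.1
  · rw [coeff_smul, h.2 hs t ht, smul_zero]

theorem exists_coeff_eq_zero_of_dvd_X_pow {R : Type*} [CommRing R] [IsDomain R] {P : R[X]} {m : ℕ}
    (hP : P ∣ X ^ m) : ∃ i, ∀ j ≠ i, P.coeff j = 0 := by
  obtain ⟨i, -, hassoc⟩ := (dvd_prime_pow prime_X m).mp hP
  obtain ⟨u, hu⟩ := hassoc.symm
  obtain ⟨c, -, hc⟩ := isUnit_iff.mp u.isUnit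
  refine ⟨i, fun j hj ↦ ?_⟩
  rw [← hu, ← hc, coeff_mul_C, coeff_X_pow, if_neg hj, zero_mul]

theorem dvd_X_pow_of_coeff_mul_eq_zero {K : Type*} [Field K] {P Q : K[X]} {m : ℕ}
    (hm : (P * Q).coeff m ≠ 0) (hPQ : ∀ t ≠ m, (P * Q).coeff t = 0) : P ∣ X ^ m := by
  have hmonomial : P * Q = X ^ m * C ((P * Q).coeff m) := by
    ext t
    rw [coeff_mul_C, coeff_X_pow]
    split_ifs with h
    · rw [h, one_mul]
    · rw [hPQ t h, zero_mul]
  have hunit : IsUnit (C ((P * Q).coeff m)) := isUnit_C.mpr hm.isUnit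
  exact hunit.dvd_mul_right.mp (hmonomial ▸ dvd_mul_right P Q)

variable {k : ℕ} (a b : Fin k → ℕ)

/-- The polynomial `∑ x_j ^ a_j X ^ j` attached to a point `x` of the sphere. When
`a_j ℓ_j ≡ 1 [ZMOD p]`, a `p`-th root of unity `ζ` acting with weights `ℓ` multiplies it by `ζ`. -/
noncomputable def powerPolynomial (x : ComplexSphere k) : ℂ[X] :=
  ofFn k fun j ↦ x.1 j ^ a j

theorem coeff_powerPolynomial (x : ComplexSphere k) (j : Fin k) :
    (powerPolynomial a x).coeff j = x.1 j ^ a j :=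
  ofFn_coeff_eq_val_of_lt _ j.isLt

theorem coeff_powerPolynomial_of_le (x : ComplexSphere k) {s : ℕ} (hs : k ≤ s) :
    (powerPolynomial a x).coeff s = 0 :=
  ofFn_coeff_eq_zero_of_ge _ hs

theorem continuous_coeff_powerPolynomial (s : ℕ) :
    Continuous fun x : ComplexSphere k ↦ (powerPolynomial a x).coeff s := by
  by_cases hs : s < k
  · simp only [powerPolynomial, ofFn_coeff_eq_val_of_lt _ hs]
    fun_prop
  · simp only [coeff_powerPolynomial_of_le a _ (not_lt.mp hs), continuous_const]

theorem continuous_coeff_powerPolynomial_mul (s : ℕ) :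
    Continuous fun z : ComplexSphere k × ComplexSphere k ↦
      (powerPolynomial a z.1 * powerPolynomial b z.2).coeff s := by
  simp only [coeff_mul]
  exact continuous_finsetSum _ fun t _ ↦
    ((continuous_coeff_powerPolynomial a t.1).comp continuous_fst).mul
      ((continuous_coeff_powerPolynomial b t.2).comp continuous_snd)

theorem powerPolynomial_ne_zero (x : ComplexSphere k) : powerPolynomial a x ≠ 0 := by
  have hx : (x : EuclideanSpace ℂ (Fin k)) ≠ 0 := ne_zero_of_mem_unit_sphere x
  contrapose! hx
  ext j
  have hj := coeff_powerPolynomial a x j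
  rw [hx, coeff_zero] at hj
  exact eq_zero_of_pow_eq_zero hj.symm

theorem coeff_powerPolynomial_mul_eq_zero (x y : ComplexSphere k) {s : ℕ} (hs : 2 * k - 1 ≤ s) :
    (powerPolynomial a x * powerPolynomial b y).coeff s = 0 := by
  rw [coeff_mul]
  refine Finset.sum_eq_zero fun t ht ↦ ?_
  have hsum := Finset.HasAntidiagonal.mem_antidiagonal.mp ht
  obtain h | h : k ≤ t.1 ∨ k ≤ t.2 := by omega
  · rw [coeff_powerPolynomial_of_le a x h, zero_mul]
  · rw [coeff_powerPolynomial_of_le b y h, mul_zero]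

theorem powerPolynomial_weightedRotation {a : Fin k → ℕ} {p : ℕ} {ℓ : Fin k → ℤ}
    (ha : ∀ j, a j * ℓ j ≡ 1 [ZMOD p]) {ζ : Circle} (hζ : ζ ^ p = 1) (x : ComplexSphere k) :
    powerPolynomial a (weightedRotation ℓ ζ x) = (ζ : ℂ) • powerPolynomial a x := by
  have hweight : ∀ j, ((ζ : ℂ) ^ ℓ j) ^ a j = ζ := fun j ↦ by
    rw [← Circle.coe_zpow, ← Circle.coe_pow, ← zpow_natCast, ← zpow_mul, mul_comm,
      zpow_eq_self_of_modEq_one hζ (ha j)]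
  rw [powerPolynomial, powerPolynomial, ← map_smul]
  congr 1
  ext j
  rw [weightedRotation_apply, mul_pow, hweight, Pi.smul_apply, smul_eq_mul]

theorem powerPolynomial_mul_weightedRotation {a b : Fin k → ℕ} {p q : ℕ} {ℓ ℓ' : Fin k → ℤ}
    (ha : ∀ j, a j * ℓ j ≡ 1 [ZMOD p]) (hb : ∀ j, b j * ℓ' j ≡ 1 [ZMOD q]) {ζ ω : Circle}
    (hζ : ζ ^ p = 1) (hω : ω ^ q = 1) (x y : ComplexSphere k) :
    powerPolynomial a (weightedRotation ℓ ζ x) * powerPolynomial b (weightedRotation ℓ' ω y) =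
      ((ζ * ω : Circle) : ℂ) • (powerPolynomial a x * powerPolynomial b y) := by
  rw [powerPolynomial_weightedRotation ha hζ, powerPolynomial_weightedRotation hb hω,
    smul_mul_smul_comm, Circle.coe_mul]

end Polynomial

section AvoidedPoint

open Polynomial

variable {k : ℕ}

/-- The `i`-th standard basis vector of `ℂ^k`, as a point of the sphere. -/
noncomputable def basisPoint (i : Fin k) : ComplexSphere k :=
  ⟨EuclideanSpace.single i 1, by simp⟩

theorem powerPolynomial_basisPoint {a : Fin k → ℕ} (ha : ∀ j, a j ≠ 0) (i : Fin k) :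
    powerPolynomial a (basisPoint i) = X ^ (i : ℕ) := by
  ext s
  rw [coeff_X_pow]
  by_cases hs : s < k
  · have hcoeff : (powerPolynomial a (basisPoint i)).coeff s =
        (basisPoint i).1 ⟨s, hs⟩ ^ a ⟨s, hs⟩ := coeff_powerPolynomial a (basisPoint i) ⟨s, hs⟩
    rw [hcoeff, basisPoint, PiLp.single_apply, ite_pow, one_pow, zero_pow (ha _)]
    simp only [Fin.ext_iff]
  · rw [coeff_powerPolynomial_of_le a _ (not_lt.mp hs), if_neg (by omega)]

theorem exists_coeff_powerPolynomial_mul_eq_zero {s : ℕ} (hk : k ≠ 0) (hs : s ≠ k - 1) :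
    ∃ v : ComplexSphere k, ∀ (a b : Fin k → ℕ) (y : ComplexSphere k), (∀ j, a j ≠ 0) →
      (powerPolynomial a v * powerPolynomial b y).coeff s = 0 := by
  obtain hlt | hgt := hs.lt_or_gt
  · refine ⟨basisPoint ⟨k - 1, by omega⟩, fun a b y ha ↦ ?_⟩
    rw [powerPolynomial_basisPoint ha, coeff_X_pow_mul', if_neg hlt.not_ge]
  · refine ⟨basisPoint ⟨0, hk.bot_lt⟩, fun a b y ha ↦ ?_⟩
    rw [powerPolynomial_basisPoint ha, pow_zero, one_mul]
    exact coeff_powerPolynomial_of_le b y (by omega)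

theorem exists_complexSphere_forall_ne_zero (hk : k ≠ 0) :
    ∃ v : ComplexSphere k, ∀ j, v.1 j ≠ 0 := by
  let u : EuclideanSpace ℂ (Fin k) := WithLp.toLp 2 fun _ ↦ 1
  have hu : u ≠ 0 := fun h ↦ one_ne_zero (congrArg (fun w ↦ w.ofLp ⟨0, hk.bot_lt⟩) h)
  refine ⟨⟨(‖u‖⁻¹ : ℂ) • u, mem_sphere_zero_iff_norm.mpr (norm_smul_inv_norm hu)⟩, fun j ↦ ?_⟩
  have hinv : (‖u‖⁻¹ : ℂ) ≠ 0 := inv_ne_zero (by simpa using hu)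
  simpa [u] using hinv

theorem not_isSelectedDegree_middle (hk : 2 ≤ k) {v : ComplexSphere k} (hv : ∀ j, v.1 j ≠ 0)
    (a b : Fin k → ℕ) (y : ComplexSphere k) :
    ¬ IsSelectedDegree (k - 1) (powerPolynomial a v * powerPolynomial b y) (k - 1) := by
  intro h
  obtain ⟨i, hi⟩ := exists_coeff_eq_zero_of_dvd_X_pow (dvd_X_pow_of_coeff_mul_eq_zero h.1 (h.2 rfl))
  have : Nontrivial (Fin k) := Fin.nontrivial_iff_two_le.mpr hk
  obtain ⟨j, hj⟩ : ∃ j : Fin k, (j : ℕ) ≠ i := by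
    by_contra! hall
    obtain ⟨j, j', hne⟩ := exists_pair_ne (Fin k)
    exact hne (Fin.ext ((hall j).trans (hall j').symm))
  have hzero := hi j hj
  rw [coeff_powerPolynomial] at hzero
  exact pow_ne_zero _ (hv j) hzero

theorem exists_forall_not_isSelectedDegree (hk : 2 ≤ k) (s : ℕ) :
    ∃ v : ComplexSphere k, ∀ (a b : Fin k → ℕ) (y : ComplexSphere k), (∀ j, a j ≠ 0) →
      ¬ IsSelectedDegree (k - 1) (powerPolynomial a v * powerPolynomial b y) s := by
  obtain rfl | hs := eq_or_ne s (k - 1)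
  · obtain ⟨v, hv⟩ := exists_complexSphere_forall_ne_zero (k := k) (by omega)
    exact ⟨v, fun a b y _ ↦ not_isSelectedDegree_middle hk hv a b y⟩
  · obtain ⟨v, hv⟩ := exists_coeff_powerPolynomial_mul_eq_zero (by omega) hs
    exact ⟨v, fun a b y ha h ↦ h.1 (hv a b y ha)⟩

theorem exists_forall_isSelectedDegree_ne (hk : 2 ≤ k) {a b : Fin k → ℕ} (ha : ∀ j, a j ≠ 0)
    (hb : ∀ j, b j ≠ 0) (s : ℕ) : ∃ v : ComplexSphere k, ∀ x y,
      IsSelectedDegree (k - 1) (powerPolynomial a x * powerPolynomial b y) s → x ≠ v ∧ y ≠ v := by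
  obtain ⟨v, hv⟩ := exists_forall_not_isSelectedDegree hk s
  refine ⟨v, fun x y h ↦ ⟨?_, ?_⟩⟩
  · rintro rfl
    exact hv a b y ha h
  · rintro rfl
    exact hv b a x hb (mul_comm (powerPolynomial a x) _ ▸ h)

end AvoidedPoint

section SectorPiece

variable {k : ℕ} {a b : Fin k → ℕ}

/-- The pairs `(x, y)`, with neither entry equal to `v`, for which `η` times the coefficient of
degree `s` in the product of their power polynomials lies in the sector of half-angle `π / N`. The
images of these sets cover the product of two lens spaces. -/
def sectorPiece (N : ℕ) (a b : Fin k → ℕ) (v : ComplexSphere k) (s : ℕ) (η : ℂ) :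
    Set (ComplexSphere k × ComplexSphere k) :=
  {z | η * (powerPolynomial a z.1 * powerPolynomial b z.2).coeff s ∈ sector N ∧
    z.1 ≠ v ∧ z.2 ≠ v}

theorem isOpen_sectorPiece (N : ℕ) (a b : Fin k → ℕ) (v : ComplexSphere k) (s : ℕ) (η : ℂ) :
    IsOpen (sectorPiece N a b v s η) := by
  have hsector : IsOpen {z : ComplexSphere k × ComplexSphere k |
      η * (powerPolynomial a z.1 * powerPolynomial b z.2).coeff s ∈ sector N} :=
    (isOpen_sector N).preimage (continuous_const.mul (continuous_coeff_powerPolynomial_mul a b s))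
  exact hsector.inter ((isOpen_ne_fun continuous_fst continuous_const).inter
    (isOpen_ne_fun continuous_snd continuous_const))

theorem contractibleIn_sectorPiece (N : ℕ) (a b : Fin k → ℕ) (v : ComplexSphere k) (s : ℕ)
    (η : ℂ) : ContractibleIn (sectorPiece N a b v s η) :=
  letI : InnerProductSpace ℝ (EuclideanSpace ℂ (Fin k)) := .rclikeToReal ℂ _
  contractibleIn_of_forall_fst_ne_and_snd_ne fun _ hz ↦ hz.2

variable {p q : ℕ} {ℓ ℓ' : Fin k → ℤ}

theorem injOn_sectorPiece (hp : p ≠ 0) (hq : q ≠ 0) (hpq : p.Coprime q)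
    (ha : ∀ j, a j * ℓ j ≡ 1 [ZMOD p]) (hb : ∀ j, b j * ℓ' j ≡ 1 [ZMOD q])
    (v : ComplexSphere k) (s : ℕ) (η : ℂ) :
    Set.InjOn (Prod.map (LensSpace.mk p ℓ) (LensSpace.mk q ℓ'))
      (sectorPiece (p * q) a b v s η) := by
  rintro ⟨x, y⟩ hz ⟨x', y'⟩ hz' heq
  obtain ⟨hx, hy⟩ := Prod.mk.inj heq
  obtain ⟨ζ, hζ, rfl⟩ := (LensSpace.mk_eq_mk_iff ℓ hp).mp hx
  obtain ⟨ω, hω, rfl⟩ := (LensSpace.mk_eq_mk_iff ℓ' hq).mp hy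
  have hζω : (ζ * ω) ^ (p * q) = 1 := by
    rw [mul_pow, pow_mul, hζ, one_pow, one_mul, mul_comm p, pow_mul, hω, one_pow]
  have hrotated := hz'.1
  rw [powerPolynomial_mul_weightedRotation ha hb hζ hω, Polynomial.coeff_smul, smul_eq_mul,
    mul_left_comm] at hrotated
  have hone : ((ζ * ω : Circle) : ℂ) = 1 :=
    eq_one_of_mul_mem_sector (mul_ne_zero hp hq) (by rw [← Circle.coe_pow, hζω, Circle.coe_one])
      hz.1 hrotated
  obtain ⟨rfl, rfl⟩ := eq_one_and_eq_one_of_mul_eq_one hpq hζ hω (Circle.ext hone)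
  rw [weightedRotation_one, weightedRotation_one]

theorem exists_mem_sectorPiece (hp : p ≠ 0) (hq : q ≠ 0) (hpq : p.Coprime q)
    (ha : ∀ j, a j * ℓ j ≡ 1 [ZMOD p]) (hb : ∀ j, b j * ℓ' j ≡ 1 [ZMOD q])
    {η : ℂ} (hη : η ^ (p * q) = -1) {v : ℕ → ComplexSphere k}
    (hv : ∀ s x y, IsSelectedDegree (k - 1) (powerPolynomial a x * powerPolynomial b y) s →
      x ≠ v s ∧ y ≠ v s) (x y : ComplexSphere k) :
    ∃ (s : Fin (2 * k - 1)) (r : Fin 2) (ζ ω : Circle), ζ ^ p = 1 ∧ ω ^ q = 1 ∧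
      (weightedRotation ℓ ζ x, weightedRotation ℓ' ω y) ∈
        sectorPiece (p * q) a b (v s) s (![1, η] r) := by
  obtain ⟨s, hs⟩ := exists_isSelectedDegree
    (mul_ne_zero (powerPolynomial_ne_zero a x) (powerPolynomial_ne_zero b y)) (k - 1)
  have hslt : s < 2 * k - 1 :=
    not_le.mp fun h ↦ hs.1 (coeff_powerPolynomial_mul_eq_zero a b x y h)
  obtain ⟨g, hg, hmem⟩ := exists_circle_mul_mem_sector_or (mul_ne_zero hp hq) hη hs.1
  obtain ⟨ζ, ω, hζ, hω, rfl⟩ := exists_mul_eq_of_pow_mul_eq_one hpq hg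
  have hrot := powerPolynomial_mul_weightedRotation ha hb hζ hω x y
  have havoid := hv s _ _ (hrot ▸ hs.smul (Circle.coe_ne_zero (ζ * ω)))
  rcases hmem with hmem | hmem
  · refine ⟨⟨s, hslt⟩, 0, ζ, ω, hζ, hω, ?_, havoid⟩
    rwa [hrot, Polynomial.coeff_smul, smul_eq_mul, Matrix.cons_val_zero, one_mul]
  · refine ⟨⟨s, hslt⟩, 1, ζ, ω, hζ, hω, ?_, havoid⟩
    rwa [hrot, Polynomial.coeff_smul, smul_eq_mul, Matrix.cons_val_one, mul_left_comm]

theorem iUnion_image_sectorPiece (hp : p ≠ 0) (hq : q ≠ 0) (hpq : p.Coprime q)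
    (ha : ∀ j, a j * ℓ j ≡ 1 [ZMOD p]) (hb : ∀ j, b j * ℓ' j ≡ 1 [ZMOD q])
    {η : ℂ} (hη : η ^ (p * q) = -1) {v : ℕ → ComplexSphere k}
    (hv : ∀ s x y, IsSelectedDegree (k - 1) (powerPolynomial a x * powerPolynomial b y) s →
      x ≠ v s ∧ y ≠ v s) :
    ⋃ i : Fin (2 * k - 1) × Fin 2, Prod.map (LensSpace.mk p ℓ) (LensSpace.mk q ℓ') ''
      sectorPiece (p * q) a b (v i.1) i.1 (![1, η] i.2) = Set.univ := by
  refine Set.eq_univ_of_forall fun z ↦ ?_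
  obtain ⟨⟨x, y⟩, rfl⟩ := ((LensSpace.mk_surjective ℓ).prodMap (LensSpace.mk_surjective ℓ')) z
  obtain ⟨s, r, ζ, ω, hζ, hω, hmem⟩ := exists_mem_sectorPiece hp hq hpq ha hb hη hv x y
  refine Set.mem_iUnion.mpr ⟨(s, r), _, hmem, Prod.ext ?_ ?_⟩
  exacts [LensSpace.mk_weightedRotation ℓ hp hζ x, LensSpace.mk_weightedRotation ℓ' hq hω y]

end SectorPiece

/-- For odd `n = 2k-1 ≥ 3` and relatively prime `p, q ≥ 2`, `cat (L^n_p × L^n_q) ≤ 2n - 1`. -/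
theorem lsCat_prod_lensSpace_upper (k : ℕ) (hk : 2 ≤ k) (n : ℕ) (hn : n = 2 * k - 1)
    (p q : ℕ) (hp2 : 2 ≤ p) (hq2 : 2 ≤ q) (hpq : Nat.Coprime p q)
    (ℓ : Fin k → ℤ) (hℓ : ∀ j, IsCoprime (ℓ j) (p : ℤ))
    (ℓ' : Fin k → ℤ) (hℓ' : ∀ j, IsCoprime (ℓ' j) (q : ℤ)) :
    lsCat (LensSpace p k ℓ × LensSpace q k ℓ') ≤ 2 * n - 1 := by
  have hp : p ≠ 0 := by omega
  have hq : q ≠ 0 := by omega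
  choose a ha0 ha using fun j ↦ exists_natCast_mul_modEq_one hp (hℓ j)
  choose b hb0 hb using fun j ↦ exists_natCast_mul_modEq_one hq (hℓ' j)
  choose v hv using exists_forall_isSelectedDegree_ne hk ha0 hb0
  obtain ⟨η, hη⟩ := IsAlgClosed.exists_pow_nat_eq (-1 : ℂ) (Nat.mul_pos hp.bot_lt hq.bot_lt)
  have hcover := iUnion_image_sectorPiece hp hq hpq ha hb hη hv
  have hcont : Continuous (Prod.map (LensSpace.mk p ℓ) (LensSpace.mk q ℓ')) :=
    (LensSpace.isQuotientMap_mk ℓ).continuous.prodMap (LensSpace.isQuotientMap_mk ℓ').continuous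
  have hopen : IsOpenMap (Prod.map (LensSpace.mk p ℓ) (LensSpace.mk q ℓ')) :=
    (LensSpace.isOpenMap_mk ℓ hp).prodMap (LensSpace.isOpenMap_mk ℓ' hq)
  refine lsCat_le_of_card_eq ?_ (fun i ↦ hopen _ (isOpen_sectorPiece ..)) hcover fun i ↦ ?_
  · rw [Fintype.card_prod, Fintype.card_fin, Fintype.card_fin]
    omega
  · exact .image hcont hopen (isOpen_sectorPiece ..)
      (injOn_sectorPiece hp hq hpq ha hb (v i.1) i.1 _) (contractibleIn_sectorPiece ..)
end
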